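/- Assume in addition that c ≡ 0 and that for some p₀ ∈ (1,+∞) the function r₀ + (C²d³ν₀^{γ−1}/(4(p₀−1)))·ν^γ is bounded from above on I×ℝ^d. Then for every p ∈ [p₀,+∞) there exists ω_p ∈ ℝ such that for every s ∈ I, every f ∈ C¹_b(ℝ^d), every classical solution u bounded on strips with datum f and every classical solution v bounded on strips with datum |∇f|^p, one has |∇_x u(t,x)|^p ≤ e^{ω_p(t−s)}·v(t,x) for all t > s and x ∈ ℝ^d; moreover for p ∈ [p₀,2] one may take ω_p = p·sup_{I×ℝ^d}( r₀ + (C²d³ν₀^{γ−1}/(4(p−1)))·ν^γ ). -/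

import Mathlib

open Set Filter MeasureTheory

noncomputable section

abbrev Euc (d : ℕ) := EuclideanSpace ℝ (Fin d)

noncomputable def hess (d : ℕ) (g : Euc d → ℝ) (x : Euc d) (i j : Fin d) : ℝ :=
  fderiv ℝ (fun y => fderiv ℝ g y (EuclideanSpace.single j 1)) x (EuclideanSpace.single i 1)

noncomputable def minEig (d : ℕ) (A : Fin d → Fin d → ℝ) : ℝ :=
  sInf {r : ℝ | ∃ ξ : Euc d, ‖ξ‖ = 1 ∧ (∑ i, ∑ j, A i j * ξ i * ξ j) = r}

noncomputable def pdist (d : ℕ) (p q : ℝ × Euc d) : ℝ :=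
  Real.sqrt |p.1 - q.1| + ‖p.2 - q.2‖

def LocHolderParab (d : ℕ) (α : ℝ) (I : Set ℝ) (g : ℝ → Euc d → ℝ) : Prop :=
  ∀ K : Set (ℝ × Euc d), IsCompact K → K ⊆ I ×ˢ (univ : Set (Euc d)) →
    ∃ C > 0, ∀ p ∈ K, ∀ q ∈ K, |g p.1 p.2 - g q.1 q.2| ≤ C * pdist d p q ^ α

noncomputable def Aop (d : ℕ) (Q : ℝ → Euc d → Fin d → Fin d → ℝ)
    (b : ℝ → Euc d → Fin d → ℝ) (c : ℝ → Euc d → ℝ)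
    (t : ℝ) (g : Euc d → ℝ) (x : Euc d) : ℝ :=
  (∑ i, ∑ j, Q t x i j * hess d g x i j)
    + (∑ i, b t x i * fderiv ℝ g x (EuclideanSpace.single i 1))
    + c t x * g x

structure IsClassicalSolution (d : ℕ) (Q : ℝ → Euc d → Fin d → Fin d → ℝ)
    (b : ℝ → Euc d → Fin d → ℝ) (c : ℝ → Euc d → ℝ)
    (s : ℝ) (f : Euc d → ℝ) (u : ℝ → Euc d → ℝ) : Prop where
  cont : ContinuousOn (fun p : ℝ × Euc d => u p.1 p.2) (Ici s ×ˢ univ)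
  tdiff : ∀ t, s < t → ∀ x, DifferentiableAt ℝ (fun τ => u τ x) t
  tderiv_cont : ContinuousOn (fun p : ℝ × Euc d => deriv (fun τ => u τ p.2) p.1) (Ioi s ×ˢ univ)
  xdiff : ∀ t, s < t → ContDiff ℝ 2 (u t)
  grad_cont : ContinuousOn (fun p : ℝ × Euc d => fderiv ℝ (u p.1) p.2) (Ioi s ×ˢ univ)
  hess_cont : ContinuousOn (fun p : ℝ × Euc d => hess d (u p.1) p.2) (Ioi s ×ˢ univ)
  pde : ∀ t, s < t → ∀ x, deriv (fun τ => u τ x) t = Aop d Q b c t (u t) x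
  init : ∀ x, u s x = f x

def BoundedOnStrips (d : ℕ) (s : ℝ) (u : ℝ → Euc d → ℝ) : Prop :=
  ∀ T, s < T → ∃ M, ∀ t ∈ Icc s T, ∀ x, |u t x| ≤ M

def LocBddOn (I : Set ℝ) (g : ℝ → ℝ) : Prop :=
  ∀ a b : ℝ, Icc a b ⊆ I → ∃ M, ∀ t ∈ Icc a b, |g t| ≤ M

/-- `sup_{I×ℝ^d} ( r₀ + (C²d³ν₀^{γ−1}/(4(p−1)))·ν^γ )`. -/
noncomputable def SGradSup (d : ℕ) (I : Set ℝ) (Q : ℝ → Euc d → Fin d → Fin d → ℝ)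
    (r₀ : ℝ → Euc d → ℝ) (ν₀ C γ : ℝ) (p : ℝ) : ℝ :=
  sSup {y : ℝ | ∃ t ∈ I, ∃ x : Euc d,
    y = r₀ t x + (C ^ 2 * (d : ℝ) ^ 3 * ν₀ ^ (γ - 1) / (4 * (p - 1)))
          * minEig d (Q t x) ^ γ}

/-- The gradient estimate `|∇_x u(t,x)|^p ≤ e^{ω(t−s)} v(t,x)`, with `v` the solution with
datum `|∇f|^p`, quantified over all data and solutions. -/
def GradEstWith (d : ℕ) (I : Set ℝ) (Q : ℝ → Euc d → Fin d → Fin d → ℝ)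
    (b : ℝ → Euc d → Fin d → ℝ) (p ω : ℝ) : Prop :=
  ∀ s ∈ I, ∀ f : Euc d → ℝ, ContDiff ℝ 1 f →
    (∃ Mf, ∀ x, |f x| ≤ Mf) → (∃ Mf, ∀ x, ‖fderiv ℝ f x‖ ≤ Mf) →
    ∀ u v : ℝ → Euc d → ℝ,
      IsClassicalSolution d Q b (fun _ _ => 0) s f u → BoundedOnStrips d s u →
      IsClassicalSolution d Q b (fun _ _ => 0) s (fun x => ‖fderiv ℝ f x‖ ^ p) v →
      BoundedOnStrips d s v →
      ∀ t, s < t → ∀ x : Euc d,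
        ‖fderiv ℝ (u t) x‖ ^ p ≤ Real.exp (ω * (t - s)) * v t x

open Topology

/-!
Bernstein's method. Put `q = 2 / p` and let `Z = v + ε e^{λ(t-s)} φ`, a strict supersolution that is
large at infinity. With `η = e^{-qω(t-s)} Z^{-q}`, the inequality `η |∇u|² ≤ 1` says that
`|∇u|^p ≤ e^{ω(t-s)} Z`, and one lets `ε → 0`. At an interior maximum of `η |∇u|²` its gradient
vanishes; by Young's inequality the term `-2 η ∑ₖ ⟨Q ∇∂ₖu, ∇∂ₖu⟩` then absorbs the terms containing
`∇Q` as soon as `r₀ + d² (C ν^γ)² / (4 min(p-1, 1) ν) ≤ ω / p`. For `p ≤ 2` the left side is at most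
the given supremum, since `ν^{2γ-1} ≤ ν₀^{γ-1} ν^γ`; for the other `p` it is still bounded, since
`γ < 1` gives `ν^{2γ-1} ≤ κ ν^γ + const` for every `κ > 0`.

As `∇u` has only one space derivative, `|∇u|²` enters the maximum principle as a limit of sums of
squared difference quotients of `u`. Since `u` is merely continuous at `t = s`, the inequality
`limsup_{t→s} |∇u| ≤ |∇f|` is obtained by doubling the variables with the coupling of Ishii and
Lions. A bound on `|∇u|` over strips comes from `ψ² |∇u|² + a u²` with a quadratic cutoff `ψ`.
-/

/-! ### Positive semidefinite coefficients and second-order tests -/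

section PosSemidef

theorem sum_mul_nonpos_of_posSemidef {ι : Type*} [Fintype ι] {A B : Matrix ι ι ℝ}
    (hA : A.PosSemidef) (hB : ∀ ξ : ι → ℝ, ∑ i, ∑ j, ξ i * ξ j * B i j ≤ 0) :
    ∑ i, ∑ j, A i j * B i j ≤ 0 := by
  obtain ⟨m, v, rfl⟩ := Matrix.posSemidef_iff_eq_sum_vecMulVec.1 hA
  have hsum : ∑ i, ∑ j, (∑ k, Matrix.vecMulVec (v k) (star (v k))) i j * B i j =
      ∑ k, ∑ i, ∑ j, v k i * v k j * B i j := by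
    simp only [Matrix.sum_apply, Matrix.vecMulVec_apply, star_trivial, Finset.sum_mul]
    rw [Finset.sum_comm (s := (Finset.univ : Finset (Fin m)))]
    exact Finset.sum_congr rfl fun i _ => Finset.sum_comm
  rw [hsum]
  exact Finset.sum_nonpos fun k _ => hB (v k)

/-- The bilinear form `(ξ, η) ↦ ∑ A i j ξ i η j` of a coefficient array. -/
def coeffForm {d : ℕ} (A : Fin d → Fin d → ℝ) : LinearMap.BilinForm ℝ (Fin d → ℝ) :=
  Matrix.toBilin' (Matrix.of A)

theorem coeffForm_apply {d : ℕ} (A : Fin d → Fin d → ℝ) (ξ η : Fin d → ℝ) :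
    coeffForm A ξ η = ∑ i, ∑ j, A i j * ξ i * η j := by
  simp only [coeffForm, Matrix.toBilin'_apply, Matrix.of_apply]
  exact Finset.sum_congr rfl fun i _ => Finset.sum_congr rfl fun j _ => by ring

end PosSemidef

theorem second_deriv_nonpos_of_isLocalMax {f f' : ℝ → ℝ} {x c : ℝ} (hm : IsLocalMax f x)
    (hf : ∀ y, HasDerivAt f (f' y) y) (hf' : HasDerivAt f' c x) : c ≤ 0 := by
  have hderiv : deriv f = f' := funext fun y => (hf y).deriv
  by_contra! hc
  have hmin : IsLocalMin f x := isLocalMin_of_deriv_deriv_pos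
    (by rwa [hderiv, hf'.deriv]) hm.deriv_eq_zero (hf x).continuousAt
  have hconst : f =ᶠ[𝓝 x] fun _ => f x := by
    filter_upwards [hm, hmin] with y hle hge using le_antisymm hle hge
  have hzero : deriv (deriv f) x = 0 := by simpa using hconst.deriv.deriv_eq
  rw [hderiv, hf'.deriv] at hzero
  exact hc.ne' hzero

theorem deriv_eq_and_second_deriv_le_of_eventually_le {f f' : ℝ → ℝ} {a b c : ℝ}
    (hf : ∀ τ, HasDerivAt f (f' τ) τ) (hf' : HasDerivAt f' c 0)
    (hle : ∀ᶠ τ in 𝓝 (0 : ℝ), f τ ≤ f 0 + a * τ + b / 2 * τ ^ 2) : f' 0 = a ∧ c ≤ b := by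
  have hquad : ∀ τ, HasDerivAt (fun τ : ℝ => a * τ + b / 2 * τ ^ 2) (a + b * τ) τ := fun τ =>
    (((hasDerivAt_id τ).const_mul a).add (((hasDerivAt_id τ).pow 2).const_mul (b / 2))).congr_deriv
      (by simp only [id_eq]; ring)
  have hlin : HasDerivAt (fun τ : ℝ => a + b * τ) b 0 := by
    simpa using ((hasDerivAt_id (0 : ℝ)).const_mul b).const_add a
  have hdiff : ∀ τ, HasDerivAt (fun τ => f τ - (a * τ + b / 2 * τ ^ 2)) (f' τ - (a + b * τ)) τ :=
    fun τ => (hf τ).sub (hquad τ)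
  have hmax : IsLocalMax (fun τ => f τ - (a * τ + b / 2 * τ ^ 2)) 0 := by
    filter_upwards [hle] with τ hτ
    linarith
  have hfirst := hmax.hasDerivAt_eq_zero (hdiff 0)
  have hsecond := second_deriv_nonpos_of_isLocalMax hmax hdiff (hf'.sub hlin)
  constructor <;> linarith

/-! ### Coordinate gradient and Hessian -/

section Calculus

variable {d : ℕ} {f g : Euc d → ℝ}

/-- The vector of partial derivatives of `g` at `x`, in the coordinates used by `hess`. -/
def grad (g : Euc d → ℝ) (x : Euc d) : Fin d → ℝ :=
  fun i => fderiv ℝ g x (EuclideanSpace.single i 1)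

theorem hess_eq_grad_grad (g : Euc d → ℝ) (x : Euc d) (i j : Fin d) :
    hess d g x i j = grad (fun y => grad g y j) x i := rfl

theorem clm_apply_eq_sum (L : Euc d →L[ℝ] ℝ) (ξ : Euc d) :
    L ξ = ∑ i, ξ i * L (EuclideanSpace.single i 1) := by
  conv_lhs => rw [← (EuclideanSpace.basisFun (Fin d) ℝ).sum_repr ξ]
  simp

theorem sq_norm_clm_eq_sum (L : Euc d →L[ℝ] ℝ) :
    ‖L‖ ^ 2 = ∑ i, L (EuclideanSpace.single i 1) ^ 2 := by
  rw [← LinearIsometryEquiv.norm_map (InnerProductSpace.toDual ℝ (Euc d)).symm L,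
    EuclideanSpace.real_norm_sq_eq]
  refine Finset.sum_congr rfl fun i _ => ?_
  have hcoord := InnerProductSpace.toDual_symm_apply (𝕜 := ℝ)
    (x := (EuclideanSpace.single i 1 : Euc d)) (y := L)
  rw [EuclideanSpace.inner_single_right] at hcoord
  rw [← hcoord]
  simp

theorem sq_norm_fderiv_eq_sum_grad (g : Euc d → ℝ) (x : Euc d) :
    ‖fderiv ℝ g x‖ ^ 2 = ∑ i, grad g x i ^ 2 :=
  sq_norm_clm_eq_sum _

theorem contDiff_grad (hg : ContDiff ℝ 2 g) : ContDiff ℝ 1 (grad g) :=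
  contDiff_pi.2 fun _ => (hg.fderiv_right (m := 1) (by norm_num)).clm_apply contDiff_const

theorem differentiable_grad (hg : ContDiff ℝ 2 g) (i : Fin d) :
    Differentiable ℝ fun y => grad g y i :=
  (contDiff_pi.1 (contDiff_grad hg) i).differentiable one_ne_zero

theorem continuous_hess (hg : ContDiff ℝ 2 g) : Continuous (hess d g) :=
  continuous_pi fun _ => continuous_pi fun j =>
    ((contDiff_pi.1 (contDiff_grad hg) j).continuous_fderiv one_ne_zero).clm_apply
      continuous_const

theorem grad_const (c : ℝ) (x : Euc d) : grad (fun _ => c) x = 0 := by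
  ext i
  simp [grad]

theorem grad_add {x : Euc d} (hf : DifferentiableAt ℝ f x) (hg : DifferentiableAt ℝ g x) :
    grad (fun y => f y + g y) x = grad f x + grad g x := by
  ext i
  simp [grad, fderiv_fun_add hf hg]

theorem grad_mul {x : Euc d} (hf : DifferentiableAt ℝ f x) (hg : DifferentiableAt ℝ g x) :
    grad (fun y => f y * g y) x = f x • grad g x + g x • grad f x := by
  ext i
  simp [grad, fderiv_fun_mul hf hg]

theorem grad_rpow {x : Euc d} (hg : DifferentiableAt ℝ g x) (hpos : 0 < g x) (r : ℝ) :
    grad (fun y => g y ^ r) x = (r * g x ^ (r - 1)) • grad g x := by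
  ext i
  simp [grad, (hg.hasFDerivAt.rpow_const (Or.inl hpos.ne')).fderiv]

theorem grad_comp_add_right (g : Euc d → ℝ) (a x : Euc d) :
    grad (fun y => g (y + a)) x = grad g (x + a) := by
  ext i
  simp [grad, fderiv_comp_add_right]

theorem hess_const (c : ℝ) (x : Euc d) : hess d (fun _ => c) x = 0 := by
  ext i j
  simp only [hess_eq_grad_grad, grad_const, Pi.zero_apply]

theorem hess_add (hf : ContDiff ℝ 2 f) (hg : ContDiff ℝ 2 g) (x : Euc d) :
    hess d (fun y => f y + g y) x = hess d f x + hess d g x := by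
  ext i j
  have hsum := fun y => grad_add (hf.differentiable two_ne_zero y) (hg.differentiable two_ne_zero y)
  simp only [hess_eq_grad_grad, hsum, Pi.add_apply,
    grad_add (differentiable_grad hf j x) (differentiable_grad hg j x)]

theorem hess_mul (hf : ContDiff ℝ 2 f) (hg : ContDiff ℝ 2 g) (x : Euc d) (i j : Fin d) :
    hess d (fun y => f y * g y) x i j = f x * hess d g x i j + g x * hess d f x i j
      + grad f x i * grad g x j + grad g x i * grad f x j := by
  have hf₁ := hf.differentiable two_ne_zero
  have hg₁ := hg.differentiable two_ne_zero
  have hf₂ := differentiable_grad hf j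
  have hg₂ := differentiable_grad hg j
  simp only [hess_eq_grad_grad, fun y => grad_mul (hf₁ y) (hg₁ y), Pi.add_apply, Pi.smul_apply,
    smul_eq_mul, grad_add ((hf₁ x).fun_mul (hg₂ x)) ((hg₁ x).fun_mul (hf₂ x)),
    grad_mul (hf₁ x) (hg₂ x), grad_mul (hg₁ x) (hf₂ x)]
  ring

theorem contDiff_rpow (hg : ContDiff ℝ 2 g) (hpos : ∀ y, 0 < g y) (r : ℝ) :
    ContDiff ℝ 2 fun y => g y ^ r :=
  hg.rpow_const_of_ne fun y => (hpos y).ne'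

theorem hess_rpow (hg : ContDiff ℝ 2 g) (hpos : ∀ y, 0 < g y) (r : ℝ) (x : Euc d) (i j : Fin d) :
    hess d (fun y => g y ^ r) x i j = r * g x ^ (r - 1) * hess d g x i j
      + r * (r - 1) * g x ^ (r - 2) * grad g x i * grad g x j := by
  have hg₁ := hg.differentiable two_ne_zero
  have hg₂ := differentiable_grad hg j
  have hpow := (contDiff_rpow hg hpos (r - 1)).differentiable two_ne_zero
  have hgrad : ∀ y, grad (fun y => g y ^ r) y j = g y ^ (r - 1) * (r * grad g y j) := fun y => by
    rw [grad_rpow (hg₁ y) (hpos y), Pi.smul_apply, smul_eq_mul]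
    ring
  simp only [hess_eq_grad_grad, hgrad, grad_mul (hpow x) ((hg₂ x).const_mul r),
    grad_mul (differentiableAt_const r) (hg₂ x), grad_rpow (hg₁ x) (hpos x), grad_const,
    Pi.add_apply, Pi.smul_apply, Pi.zero_apply, smul_eq_mul]
  rw [show r - 1 - 1 = r - 2 by ring]
  ring

theorem hess_comp_add_right (g : Euc d → ℝ) (a x : Euc d) :
    hess d (fun y => g (y + a)) x = hess d g (x + a) := by
  ext i j
  simp only [hess_eq_grad_grad, grad_comp_add_right]
  rw [grad_comp_add_right (fun y => grad g y j)]

theorem hasDerivAt_comp_line (hg : Differentiable ℝ g) (x ξ : Euc d) (τ : ℝ) :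
    HasDerivAt (fun τ : ℝ => g (x + τ • ξ)) (∑ i, ξ i * grad g (x + τ • ξ) i) τ := by
  have hline : HasDerivAt (fun τ : ℝ => x + τ • ξ) ξ τ := by
    simpa using ((hasDerivAt_id τ).smul_const ξ).const_add x
  have hcomp := (hg (x + τ • ξ)).hasFDerivAt.comp_hasDerivAt τ hline
  rwa [clm_apply_eq_sum] at hcomp

theorem hasDerivAt_grad_comp_line (hg : ContDiff ℝ 2 g) (x ξ : Euc d) (τ : ℝ) :
    HasDerivAt (fun τ : ℝ => ∑ i, ξ i * grad g (x + τ • ξ) i)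
      (∑ i, ∑ j, ξ i * ξ j * hess d g (x + τ • ξ) i j) τ := by
  have hsum := HasDerivAt.fun_sum fun j (_ : j ∈ Finset.univ) =>
    (hasDerivAt_comp_line (differentiable_grad hg j) x ξ τ).const_mul (ξ j)
  refine hsum.congr_deriv ?_
  rw [Finset.sum_comm (f := fun i j => ξ i * ξ j * hess d g (x + τ • ξ) i j)]
  simp only [Finset.mul_sum, ← hess_eq_grad_grad]
  exact Finset.sum_congr rfl fun j _ => Finset.sum_congr rfl fun i _ => by ring

theorem grad_eq_zero_of_isLocalMax {x : Euc d} (hm : IsLocalMax g x) : grad g x = 0 := by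
  ext i
  simp [grad, hm.fderiv_eq_zero]

theorem sum_mul_hess_nonpos_of_isLocalMax (hg : ContDiff ℝ 2 g) {x : Euc d}
    (hm : IsLocalMax g x) {A : Fin d → Fin d → ℝ} (hA : (Matrix.of A).PosSemidef) :
    ∑ i, ∑ j, A i j * hess d g x i j ≤ 0 := by
  refine sum_mul_nonpos_of_posSemidef (B := Matrix.of (hess d g x)) hA fun ξ => ?_
  have hline : Tendsto (fun τ : ℝ => x + τ • WithLp.toLp 2 ξ) (𝓝 0) (𝓝 x) := by
    have hcont : Continuous fun τ : ℝ => x + τ • WithLp.toLp 2 ξ := by fun_prop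
    simpa using hcont.tendsto 0
  have hline_max : IsLocalMax (fun τ : ℝ => g (x + τ • WithLp.toLp 2 ξ)) 0 := by
    filter_upwards [hline hm] with τ hτ
    simpa using hτ
  simpa using second_deriv_nonpos_of_isLocalMax hline_max
    (hasDerivAt_comp_line (hg.differentiable two_ne_zero) x (WithLp.toLp 2 ξ))
    (hasDerivAt_grad_comp_line hg x _ 0)

end Calculus

/-! ### Functions of class `C^{1,2}` and the parabolic operator -/

section IsC12

variable {d : ℕ} {s : ℝ} {f g : ℝ → Euc d → ℝ}

/-- The class `C^{1,2}((s,∞) × ℝ^d)`: one continuous time derivative and two continuous space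
derivatives, the regularity demanded of a classical solution after its initial time. -/
structure IsC12 (s : ℝ) (w : ℝ → Euc d → ℝ) : Prop where
  cont : ContinuousOn (fun p : ℝ × Euc d => w p.1 p.2) (Ioi s ×ˢ univ)
  tdiff : ∀ t, s < t → ∀ x, DifferentiableAt ℝ (fun τ => w τ x) t
  tderiv_cont : ContinuousOn (fun p : ℝ × Euc d => deriv (fun τ => w τ p.2) p.1) (Ioi s ×ˢ univ)
  xdiff : ∀ t, s < t → ContDiff ℝ 2 (w t)
  grad_cont : ContinuousOn (fun p : ℝ × Euc d => grad (w p.1) p.2) (Ioi s ×ˢ univ)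
  hess_cont : ContinuousOn (fun p : ℝ × Euc d => hess d (w p.1) p.2) (Ioi s ×ˢ univ)

theorem IsClassicalSolution.isC12 {Q : ℝ → Euc d → Fin d → Fin d → ℝ}
    {b : ℝ → Euc d → Fin d → ℝ} {c : ℝ → Euc d → ℝ} {φ : Euc d → ℝ} {u : ℝ → Euc d → ℝ}
    (hu : IsClassicalSolution d Q b c s φ u) : IsC12 s u where
  cont := hu.cont.mono (by gcongr; exact Ioi_subset_Ici_self)
  tdiff := hu.tdiff
  tderiv_cont := hu.tderiv_cont
  xdiff := hu.xdiff
  grad_cont := continuousOn_pi.2 fun _ => hu.grad_cont.clm_apply continuousOn_const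
  hess_cont := hu.hess_cont

namespace IsC12

theorem differentiable (hf : IsC12 s f) {t : ℝ} (ht : s < t) (x : Euc d) :
    DifferentiableAt ℝ (f t) x :=
  (hf.xdiff t ht).differentiable two_ne_zero x

theorem grad_apply_cont (hf : IsC12 s f) (i : Fin d) :
    ContinuousOn (fun p : ℝ × Euc d => grad (f p.1) p.2 i) (Ioi s ×ˢ univ) :=
  continuousOn_pi.1 hf.grad_cont i

theorem hess_apply_cont (hf : IsC12 s f) (i j : Fin d) :
    ContinuousOn (fun p : ℝ × Euc d => hess d (f p.1) p.2 i j) (Ioi s ×ˢ univ) :=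
  continuousOn_pi.1 (continuousOn_pi.1 hf.hess_cont i) j

theorem ofSpace {g : Euc d → ℝ} (hg : ContDiff ℝ 2 g) : IsC12 s fun _ => g where
  cont := (hg.continuous.comp continuous_snd).continuousOn
  tdiff _ _ _ := differentiableAt_const _
  tderiv_cont := by simpa only [deriv_const] using continuousOn_const
  xdiff _ _ := hg
  grad_cont := ((contDiff_grad hg).continuous.comp continuous_snd).continuousOn
  hess_cont := ((continuous_hess hg).comp continuous_snd).continuousOn

theorem const (c : ℝ) : IsC12 s fun _ (_ : Euc d) => c :=
  ofSpace contDiff_const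

theorem ofTime {g : ℝ → ℝ} (hg : ContDiff ℝ 1 g) : IsC12 s fun t (_ : Euc d) => g t where
  cont := (hg.continuous.comp continuous_fst).continuousOn
  tdiff t _ _ := hg.differentiable one_ne_zero t
  tderiv_cont := ((hg.continuous_deriv le_rfl).comp continuous_fst).continuousOn
  xdiff _ _ := contDiff_const
  grad_cont := by simpa only [grad_const] using continuousOn_const
  hess_cont := by simpa only [hess_const] using continuousOn_const

theorem add (hf : IsC12 s f) (hg : IsC12 s g) : IsC12 s fun t x => f t x + g t x where
  cont := hf.cont.add hg.cont
  tdiff t ht x := (hf.tdiff t ht x).fun_add (hg.tdiff t ht x)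
  tderiv_cont := (hf.tderiv_cont.add hg.tderiv_cont).congr fun _ hp =>
    deriv_fun_add (hf.tdiff _ hp.1 _) (hg.tdiff _ hp.1 _)
  xdiff t ht := (hf.xdiff t ht).add (hg.xdiff t ht)
  grad_cont := (hf.grad_cont.add hg.grad_cont).congr fun _ hp =>
    grad_add (hf.differentiable hp.1 _) (hg.differentiable hp.1 _)
  hess_cont := (hf.hess_cont.add hg.hess_cont).congr fun _ hp =>
    hess_add (hf.xdiff _ hp.1) (hg.xdiff _ hp.1) _

theorem mul (hf : IsC12 s f) (hg : IsC12 s g) : IsC12 s fun t x => f t x * g t x where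
  cont := hf.cont.mul hg.cont
  tdiff t ht x := (hf.tdiff t ht x).fun_mul (hg.tdiff t ht x)
  tderiv_cont := ((hf.tderiv_cont.mul hg.cont).add (hf.cont.mul hg.tderiv_cont)).congr
    fun _ hp => deriv_fun_mul (hf.tdiff _ hp.1 _) (hg.tdiff _ hp.1 _)
  xdiff t ht := (hf.xdiff t ht).mul (hg.xdiff t ht)
  grad_cont := ((hf.cont.smul hg.grad_cont).add (hg.cont.smul hf.grad_cont)).congr fun _ hp =>
    grad_mul (hf.differentiable hp.1 _) (hg.differentiable hp.1 _)
  hess_cont := continuousOn_pi.2 fun i => continuousOn_pi.2 fun j =>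
    ((((hf.cont.mul (hg.hess_apply_cont i j)).add (hg.cont.mul (hf.hess_apply_cont i j))).add
      ((hf.grad_apply_cont i).mul (hg.grad_apply_cont j))).add
      ((hg.grad_apply_cont i).mul (hf.grad_apply_cont j))).congr fun _ hp =>
        hess_mul (hf.xdiff _ hp.1) (hg.xdiff _ hp.1) _ i j

theorem rpow_cont (hf : IsC12 s f) (hpos : ∀ t, s < t → ∀ x, 0 < f t x) (r : ℝ) :
    ContinuousOn (fun p : ℝ × Euc d => f p.1 p.2 ^ r) (Ioi s ×ˢ univ) :=
  hf.cont.rpow_const fun _ hp => Or.inl (hpos _ hp.1 _).ne'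

theorem rpow (hf : IsC12 s f) (hpos : ∀ t, s < t → ∀ x, 0 < f t x) (r : ℝ) :
    IsC12 s fun t x => f t x ^ r where
  cont := hf.rpow_cont hpos r
  tdiff t ht x := (hf.tdiff t ht x).rpow_const (Or.inl (hpos t ht x).ne')
  tderiv_cont :=
    ((hf.tderiv_cont.mul continuousOn_const).mul (hf.rpow_cont hpos (r - 1))).congr fun _ hp =>
      deriv_rpow_const (hf.tdiff _ hp.1 _) (Or.inl (hpos _ hp.1 _).ne')
  xdiff t ht := contDiff_rpow (hf.xdiff t ht) (hpos t ht) r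
  grad_cont :=
    ((continuousOn_const.mul (hf.rpow_cont hpos (r - 1))).smul hf.grad_cont).congr fun _ hp =>
      grad_rpow (hf.differentiable hp.1 _) (hpos _ hp.1 _) r
  hess_cont := continuousOn_pi.2 fun i => continuousOn_pi.2 fun j =>
    (((continuousOn_const.mul (hf.rpow_cont hpos (r - 1))).mul (hf.hess_apply_cont i j)).add
      (((continuousOn_const.mul (hf.rpow_cont hpos (r - 2))).mul (hf.grad_apply_cont i)).mul
        (hf.grad_apply_cont j))).congr fun _ hp =>
          hess_rpow (hf.xdiff _ hp.1) (hpos _ hp.1) r _ i j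

theorem comp_add_right (hf : IsC12 s f) (a : Euc d) : IsC12 s fun t x => f t (x + a) := by
  have hshift : ContinuousOn (fun p : ℝ × Euc d => (p.1, p.2 + a)) (Ioi s ×ˢ univ) := by fun_prop
  have hmaps : MapsTo (fun p : ℝ × Euc d => (p.1, p.2 + a)) (Ioi s ×ˢ univ) (Ioi s ×ˢ univ) :=
    fun p hp => ⟨hp.1, trivial⟩
  exact
    { cont := hf.cont.comp hshift hmaps
      tdiff := fun t ht x => hf.tdiff t ht (x + a)
      tderiv_cont := hf.tderiv_cont.comp hshift hmaps
      xdiff := fun t ht => (hf.xdiff t ht).comp (contDiff_id.add contDiff_const)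
      grad_cont := (hf.grad_cont.comp hshift hmaps).congr fun _ _ =>
        grad_comp_add_right _ _ _
      hess_cont := (hf.hess_cont.comp hshift hmaps).congr fun _ _ =>
        hess_comp_add_right _ _ _ }

end IsC12

/-- The parabolic operator `∂ₜ - Tr(Q D²) - ⟨b, ∇⟩` without zero-order term. -/
def parabolicOp (Q : ℝ → Euc d → Fin d → Fin d → ℝ) (b : ℝ → Euc d → Fin d → ℝ)
    (w : ℝ → Euc d → ℝ) (t : ℝ) (x : Euc d) : ℝ :=
  deriv (fun τ => w τ x) t - Aop d Q b (fun _ _ => 0) t (w t) x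

variable {Q : ℝ → Euc d → Fin d → Fin d → ℝ} {b : ℝ → Euc d → Fin d → ℝ}

theorem Aop_zero_eq (t : ℝ) (g : Euc d → ℝ) (x : Euc d) :
    Aop d Q b (fun _ _ => 0) t g x =
      (∑ i, ∑ j, Q t x i j * hess d g x i j) + ∑ i, b t x i * grad g x i := by
  simp only [Aop, grad, zero_mul, add_zero]

theorem parabolicOp_eq (w : ℝ → Euc d → ℝ) (t : ℝ) (x : Euc d) :
    parabolicOp Q b w t x = deriv (fun τ => w τ x) t
      - ((∑ i, ∑ j, Q t x i j * hess d (w t) x i j) + ∑ i, b t x i * grad (w t) x i) := by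
  rw [parabolicOp, Aop_zero_eq]

theorem IsClassicalSolution.parabolicOp_eq_zero {φ : Euc d → ℝ} {u : ℝ → Euc d → ℝ}
    (hu : IsClassicalSolution d Q b (fun _ _ => 0) s φ u) {t : ℝ} (ht : s < t) (x : Euc d) :
    parabolicOp Q b u t x = 0 :=
  sub_eq_zero.2 (hu.pde t ht x)

theorem parabolicOp_ofTime (g : ℝ → ℝ) (t : ℝ) (x : Euc d) :
    parabolicOp Q b (fun t _ => g t) t x = deriv g t := by
  simp [parabolicOp_eq, grad_const, hess_const]

theorem parabolicOp_ofSpace (g : Euc d → ℝ) (t : ℝ) (x : Euc d) :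
    parabolicOp Q b (fun _ => g) t x = -Aop d Q b (fun _ _ => 0) t g x := by
  simp [parabolicOp]

theorem parabolicOp_const (c t : ℝ) (x : Euc d) :
    parabolicOp Q b (fun _ _ => c) t x = 0 := by
  rw [parabolicOp_ofTime (fun _ => c), deriv_const]

theorem parabolicOp_add (hf : IsC12 s f) (hg : IsC12 s g) {t : ℝ} (ht : s < t) (x : Euc d) :
    parabolicOp Q b (fun t x => f t x + g t x) t x =
      parabolicOp Q b f t x + parabolicOp Q b g t x := by
  simp only [parabolicOp_eq, deriv_fun_add (hf.tdiff t ht x) (hg.tdiff t ht x),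
    grad_add (hf.differentiable ht x) (hg.differentiable ht x),
    hess_add (hf.xdiff t ht) (hg.xdiff t ht), Pi.add_apply, mul_add, Finset.sum_add_distrib]
  ring

theorem sum_mul_hess_mul {A : Fin d → Fin d → ℝ} (hA : ∀ i j, A i j = A j i) {f g : Euc d → ℝ}
    (hf : ContDiff ℝ 2 f) (hg : ContDiff ℝ 2 g) (x : Euc d) :
    ∑ i, ∑ j, A i j * hess d (fun y => f y * g y) x i j =
      f x * (∑ i, ∑ j, A i j * hess d g x i j) + g x * (∑ i, ∑ j, A i j * hess d f x i j)
        + 2 * coeffForm A (grad f x) (grad g x) := by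
  have hswap : ∑ i, ∑ j, A i j * grad g x i * grad f x j = coeffForm A (grad f x) (grad g x) := by
    rw [coeffForm_apply, Finset.sum_comm]
    refine Finset.sum_congr rfl fun i _ => Finset.sum_congr rfl fun j _ => ?_
    rw [hA j i]
    ring
  rw [two_mul]
  nth_rewrite 2 [← hswap]
  simp only [coeffForm_apply, hess_mul hf hg, Finset.mul_sum, ← Finset.sum_add_distrib]
  exact Finset.sum_congr rfl fun i _ => Finset.sum_congr rfl fun j _ => by ring

theorem parabolicOp_mul (hf : IsC12 s f) (hg : IsC12 s g) {t : ℝ} (ht : s < t) (x : Euc d)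
    (hQ : ∀ i j, Q t x i j = Q t x j i) :
    parabolicOp Q b (fun t x => f t x * g t x) t x =
      f t x * parabolicOp Q b g t x + g t x * parabolicOp Q b f t x
        - 2 * coeffForm (Q t x) (grad (f t) x) (grad (g t) x) := by
  simp only [parabolicOp_eq, deriv_fun_mul (hf.tdiff t ht x) (hg.tdiff t ht x),
    grad_mul (hf.differentiable ht x) (hg.differentiable ht x),
    sum_mul_hess_mul hQ (hf.xdiff t ht) (hg.xdiff t ht), Pi.add_apply, Pi.smul_apply,
    smul_eq_mul, mul_add, mul_sub, Finset.sum_add_distrib, Finset.mul_sum, mul_left_comm]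
  ring

theorem sum_mul_hess_rpow (A : Fin d → Fin d → ℝ) {g : Euc d → ℝ} (hg : ContDiff ℝ 2 g)
    (hpos : ∀ y, 0 < g y) (r : ℝ) (x : Euc d) :
    ∑ i, ∑ j, A i j * hess d (fun y => g y ^ r) x i j =
      r * g x ^ (r - 1) * (∑ i, ∑ j, A i j * hess d g x i j)
        + r * (r - 1) * g x ^ (r - 2) * coeffForm A (grad g x) (grad g x) := by
  simp only [coeffForm_apply, hess_rpow hg hpos, Finset.mul_sum, ← Finset.sum_add_distrib]
  exact Finset.sum_congr rfl fun i _ => Finset.sum_congr rfl fun j _ => by ring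

theorem parabolicOp_rpow (hf : IsC12 s f) (hpos : ∀ t, s < t → ∀ x, 0 < f t x) (r : ℝ) {t : ℝ}
    (ht : s < t) (x : Euc d) :
    parabolicOp Q b (fun t x => f t x ^ r) t x =
      r * f t x ^ (r - 1) * parabolicOp Q b f t x
        - r * (r - 1) * f t x ^ (r - 2) * coeffForm (Q t x) (grad (f t) x) (grad (f t) x) := by
  have hfirst : ∑ i, b t x i * (r * f t x ^ (r - 1) * grad (f t) x i) =
      r * f t x ^ (r - 1) * ∑ i, b t x i * grad (f t) x i := by
    rw [Finset.mul_sum]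
    exact Finset.sum_congr rfl fun i _ => by ring
  simp only [parabolicOp_eq, deriv_rpow_const (hf.tdiff t ht x) (Or.inl (hpos t ht x).ne'),
    grad_rpow (hf.differentiable ht x) (hpos t ht x), sum_mul_hess_rpow _ (hf.xdiff t ht)
    (hpos t ht), Pi.smul_apply, smul_eq_mul, hfirst]
  ring

end IsC12

/-! ### The weak maximum principle for limits of `C^{1,2}` functions -/

section MaximumPrinciple

variable {d : ℕ} {s : ℝ} {Q : ℝ → Euc d → Fin d → Fin d → ℝ} {b : ℝ → Euc d → Fin d → ℝ}

/-- Continuous, possibly degenerate, elliptic coefficients at the times in `J`. -/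
structure EllipticCoeffs (J : Set ℝ) (Q : ℝ → Euc d → Fin d → Fin d → ℝ)
    (b : ℝ → Euc d → Fin d → ℝ) : Prop where
  posSemidef : ∀ t ∈ J, ∀ x, (Matrix.of (Q t x)).PosSemidef
  cont_diffusion : ContinuousOn (fun p : ℝ × Euc d => Q p.1 p.2) (J ×ˢ univ)
  cont_drift : ContinuousOn (fun p : ℝ × Euc d => b p.1 p.2) (J ×ˢ univ)

namespace EllipticCoeffs

theorem mono {J J' : Set ℝ} (hc : EllipticCoeffs J Q b) (hJ : J' ⊆ J) :
    EllipticCoeffs J' Q b where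
  posSemidef t ht := hc.posSemidef t (hJ ht)
  cont_diffusion := hc.cont_diffusion.mono (prod_mono_left hJ)
  cont_drift := hc.cont_drift.mono (prod_mono_left hJ)

theorem symm {J : Set ℝ} (hc : EllipticCoeffs J Q b) {t : ℝ} (ht : t ∈ J) (x : Euc d)
    (i j : Fin d) : Q t x i j = Q t x j i := by
  simpa using (hc.posSemidef t ht x).isHermitian.apply j i

theorem coeffForm_nonneg {J : Set ℝ} (hc : EllipticCoeffs J Q b) {t : ℝ} (ht : t ∈ J) (x : Euc d)
    (ξ : Fin d → ℝ) : 0 ≤ coeffForm (Q t x) ξ ξ := by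
  simpa [coeffForm, Matrix.toBilin'_apply'] using (hc.posSemidef t ht x).dotProduct_mulVec_nonneg ξ

theorem diffusion_apply_cont {J : Set ℝ} (hc : EllipticCoeffs J Q b) (i j : Fin d) :
    ContinuousOn (fun p : ℝ × Euc d => Q p.1 p.2 i j) (J ×ˢ univ) :=
  continuousOn_pi.1 (continuousOn_pi.1 hc.cont_diffusion i) j

theorem parabolicOp_cont (hc : EllipticCoeffs (Ioi s) Q b) {w : ℝ → Euc d → ℝ} (hw : IsC12 s w) :
    ContinuousOn (fun p : ℝ × Euc d => parabolicOp Q b w p.1 p.2) (Ioi s ×ˢ univ) := by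
  simp only [parabolicOp_eq]
  exact hw.tderiv_cont.sub ((continuousOn_finsetSum _ fun i _ => continuousOn_finsetSum _
    fun j _ => (hc.diffusion_apply_cont i j).mul (hw.hess_apply_cont i j)).add
    (continuousOn_finsetSum _ fun i _ =>
      (continuousOn_pi.1 hc.cont_drift i).mul (hw.grad_apply_cont i)))

end EllipticCoeffs

theorem deriv_nonneg_of_eventually_le_left {f : ℝ → ℝ} {t : ℝ} (hf : DifferentiableAt ℝ f t)
    (hle : ∀ᶠ τ in 𝓝[<] t, f τ ≤ f t) : 0 ≤ deriv f t := by
  have hslope : Tendsto (slope f t) (𝓝[<] t) (𝓝 (deriv f t)) :=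
    (hasDerivWithinAt_iff_tendsto_slope' (s := Iio t) (lt_irrefl t)).1
      hf.hasDerivAt.hasDerivWithinAt
  refine ge_of_tendsto hslope ?_
  filter_upwards [hle, self_mem_nhdsWithin] with τ hτ hlt
  rw [slope_def_field]
  exact div_nonneg_of_nonpos (sub_nonpos.2 hτ) (sub_nonpos.2 (le_of_lt hlt))

theorem parabolicOp_nonneg_of_isLocalMax {w : ℝ → Euc d → ℝ} (hw : IsC12 s w) {t : ℝ} {x : Euc d}
    (ht : s < t) (hQ : (Matrix.of (Q t x)).PosSemidef) (hspace : IsLocalMax (w t) x)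
    (htime : ∀ᶠ τ in 𝓝[<] t, w τ x ≤ w t x) : 0 ≤ parabolicOp Q b w t x := by
  have hderiv := deriv_nonneg_of_eventually_le_left (hw.tdiff t ht x) htime
  have hhess := sum_mul_hess_nonpos_of_isLocalMax (hw.xdiff t ht) hspace hQ
  simp only [parabolicOp_eq, grad_eq_zero_of_isLocalMax hspace, Pi.zero_apply, mul_zero,
    Finset.sum_const_zero]
  linarith

theorem exists_ultrafilter_tendsto_isMaxOn {X ι : Type*} [TopologicalSpace X] {K : Set X}
    (hK : IsCompact K) (hne : K.Nonempty) {l : Filter ι} [NeBot l] {F : ι → X → ℝ} {Φ : X → ℝ}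
    (hF : ∀ i, ContinuousOn (F i) K)
    (hlim : ∀ z ∈ K, Tendsto (fun p : ι × X => F p.1 p.2) (l ×ˢ 𝓝 z) (𝓝 (Φ z))) :
    ∃ (U : Ultrafilter ι) (ζ : ι → X), ∃ z ∈ K, ↑U ≤ l ∧ Tendsto ζ U (𝓝 z) ∧
      (∀ i, ζ i ∈ K) ∧ (∀ i, IsMaxOn (F i) K (ζ i)) ∧ IsMaxOn Φ K z := by
  choose ζ hζK hζmax using fun i => hK.exists_isMaxOn hne (hF i)
  obtain ⟨z, hzK, hz⟩ := hK.ultrafilter_le_nhds' ((Ultrafilter.of l).map ζ)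
    (Ultrafilter.mem_map.2 (univ_mem' hζK))
  have hle : ↑(Ultrafilter.of l) ≤ l := Ultrafilter.of_le l
  refine ⟨Ultrafilter.of l, ζ, z, hzK, hle, hz, hζK, hζmax, fun y hy => ?_⟩
  have hval : Tendsto (fun i => F i (ζ i)) (Ultrafilter.of l) (𝓝 (Φ z)) :=
    (hlim z hzK).comp ((tendsto_id.mono_left hle).prodMk hz)
  have hy_val : Tendsto (fun i => F i y) (Ultrafilter.of l) (𝓝 (Φ y)) :=
    (hlim y hy).comp ((tendsto_id.mono_left hle).prodMk tendsto_const_nhds)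
  exact le_of_tendsto_of_tendsto' hy_val hval fun i => hζmax i hy

/-- `Φ` is the limit as `h → 0+` of the `C^{1,2}` functions `w h`, locally uniformly in the sense of
continuous convergence, along with their gradients (to `D`) and their images under the parabolic
operator (to `B`). This lets `|∇u|²` enter a maximum principle although `∇u` has no more than one
space derivative: it is approximated by squares of difference quotients. -/
structure C12Approx (Q : ℝ → Euc d → Fin d → Fin d → ℝ) (b : ℝ → Euc d → Fin d → ℝ) (s : ℝ)
    (w : ℝ → ℝ → Euc d → ℝ) (Φ : ℝ → Euc d → ℝ) (D : ℝ → Euc d → Fin d → ℝ)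
    (B : ℝ → Euc d → ℝ) : Prop where
  isC12 : ∀ h, IsC12 s (w h)
  tendsto_val : ∀ ⦃t : ℝ⦄, s < t → ∀ x : Euc d,
    Tendsto (fun p : ℝ × ℝ × Euc d => w p.1 p.2.1 p.2.2) (𝓝[>] 0 ×ˢ 𝓝 (t, x)) (𝓝 (Φ t x))
  tendsto_grad : ∀ ⦃t : ℝ⦄, s < t → ∀ x : Euc d,
    Tendsto (fun p : ℝ × ℝ × Euc d => grad (w p.1 p.2.1) p.2.2) (𝓝[>] 0 ×ˢ 𝓝 (t, x))
      (𝓝 (D t x))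
  tendsto_op : ∀ ⦃t : ℝ⦄, s < t → ∀ x : Euc d,
    Tendsto (fun p : ℝ × ℝ × Euc d => parabolicOp Q b (w p.1) p.2.1 p.2.2) (𝓝[>] 0 ×ˢ 𝓝 (t, x))
      (𝓝 (B t x))

theorem Ioi_prod_univ_mem_nhds {t : ℝ} (ht : s < t) (x : Euc d) :
    Ioi s ×ˢ univ ∈ 𝓝 (t, x) :=
  prod_mem_nhds (Ioi_mem_nhds ht) univ_mem

namespace C12Approx

variable {w w₁ w₂ : ℝ → ℝ → Euc d → ℝ} {Φ Φ₁ Φ₂ : ℝ → Euc d → ℝ}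
  {D D₁ D₂ : ℝ → Euc d → Fin d → ℝ} {B B₁ B₂ : ℝ → Euc d → ℝ}

theorem eventually_time_gt (l : Filter ℝ) {t : ℝ} (ht : s < t) (x : Euc d) :
    ∀ᶠ p : ℝ × ℝ × Euc d in l ×ˢ 𝓝 (t, x), s < p.2.1 :=
  ((continuous_fst.tendsto (t, x)).comp tendsto_snd).eventually_const_lt ht

theorem of_isC12 (hc : EllipticCoeffs (Ioi s) Q b) {w : ℝ → Euc d → ℝ} (hw : IsC12 s w) :
    C12Approx Q b s (fun _ => w) w (fun t x => grad (w t) x)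
      (fun t x => parabolicOp Q b w t x) where
  isC12 _ := hw
  tendsto_val _ ht x := (hw.cont.continuousAt (Ioi_prod_univ_mem_nhds ht x)).tendsto.comp
    tendsto_snd
  tendsto_grad _ ht x := (hw.grad_cont.continuousAt (Ioi_prod_univ_mem_nhds ht x)).tendsto.comp
    tendsto_snd
  tendsto_op _ ht x :=
    ((hc.parabolicOp_cont hw).continuousAt (Ioi_prod_univ_mem_nhds ht x)).tendsto.comp tendsto_snd

theorem add (h₁ : C12Approx Q b s w₁ Φ₁ D₁ B₁) (h₂ : C12Approx Q b s w₂ Φ₂ D₂ B₂) :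
    C12Approx Q b s (fun h t x => w₁ h t x + w₂ h t x) (fun t x => Φ₁ t x + Φ₂ t x)
      (fun t x => D₁ t x + D₂ t x) (fun t x => B₁ t x + B₂ t x) where
  isC12 h := (h₁.isC12 h).add (h₂.isC12 h)
  tendsto_val _ ht x := (h₁.tendsto_val ht x).add (h₂.tendsto_val ht x)
  tendsto_grad _ ht x := ((h₁.tendsto_grad ht x).add (h₂.tendsto_grad ht x)).congr' <|
    (eventually_time_gt _ ht x).mono fun p hp => (grad_add
      ((h₁.isC12 p.1).differentiable hp _) ((h₂.isC12 p.1).differentiable hp _)).symm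
  tendsto_op _ ht x := ((h₁.tendsto_op ht x).add (h₂.tendsto_op ht x)).congr' <|
    (eventually_time_gt _ ht x).mono fun p hp =>
      (parabolicOp_add (h₁.isC12 p.1) (h₂.isC12 p.1) hp _).symm

theorem mul (hc : EllipticCoeffs (Ioi s) Q b) (h₁ : C12Approx Q b s w₁ Φ₁ D₁ B₁)
    (h₂ : C12Approx Q b s w₂ Φ₂ D₂ B₂) :
    C12Approx Q b s (fun h t x => w₁ h t x * w₂ h t x) (fun t x => Φ₁ t x * Φ₂ t x)
      (fun t x => Φ₁ t x • D₂ t x + Φ₂ t x • D₁ t x)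
      (fun t x => Φ₁ t x * B₂ t x + Φ₂ t x * B₁ t x
        - 2 * coeffForm (Q t x) (D₁ t x) (D₂ t x)) where
  isC12 h := (h₁.isC12 h).mul (h₂.isC12 h)
  tendsto_val _ ht x := (h₁.tendsto_val ht x).mul (h₂.tendsto_val ht x)
  tendsto_grad _ ht x := (((h₁.tendsto_val ht x).smul (h₂.tendsto_grad ht x)).add
    ((h₂.tendsto_val ht x).smul (h₁.tendsto_grad ht x))).congr' <|
    (eventually_time_gt _ ht x).mono fun p hp => (grad_mul
      ((h₁.isC12 p.1).differentiable hp _) ((h₂.isC12 p.1).differentiable hp _)).symm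
  tendsto_op t ht x := by
    have hform : Tendsto (fun p : ℝ × ℝ × Euc d => coeffForm (Q p.2.1 p.2.2)
        (grad (w₁ p.1 p.2.1) p.2.2) (grad (w₂ p.1 p.2.1) p.2.2)) (𝓝[>] 0 ×ˢ 𝓝 (t, x))
        (𝓝 (coeffForm (Q t x) (D₁ t x) (D₂ t x))) := by
      simp only [coeffForm_apply]
      exact tendsto_finsetSum _ fun i _ => tendsto_finsetSum _ fun j _ =>
        ((((hc.diffusion_apply_cont i j).continuousAt
          (Ioi_prod_univ_mem_nhds ht x)).tendsto.comp tendsto_snd).mul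
          (tendsto_pi_nhds.1 (h₁.tendsto_grad ht x) i)).mul
          (tendsto_pi_nhds.1 (h₂.tendsto_grad ht x) j)
    refine ((((h₁.tendsto_val ht x).mul (h₂.tendsto_op ht x)).add
      ((h₂.tendsto_val ht x).mul (h₁.tendsto_op ht x))).sub (hform.const_mul 2)).congr' ?_
    filter_upwards [eventually_time_gt _ ht x] with p hp
    exact (parabolicOp_mul (h₁.isC12 p.1) (h₂.isC12 p.1) hp _ (hc.symm hp _)).symm

theorem sum (hc : EllipticCoeffs (Ioi s) Q b) {ι : Type*} (S : Finset ι)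
    {w : ι → ℝ → ℝ → Euc d → ℝ} {Φ : ι → ℝ → Euc d → ℝ} {D : ι → ℝ → Euc d → Fin d → ℝ}
    {B : ι → ℝ → Euc d → ℝ} (h : ∀ k ∈ S, C12Approx Q b s (w k) (Φ k) (D k) (B k)) :
    C12Approx Q b s (fun h t x => ∑ k ∈ S, w k h t x) (fun t x => ∑ k ∈ S, Φ k t x)
      (fun t x => ∑ k ∈ S, D k t x) (fun t x => ∑ k ∈ S, B k t x) := by
  classical
  induction S using Finset.induction_on with
  | empty => simpa only [Finset.sum_empty, grad_const, parabolicOp_const] using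
      of_isC12 hc (IsC12.const 0)
  | insert k S hk ih =>
    simp only [Finset.sum_insert hk]
    exact (h k (Finset.mem_insert_self k S)).add
      (ih fun l hl => h l (Finset.mem_insert_of_mem hl))

variable {t₀ T R : ℝ}

theorem eq_zero_and_nonneg_of_isMaxOn (hc : EllipticCoeffs (Ioi s) Q b)
    (hw : C12Approx Q b s w Φ D B) {U : Ultrafilter ℝ} (hU : ↑U ≤ 𝓝[>] (0 : ℝ))
    {ζ : ℝ → ℝ × Euc d} {t : ℝ} {x : Euc d} (ht₀ : s < t₀) (ht : t₀ < t) (hx : ‖x‖ < R)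
    (hζ : Tendsto ζ U (𝓝 (t, x))) (hζK : ∀ h, ζ h ∈ Icc t₀ T ×ˢ Metric.closedBall 0 R)
    (hmax : ∀ h, IsMaxOn (fun z => w h z.1 z.2) (Icc t₀ T ×ˢ Metric.closedBall 0 R) (ζ h)) :
    D t x = 0 ∧ 0 ≤ B t x := by
  have hst : s < t := ht₀.trans ht
  have hinterior : ∀ᶠ h in (U : Filter ℝ), (ζ h).1 ∈ Ioi t₀ ∧ (ζ h).2 ∈ Metric.ball 0 R :=
    hζ (prod_mem_nhds (Ioi_mem_nhds ht) (Metric.isOpen_ball.mem_nhds (by simpa using hx)))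
  have hlim : Tendsto (fun h => (h, ζ h)) U (𝓝[>] 0 ×ˢ 𝓝 (t, x)) :=
    (tendsto_id.mono_left hU).prodMk hζ
  have hlocal : ∀ᶠ h in (U : Filter ℝ), IsLocalMax (w h (ζ h).1) (ζ h).2 := by
    filter_upwards [hinterior] with h hh
    filter_upwards [Metric.isOpen_ball.mem_nhds hh.2] with y hy
    exact hmax h (show ((ζ h).1, y) ∈ _ from ⟨(hζK h).1, Metric.ball_subset_closedBall hy⟩)
  constructor
  · refine tendsto_nhds_unique ((hw.tendsto_grad hst x).comp hlim) (tendsto_const_nhds.congr' ?_)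
    filter_upwards [hlocal] with h hh
    exact (grad_eq_zero_of_isLocalMax hh).symm
  · refine ge_of_tendsto ((hw.tendsto_op hst x).comp hlim) ?_
    filter_upwards [hinterior, hlocal] with h hh hloc
    have hsζ : s < (ζ h).1 := ht₀.trans hh.1
    refine parabolicOp_nonneg_of_isLocalMax (hw.isC12 h) hsζ (hc.posSemidef _ hsζ _) hloc ?_
    filter_upwards [Ioo_mem_nhdsLT hh.1] with τ hτ
    exact hmax h (show (τ, (ζ h).2) ∈ _ from
      ⟨⟨hτ.1.le, hτ.2.le.trans (hζK h).1.2⟩, (hζK h).2⟩)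

theorem nonpos_of_parabolic_boundary (hc : EllipticCoeffs (Ioi s) Q b)
    (hw : C12Approx Q b s w Φ D B) (ht₀ : s < t₀)
    (hinit : ∀ x, ‖x‖ ≤ R → Φ t₀ x ≤ 0)
    (hlateral : ∀ t ∈ Icc t₀ T, ∀ x, ‖x‖ = R → Φ t x ≤ 0)
    (hinterior : ∀ t ∈ Ioc t₀ T, ∀ x, ‖x‖ < R → 0 < Φ t x → D t x = 0 → B t x < 0) :
    ∀ t ∈ Icc t₀ T, ∀ x, ‖x‖ ≤ R → Φ t x ≤ 0 := by
  intro t₁ ht₁ x₁ hx₁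
  by_contra! hpos
  have hmem : (t₁, x₁) ∈ Icc t₀ T ×ˢ Metric.closedBall (0 : Euc d) R := ⟨ht₁, by simpa using hx₁⟩
  have hlt : ∀ z ∈ Icc t₀ T ×ˢ Metric.closedBall (0 : Euc d) R, s < z.1 :=
    fun z hz => ht₀.trans_le hz.1.1
  obtain ⟨U, ζ, ⟨t, x⟩, ⟨htT, hx⟩, hU, hζ, hζK, hζmax, hmax⟩ :=
    exists_ultrafilter_tendsto_isMaxOn (l := 𝓝[>] (0 : ℝ)) (F := fun h z => w h z.1 z.2)
      (Φ := fun z => Φ z.1 z.2) (isCompact_Icc.prod (isCompact_closedBall 0 R)) ⟨_, hmem⟩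
      (fun h => (hw.isC12 h).cont.mono fun z hz => ⟨hlt z hz, trivial⟩)
      fun z hz => hw.tendsto_val (hlt z hz) z.2
  have hΦ : 0 < Φ t x := hpos.trans_le (hmax hmem)
  have hxR : ‖x‖ ≤ R := by simpa using hx
  have ht : t₀ < t := htT.1.lt_of_ne fun heq => (hinit x hxR).not_gt (heq ▸ hΦ)
  have hxlt : ‖x‖ < R := hxR.lt_of_ne fun heq => (hlateral t htT x heq).not_gt hΦ
  obtain ⟨hD, hB⟩ := hw.eq_zero_and_nonneg_of_isMaxOn hc hU ht₀ ht hxlt hζ hζK hζmax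
  exact (hinterior t ⟨ht, htT.2⟩ x hxlt hΦ hD).not_ge hB

end C12Approx

end MaximumPrinciple

/-! ### Difference quotients and the Bernstein identity for `|∇u|²` -/

section DifferenceQuotient

variable {d : ℕ} {s : ℝ} {Q : ℝ → Euc d → Fin d → Fin d → ℝ} {b : ℝ → Euc d → Fin d → ℝ}
  {u : ℝ → Euc d → ℝ}

/-- The difference quotient in space, of step `h`, in the direction of the `k`-th basis vector. -/
def diffQuot (F : ℝ → Euc d → ℝ) (k : Fin d) (h t : ℝ) (x : Euc d) : ℝ :=
  h⁻¹ * (F t (x + h • EuclideanSpace.single k 1) - F t x)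

theorem diffQuot_eq_add (u : ℝ → Euc d → ℝ) (k : Fin d) (h : ℝ) :
    diffQuot u k h = fun t x => h⁻¹ * (u t (x + h • EuclideanSpace.single k 1) + -1 * u t x) := by
  funext t x
  rw [diffQuot]
  ring

theorem diffQuot_mul (F G : ℝ → Euc d → ℝ) (k : Fin d) (h t : ℝ) (x : Euc d) :
    diffQuot (fun t x => F t x * G t x) k h t x =
      diffQuot F k h t x * G t (x + h • EuclideanSpace.single k 1)
        + F t x * diffQuot G k h t x := by
  simp only [diffQuot]
  ring

theorem diffQuot_sum {ι : Type*} (S : Finset ι) (F : ι → ℝ → Euc d → ℝ) (k : Fin d) (h t : ℝ)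
    (x : Euc d) :
    diffQuot (fun t x => ∑ i ∈ S, F i t x) k h t x = ∑ i ∈ S, diffQuot (F i) k h t x := by
  simp only [diffQuot, ← Finset.sum_sub_distrib, Finset.mul_sum]

theorem IsC12.diffQuot (hu : IsC12 s u) (k : Fin d) (h : ℝ) : IsC12 s (diffQuot u k h) := by
  rw [diffQuot_eq_add]
  exact (IsC12.const h⁻¹).mul ((hu.comp_add_right _).add ((IsC12.const (-1)).mul hu))

theorem deriv_diffQuot (hu : IsC12 s u) (k : Fin d) (h : ℝ) {t : ℝ} (ht : s < t) (x : Euc d) :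
    deriv (fun τ => diffQuot u k h τ x) t =
      diffQuot (fun t x => deriv (fun τ => u τ x) t) k h t x := by
  have hdiff := (hu.tdiff t ht (x + h • EuclideanSpace.single k 1)).hasDerivAt.sub
    (hu.tdiff t ht x).hasDerivAt
  exact (hdiff.const_mul h⁻¹).deriv

theorem grad_diffQuot (hu : IsC12 s u) (k : Fin d) (h : ℝ) {t : ℝ} (ht : s < t) (x : Euc d)
    (i : Fin d) :
    grad (diffQuot u k h t) x i = diffQuot (fun t x => grad (u t) x i) k h t x := by
  have hu₁ := hu.differentiable ht
  have hshift := (hu.comp_add_right (h • EuclideanSpace.single k 1)).differentiable ht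
  have hneg : Differentiable ℝ fun y => -1 * u t y := fun y => (hu₁ y).const_mul _
  have hsum : Differentiable ℝ fun y => u t (y + h • EuclideanSpace.single k 1) + -1 * u t y :=
    fun y => (hshift y).add (hneg y)
  simp only [diffQuot_eq_add, grad_mul (differentiableAt_const h⁻¹) (hsum x),
    grad_add (hshift x) (hneg x), grad_mul (differentiableAt_const (-1)) (hu₁ x), grad_const,
    grad_comp_add_right, Pi.add_apply, Pi.smul_apply, Pi.zero_apply, smul_eq_mul, mul_zero,
    add_zero]

theorem hess_diffQuot (hu : IsC12 s u) (k : Fin d) (h : ℝ) {t : ℝ} (ht : s < t) (x : Euc d)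
    (i j : Fin d) :
    hess d (diffQuot u k h t) x i j = diffQuot (fun t x => hess d (u t) x i j) k h t x := by
  have hu₂ := hu.xdiff t ht
  have hshift := (hu.comp_add_right (h • EuclideanSpace.single k 1)).xdiff t ht
  have hneg : ContDiff ℝ 2 fun y => -1 * u t y := contDiff_const.mul hu₂
  have hsum := hshift.add hneg
  simp only [diffQuot_eq_add, hess_mul contDiff_const hsum, hess_add hshift hneg,
    hess_mul contDiff_const hu₂, hess_const, hess_comp_add_right, grad_const, Pi.add_apply,
    Pi.zero_apply, mul_zero, zero_mul, add_zero]

/-- The terms produced by differentiating the coefficients of the equation for `u` along the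
`k`-th axis: `∂ₖu` solves the equation with this right-hand side. -/
def gradSource (Q : ℝ → Euc d → Fin d → Fin d → ℝ) (b : ℝ → Euc d → Fin d → ℝ)
    (u : ℝ → Euc d → ℝ) (t : ℝ) (x : Euc d) (k : Fin d) : ℝ :=
  (∑ i, ∑ j, grad (fun y => Q t y i j) x k * hess d (u t) x i j)
    + ∑ j, grad (fun y => b t y j) x k * grad (u t) x j

theorem parabolicOp_diffQuot {f : Euc d → ℝ}
    (hu : IsClassicalSolution d Q b (fun _ _ => 0) s f u) (k : Fin d) (h : ℝ) {t : ℝ}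
    (ht : s < t) (x : Euc d) :
    parabolicOp Q b (diffQuot u k h) t x =
      (∑ i, ∑ j, diffQuot (fun t y => Q t y i j) k h t x
          * hess d (u t) (x + h • EuclideanSpace.single k 1) i j)
        + ∑ j, diffQuot (fun t y => b t y j) k h t x
          * grad (u t) (x + h • EuclideanSpace.single k 1) j := by
  have hpde : ∀ y, deriv (fun τ => u τ y) t =
      (∑ i, ∑ j, Q t y i j * hess d (u t) y i j) + ∑ j, b t y j * grad (u t) y j := fun y => by
    rw [hu.pde t ht y, Aop_zero_eq]
  have hsplit : diffQuot (fun t x => deriv (fun τ => u τ x) t) k h t x =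
      diffQuot (fun t y => ∑ i, ∑ j, Q t y i j * hess d (u t) y i j) k h t x
        + diffQuot (fun t y => ∑ j, b t y j * grad (u t) y j) k h t x := by
    simp only [diffQuot, hpde]
    ring
  rw [parabolicOp_eq, deriv_diffQuot hu.isC12 k h ht, hsplit]
  simp only [diffQuot_sum, diffQuot_mul, hess_diffQuot hu.isC12 k h ht,
    grad_diffQuot hu.isC12 k h ht, Finset.sum_add_distrib]
  ring

theorem exists_diffQuot_eq_grad {F : ℝ → Euc d → ℝ} {t : ℝ} (hF : Differentiable ℝ (F t))
    (k : Fin d) {h : ℝ} (hh : 0 < h) (x : Euc d) :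
    ∃ θ ∈ Ioo 0 h,
      diffQuot F k h t x = grad (F t) (x + θ • EuclideanSpace.single k 1) k := by
  have hline := hasDerivAt_comp_line hF x (EuclideanSpace.single k 1)
  simp only [PiLp.single_apply, ite_mul, one_mul, zero_mul, Finset.sum_ite_eq',
    Finset.mem_univ, if_true] at hline
  obtain ⟨θ, hθ, hslope⟩ := exists_hasDerivAt_eq_slope _ _ hh
    (fun τ _ => (hline τ).continuousAt.continuousWithinAt) fun τ _ => hline τ
  refine ⟨θ, hθ, ?_⟩
  rw [hslope, diffQuot, zero_smul, add_zero, sub_zero, inv_mul_eq_div]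

theorem tendsto_shift (t : ℝ) (x e : Euc d) {ι : Type*} {l : Filter ι} {z : ι → ℝ × Euc d}
    {θ : ι → ℝ} (hz : Tendsto z l (𝓝 (t, x))) (hθ : Tendsto θ l (𝓝 0)) :
    Tendsto (fun p => ((z p).1, (z p).2 + θ p • e)) l (𝓝 (t, x)) := by
  simpa using hz.fst_nhds.prodMk_nhds (hz.snd_nhds.add (hθ.smul_const e))

theorem tendsto_diffQuot {F : ℝ → Euc d → ℝ} (hF : ∀ t, s < t → Differentiable ℝ (F t))
    (k : Fin d) (hcont : ContinuousOn (fun p : ℝ × Euc d => grad (F p.1) p.2 k) (Ioi s ×ˢ univ))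
    {t : ℝ} (ht : s < t) (x : Euc d) :
    Tendsto (fun p : ℝ × ℝ × Euc d => diffQuot F k p.1 p.2.1 p.2.2) (𝓝[>] 0 ×ˢ 𝓝 (t, x))
      (𝓝 (grad (F t) x k)) := by
  have hmean : ∀ p : ℝ × ℝ × Euc d, ∃ θ, 0 < p.1 → s < p.2.1 → θ ∈ Ioo 0 p.1 ∧
      diffQuot F k p.1 p.2.1 p.2.2 =
        grad (F p.2.1) (p.2.2 + θ • EuclideanSpace.single k 1) k := fun p => by
    by_cases hp : 0 < p.1 ∧ s < p.2.1
    · obtain ⟨θ, hθ, heq⟩ := exists_diffQuot_eq_grad (hF _ hp.2) k hp.1 p.2.2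
      exact ⟨θ, fun _ _ => ⟨hθ, heq⟩⟩
    · exact ⟨0, fun h₁ h₂ => absurd ⟨h₁, h₂⟩ hp⟩
  choose θ hθ using hmean
  have hpos : ∀ᶠ p : ℝ × ℝ × Euc d in 𝓝[>] 0 ×ˢ 𝓝 (t, x), 0 < p.1 :=
    tendsto_fst.eventually self_mem_nhdsWithin
  have htime := C12Approx.eventually_time_gt (𝓝[>] 0) ht x
  have hθ₀ : Tendsto θ (𝓝[>] 0 ×ˢ 𝓝 (t, x)) (𝓝 0) := by
    refine tendsto_of_tendsto_of_tendsto_of_le_of_le' tendsto_const_nhds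
      (tendsto_fst.mono_right nhdsWithin_le_nhds) ?_ ?_
    · filter_upwards [hpos, htime] with p h₁ h₂ using (hθ p h₁ h₂).1.1.le
    · filter_upwards [hpos, htime] with p h₁ h₂ using (hθ p h₁ h₂).1.2.le
  refine ((hcont.continuousAt (Ioi_prod_univ_mem_nhds ht x)).tendsto.comp
    (tendsto_shift t x (EuclideanSpace.single k 1) tendsto_snd hθ₀)).congr' ?_
  filter_upwards [hpos, htime] with p h₁ h₂ using (hθ p h₁ h₂).2.symm

/-- Elliptic coefficients with continuous first derivatives in space. -/
structure SmoothEllipticCoeffs (J : Set ℝ) (Q : ℝ → Euc d → Fin d → Fin d → ℝ)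
    (b : ℝ → Euc d → Fin d → ℝ) : Prop extends EllipticCoeffs J Q b where
  diff_diffusion : ∀ t ∈ J, ∀ i j, Differentiable ℝ fun y => Q t y i j
  diff_drift : ∀ t ∈ J, ∀ j, Differentiable ℝ fun y => b t y j
  grad_diffusion_cont : ∀ i j,
    ContinuousOn (fun p : ℝ × Euc d => grad (fun y => Q p.1 y i j) p.2) (J ×ˢ univ)
  grad_drift_cont : ∀ j,
    ContinuousOn (fun p : ℝ × Euc d => grad (fun y => b p.1 y j) p.2) (J ×ˢ univ)

theorem SmoothEllipticCoeffs.mono {J J' : Set ℝ} (hc : SmoothEllipticCoeffs J Q b)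
    (hJ : J' ⊆ J) : SmoothEllipticCoeffs J' Q b where
  toEllipticCoeffs := hc.toEllipticCoeffs.mono hJ
  diff_diffusion t ht := hc.diff_diffusion t (hJ ht)
  diff_drift t ht := hc.diff_drift t (hJ ht)
  grad_diffusion_cont i j := (hc.grad_diffusion_cont i j).mono (prod_mono_left hJ)
  grad_drift_cont j := (hc.grad_drift_cont j).mono (prod_mono_left hJ)

namespace C12Approx

variable {f : Euc d → ℝ}

theorem partialDeriv (hc : SmoothEllipticCoeffs (Ioi s) Q b)
    (hu : IsClassicalSolution d Q b (fun _ _ => 0) s f u) (k : Fin d) :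
    C12Approx Q b s (diffQuot u k) (fun t x => grad (u t) x k) (fun t x => hess d (u t) x k)
      (fun t x => gradSource Q b u t x k) where
  isC12 := hu.isC12.diffQuot k
  tendsto_val _ ht x := tendsto_diffQuot
    (fun t ht => (hu.xdiff t ht).differentiable two_ne_zero) k (hu.isC12.grad_apply_cont k) ht x
  tendsto_grad _ ht x := tendsto_pi_nhds.2 fun i =>
    (tendsto_diffQuot (fun t ht => differentiable_grad (hu.xdiff t ht) i) k
      (hu.isC12.hess_apply_cont k i) ht x).congr' <| (eventually_time_gt _ ht x).mono fun p hp =>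
        (grad_diffQuot hu.isC12 k p.1 hp p.2.2 i).symm
  tendsto_op t ht x := by
    have hshift : Tendsto (fun p : ℝ × ℝ × Euc d =>
        (p.2.1, p.2.2 + p.1 • EuclideanSpace.single k 1)) (𝓝[>] 0 ×ˢ 𝓝 (t, x)) (𝓝 (t, x)) :=
      tendsto_shift t x _ tendsto_snd (tendsto_fst.mono_right nhdsWithin_le_nhds)
    have hnhds := Ioi_prod_univ_mem_nhds ht x
    refine Tendsto.congr' ((eventually_time_gt _ ht x).mono fun p hp =>
      (parabolicOp_diffQuot hu k p.1 hp p.2.2).symm) (Tendsto.add ?_ ?_)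
    · exact tendsto_finsetSum _ fun i _ => tendsto_finsetSum _ fun j _ =>
        (tendsto_diffQuot (fun t ht => hc.diff_diffusion t ht i j) k
          (continuousOn_pi.1 (hc.grad_diffusion_cont i j) k) ht x).mul
          (((hu.isC12.hess_apply_cont i j).continuousAt hnhds).tendsto.comp hshift)
    · exact tendsto_finsetSum _ fun j _ =>
        (tendsto_diffQuot (fun t ht => hc.diff_drift t ht j) k
          (continuousOn_pi.1 (hc.grad_drift_cont j) k) ht x).mul
          (((hu.isC12.grad_apply_cont j).continuousAt hnhds).tendsto.comp hshift)

theorem sq_norm_fderiv (hc : SmoothEllipticCoeffs (Ioi s) Q b)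
    (hu : IsClassicalSolution d Q b (fun _ _ => 0) s f u) :
    C12Approx Q b s (fun h t x => ∑ k, diffQuot u k h t x * diffQuot u k h t x)
      (fun t x => ‖fderiv ℝ (u t) x‖ ^ 2)
      (fun t x => (2 : ℝ) • ∑ k, grad (u t) x k • hess d (u t) x k)
      (fun t x => 2 * ∑ k, grad (u t) x k * gradSource Q b u t x k
        - 2 * ∑ k, coeffForm (Q t x) (hess d (u t) x k) (hess d (u t) x k)) := by
  convert C12Approx.sum hc.toEllipticCoeffs Finset.univ fun k _ =>
    (partialDeriv hc hu k).mul hc.toEllipticCoeffs (partialDeriv hc hu k) using 1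
  · funext t x
    simp only [sq_norm_fderiv_eq_sum_grad, ← sq]
  · funext t x
    simp only [two_smul, Finset.sum_add_distrib]
  · funext t x
    simp only [two_mul, Finset.sum_sub_distrib, Finset.sum_add_distrib]

end C12Approx

end DifferenceQuotient

/-! ### Doubling of variables -/

section Coupling

variable {d : ℕ} {Qx Qy S Hx Hy T : Fin d → Fin d → ℝ} {n : Fin d → ℝ} {ν ρ ℓ κ : ℝ}

theorem coeffForm_comm (hQ : ∀ i j, Qx i j = Qx j i) (ξ η : Fin d → ℝ) :
    coeffForm Qx ξ η = coeffForm Qx η ξ := by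
  rw [coeffForm_apply, coeffForm_apply, Finset.sum_comm]
  exact Finset.sum_congr rfl fun i _ => Finset.sum_congr rfl fun j _ => by rw [hQ j i]; ring

theorem posSemidef_fromBlocks (hx : ∀ i j, Qx i j = Qx j i) (hy : ∀ i j, Qy i j = Qy j i)
    (hS : ∀ i j, S i j = S j i)
    (hform : ∀ ξ η, 0 ≤ coeffForm Qx ξ ξ + 2 * coeffForm S ξ η + coeffForm Qy η η) :
    (Matrix.fromBlocks (.of Qx) (.of S) (.of S) (.of Qy)).PosSemidef := by
  refine .of_dotProduct_mulVec_nonneg ?_ fun w => ?_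
  · refine Matrix.IsHermitian.fromBlocks ?_ ?_ ?_ <;> ext i j <;>
      simp only [Matrix.conjTranspose_apply, Matrix.of_apply, star_trivial]
    exacts [(hx i j).symm, hS j i, (hy i j).symm]
  · have hw := hform (w ∘ Sum.inl) (w ∘ Sum.inr)
    have hcross := coeffForm_comm hS (w ∘ Sum.inl) (w ∘ Sum.inr)
    simp only [coeffForm, Matrix.toBilin'_apply'] at hw hcross
    have hsplit : w = Sum.elim (w ∘ Sum.inl) (w ∘ Sum.inr) := (Sum.elim_comp_inl_inr w).symm
    rw [star_trivial, Matrix.fromBlocks_mulVec, hsplit, sumElim_dotProduct_sumElim,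
      Sum.elim_comp_inl, Sum.elim_comp_inr, dotProduct_add, dotProduct_add]
    linarith

/-- `Hx` and `Hy` stand for the Hessians at a maximum of a doubled function, `T` for that of the
penalty; the free block `S` couples the two diffusions. -/
theorem sum_mul_sub_sum_mul_le_of_fromBlocks
    (hP : (Matrix.fromBlocks (.of Qx) (.of S) (.of S) (.of Qy)).PosSemidef)
    (hH : ∀ ξ η, coeffForm Hx ξ ξ - coeffForm Hy η η ≤
      coeffForm T (ξ - η) (ξ - η) + κ * (ξ ⬝ᵥ ξ)) :
    (∑ i, ∑ j, Qx i j * Hx i j) - ∑ i, ∑ j, Qy i j * Hy i j ≤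
      (∑ i, ∑ j, (Qx i j + Qy i j - 2 * S i j) * T i j) + κ * ∑ i, Qx i i := by
  have htest := sum_mul_nonpos_of_posSemidef hP
    (B := Matrix.fromBlocks (.of Hx - .of T - κ • 1) (.of T) (.of T) (-.of Hy - .of T)) fun w => by
      have hw := hH (w ∘ Sum.inl) (w ∘ Sum.inr)
      simp only [coeffForm_apply, dotProduct, Pi.sub_apply, Function.comp_apply, mul_sub, sub_mul,
        Finset.sum_sub_distrib] at hw
      simp only [Fintype.sum_sum_type, Matrix.fromBlocks_apply₁₁, Matrix.fromBlocks_apply₁₂,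
        Matrix.fromBlocks_apply₂₁, Matrix.fromBlocks_apply₂₂, Matrix.sub_apply, Matrix.neg_apply,
        Matrix.of_apply, Matrix.smul_apply, Matrix.one_apply, smul_eq_mul, mul_sub, mul_neg,
        mul_ite, mul_one, mul_zero, Finset.sum_add_distrib, Finset.sum_sub_distrib,
        Finset.sum_neg_distrib, Finset.sum_ite_eq, Finset.mem_univ, if_true, Finset.mul_sum] at hw ⊢
      simp only [mul_comm, mul_left_comm, mul_assoc] at hw ⊢
      linarith
  simp only [Fintype.sum_sum_type, Matrix.fromBlocks_apply₁₁, Matrix.fromBlocks_apply₁₂,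
    Matrix.fromBlocks_apply₂₁, Matrix.fromBlocks_apply₂₂, Matrix.sub_apply, Matrix.neg_apply,
    Matrix.of_apply, Matrix.smul_apply, Matrix.one_apply, smul_eq_mul, mul_sub, mul_neg, mul_ite,
    mul_one, mul_zero, Finset.sum_add_distrib, Finset.sum_sub_distrib, Finset.sum_neg_distrib,
    Finset.sum_ite_eq, Finset.mem_univ, if_true, ← Finset.sum_mul] at htest
  simp only [add_mul, sub_mul, two_mul, Finset.sum_add_distrib, Finset.sum_sub_distrib]
  linarith

theorem abs_coeffForm_sub_le {c : ℝ} (hQ : ∀ i j, |Qx i j - Qy i j| ≤ c) (σ ζ : Fin d → ℝ) :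
    |coeffForm Qx σ ζ - coeffForm Qy σ ζ| ≤ c * ((∑ i, |σ i|) * ∑ j, |ζ j|) := by
  rw [Finset.sum_mul_sum]
  simp only [coeffForm_apply, ← Finset.sum_sub_distrib, Finset.mul_sum]
  refine (Finset.abs_sum_le_sum_abs _ _).trans (Finset.sum_le_sum fun i _ =>
    (Finset.abs_sum_le_sum_abs _ _).trans (Finset.sum_le_sum fun j _ => ?_))
  rw [← sub_mul, ← sub_mul, abs_mul, abs_mul, mul_assoc]
  exact mul_le_mul_of_nonneg_right (hQ i j) (by positivity)

theorem sq_sum_abs_le (σ : Fin d → ℝ) : (∑ i, |σ i|) ^ 2 ≤ d * (σ ⬝ᵥ σ) := by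
  have h := sq_sum_le_card_mul_sum_sq (s := Finset.univ) (f := fun i => |σ i|)
  simpa [dotProduct, sq] using h

theorem mul_sum_abs_mul_sum_abs_le (ℓ : ℝ) (σ ζ : Fin d → ℝ) :
    ℓ * ((∑ i, |σ i|) * ∑ j, |ζ j|) ≤ (ℓ ^ 2 * d ^ 2 * (σ ⬝ᵥ σ) + ζ ⬝ᵥ ζ) / 2 := by
  have hσ : 0 ≤ σ ⬝ᵥ σ := dotProduct_self_star_nonneg σ
  have hζ : 0 ≤ ζ ⬝ᵥ ζ := dotProduct_self_star_nonneg ζ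
  have hprod : ((∑ i, |σ i|) * ∑ j, |ζ j|) ^ 2 ≤ (d * (σ ⬝ᵥ σ)) * (d * (ζ ⬝ᵥ ζ)) := by
    rw [mul_pow]
    exact mul_le_mul (sq_sum_abs_le σ) (sq_sum_abs_le ζ) (sq_nonneg _) (by positivity)
  refine (abs_le_of_sq_le_sq' ?_ (by positivity)).2
  rw [mul_pow]
  nlinarith [mul_le_mul_of_nonneg_left hprod (sq_nonneg ℓ),
    sq_nonneg (ℓ ^ 2 * d ^ 2 * (σ ⬝ᵥ σ) - ζ ⬝ᵥ ζ)]

/-- The off-diagonal block of the coupled diffusion matrix of the Ishii–Lions argument. Compared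
with the synchronous coupling `(Qx + Qy) / 2`, the diffusion of `x - y` gains `ν n ⊗ n`, up to an
error `2 ρ` that absorbs the oscillation of the coefficients. -/
def couplingBlock (Qx Qy : Fin d → Fin d → ℝ) (ν ρ : ℝ) (n : Fin d → ℝ) (i j : Fin d) : ℝ :=
  (Qx i j + Qy i j) / 2 - (if i = j then ρ else 0) - ν / 2 * n i * n j

theorem couplingBlock_comm (hx : ∀ i j, Qx i j = Qx j i) (hy : ∀ i j, Qy i j = Qy j i)
    (i j : Fin d) : couplingBlock Qx Qy ν ρ n i j = couplingBlock Qx Qy ν ρ n j i := by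
  simp only [couplingBlock, hx i j, hy i j, eq_comm (a := i)]
  ring

theorem coeffForm_couplingBlock (ξ η : Fin d → ℝ) :
    coeffForm (couplingBlock Qx Qy ν ρ n) ξ η =
      (coeffForm Qx ξ η + coeffForm Qy ξ η) / 2 - ρ * (ξ ⬝ᵥ η)
        - ν / 2 * ((n ⬝ᵥ ξ) * (n ⬝ᵥ η)) := by
  have hscalar : ρ * (ξ ⬝ᵥ η) = ∑ i, ∑ j, (if i = j then ρ else 0) * ξ i * η j := by
    simp [dotProduct, Finset.mul_sum, mul_assoc]
  have hrank : (n ⬝ᵥ ξ) * (n ⬝ᵥ η) = ∑ i, ∑ j, n i * ξ i * (n j * η j) :=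
    Finset.sum_mul_sum ..
  rw [hscalar, hrank]
  simp only [coeffForm_apply, Finset.mul_sum, Finset.sum_div, ← Finset.sum_add_distrib,
    ← Finset.sum_sub_distrib, couplingBlock]
  exact Finset.sum_congr rfl fun i _ => Finset.sum_congr rfl fun j _ => by ring

theorem coupling_form_eq (hx : ∀ i j, Qx i j = Qx j i) (hy : ∀ i j, Qy i j = Qy j i)
    (ξ η : Fin d → ℝ) :
    coeffForm Qx ξ ξ + 2 * coeffForm (couplingBlock Qx Qy ν ρ n) ξ η + coeffForm Qy η η =
      (coeffForm Qx (ξ + η) (ξ + η) + coeffForm Qy (ξ + η) (ξ + η)) / 2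
      + (coeffForm Qx (ξ + η) (ξ - η) - coeffForm Qy (ξ + η) (ξ - η)) / 2
      - ρ / 2 * ((ξ + η) ⬝ᵥ (ξ + η) - (ξ - η) ⬝ᵥ (ξ - η))
      - ν / 4 * ((n ⬝ᵥ (ξ + η)) ^ 2 - (n ⬝ᵥ (ξ - η)) ^ 2) := by
  simp only [coeffForm_couplingBlock, map_add, map_sub, LinearMap.add_apply, dotProduct_add,
    dotProduct_sub, add_dotProduct, sub_dotProduct, coeffForm_comm hx η ξ, coeffForm_comm hy η ξ,
    dotProduct_comm η ξ]
  ring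

theorem coupling_form_nonneg (hν : 0 ≤ ν) (hρ : 0 ≤ ρ) (hn : n ⬝ᵥ n = 1)
    (hx : ∀ i j, Qx i j = Qx j i) (hy : ∀ i j, Qy i j = Qy j i)
    (hQx : ∀ ξ, ν * (ξ ⬝ᵥ ξ) ≤ coeffForm Qx ξ ξ) (hQy : ∀ ξ, ν * (ξ ⬝ᵥ ξ) ≤ coeffForm Qy ξ ξ)
    (hosc : ∀ i j, |Qx i j - Qy i j| ≤ ℓ * ρ) (hρν : ρ ≤ ν / 2) (hρℓ : ρ * ℓ ^ 2 * d ^ 2 ≤ ν)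
    (ξ η : Fin d → ℝ) :
    0 ≤ coeffForm Qx ξ ξ + 2 * coeffForm (couplingBlock Qx Qy ν ρ n) ξ η + coeffForm Qy η η := by
  rw [coupling_form_eq hx hy]
  set σ := ξ + η
  set ζ := ξ - η
  have hσ : 0 ≤ σ ⬝ᵥ σ := dotProduct_self_star_nonneg σ
  have hζ : 0 ≤ ρ * (ζ ⬝ᵥ ζ) := mul_nonneg hρ (dotProduct_self_star_nonneg ζ)
  have hCS : ν * (n ⬝ᵥ σ) ^ 2 ≤ ν * (σ ⬝ᵥ σ) := by
    have h := Finset.sum_mul_sq_le_sq_mul_sq Finset.univ n σ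
    have hn' : ∑ i, n i ^ 2 = 1 := by simpa [dotProduct, sq] using hn
    rw [hn', one_mul] at h
    simpa [dotProduct, sq] using mul_le_mul_of_nonneg_left h hν
  have hcross := (abs_le.1 (abs_coeffForm_sub_le hosc σ ζ)).1
  have hAMGM := mul_le_mul_of_nonneg_left (mul_sum_abs_mul_sum_abs_le ℓ σ ζ) hρ
  have hsq : 0 ≤ ν * (n ⬝ᵥ ζ) ^ 2 := by positivity
  nlinarith [hQx σ, hQy σ, mul_le_mul_of_nonneg_right hρℓ hσ, mul_le_mul_of_nonneg_right hρν hσ]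

theorem posSemidef_coupling (hν : 0 ≤ ν) (hρ : 0 ≤ ρ) (hn : n ⬝ᵥ n = 1)
    (hx : ∀ i j, Qx i j = Qx j i) (hy : ∀ i j, Qy i j = Qy j i)
    (hQx : ∀ ξ, ν * (ξ ⬝ᵥ ξ) ≤ coeffForm Qx ξ ξ) (hQy : ∀ ξ, ν * (ξ ⬝ᵥ ξ) ≤ coeffForm Qy ξ ξ)
    (hosc : ∀ i j, |Qx i j - Qy i j| ≤ ℓ * ρ) (hρν : ρ ≤ ν / 2) (hρℓ : ρ * ℓ ^ 2 * d ^ 2 ≤ ν) :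
    (Matrix.fromBlocks (.of Qx) (.of (couplingBlock Qx Qy ν ρ n))
      (.of (couplingBlock Qx Qy ν ρ n)) (.of Qy)).PosSemidef :=
  posSemidef_fromBlocks hx hy (couplingBlock_comm hx hy)
    (coupling_form_nonneg hν hρ hn hx hy hQx hQy hosc hρν hρℓ)

/-- The array of the quadratic form `ζ ↦ A (|ζ|² - ⟨n, ζ⟩²) - B |ζ|²`, the Hessian of a radial
function in the direction `n`. -/
def radialHess (A B : ℝ) (n : Fin d → ℝ) (i j : Fin d) : ℝ :=
  (if i = j then A - B else 0) - A * (n i * n j)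

theorem coeffForm_radialHess (A B : ℝ) (ζ : Fin d → ℝ) :
    coeffForm (radialHess A B n) ζ ζ = A * (ζ ⬝ᵥ ζ - (n ⬝ᵥ ζ) ^ 2) - B * (ζ ⬝ᵥ ζ) := by
  have hrank : (n ⬝ᵥ ζ) ^ 2 = ∑ i, ∑ j, n i * n j * ζ i * ζ j := by
    rw [sq, dotProduct, Finset.sum_mul_sum]
    exact Finset.sum_congr rfl fun i _ => Finset.sum_congr rfl fun j _ => by ring
  have hscalar : (A - B) * (ζ ⬝ᵥ ζ) = ∑ i, ∑ j, (if i = j then A - B else 0) * ζ i * ζ j := by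
    simp [dotProduct, Finset.mul_sum, mul_assoc]
  have hform : coeffForm (radialHess A B n) ζ ζ = (A - B) * (ζ ⬝ᵥ ζ) - A * (n ⬝ᵥ ζ) ^ 2 := by
    rw [hrank, hscalar]
    simp only [coeffForm_apply, Finset.mul_sum, ← Finset.sum_sub_distrib, radialHess]
    exact Finset.sum_congr rfl fun i _ => Finset.sum_congr rfl fun j _ => by ring
  rw [hform]
  ring

theorem sum_coupling_mul_radialHess (hn : n ⬝ᵥ n = 1) (A B : ℝ) :
    ∑ i, ∑ j, (Qx i j + Qy i j - 2 * couplingBlock Qx Qy ν ρ n i j) * radialHess A B n i j =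
      2 * ρ * (A * (d - 1) - B * d) - ν * B := by
  have hterm : ∀ i j,
      (Qx i j + Qy i j - 2 * couplingBlock Qx Qy ν ρ n i j) * radialHess A B n i j =
      (if i = j then 2 * ρ * (A - B) + (ν * (A - B) - 2 * ρ * A) * (n i * n j) else 0)
        - ν * A * ((n i * n i) * (n j * n j)) := by
    intro i j
    unfold couplingBlock radialHess
    split_ifs with hij
    · subst hij
      ring
    · ring
  have hn' : ∑ i, n i * n i = 1 := hn
  simp only [hterm, Finset.sum_sub_distrib, Finset.sum_ite_eq, Finset.mem_univ, if_true,
    Finset.sum_add_distrib, ← Finset.mul_sum, ← Finset.sum_mul, hn', Finset.sum_const,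
    Finset.card_univ, Fintype.card_fin, nsmul_eq_mul]
  ring

end Coupling

section DoubledMax

section InnerProductSpace

variable {E : Type*} [NormedAddCommGroup E] [InnerProductSpace ℝ E]

theorem norm_add_smul_sq (p ζ : E) (τ : ℝ) :
    ‖p + τ • ζ‖ ^ 2 = ‖p‖ ^ 2 + 2 * τ * inner ℝ p ζ + τ ^ 2 * ‖ζ‖ ^ 2 := by
  rw [norm_add_sq_real, real_inner_smul_right, norm_smul, mul_pow, Real.norm_eq_abs, sq_abs]
  ring

theorem eventually_norm_add_smul_le {p : E} (hp : 0 < ‖p‖) (ζ : E) :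
    ∀ᶠ τ : ℝ in 𝓝 0, ‖p + τ • ζ‖ ≤ ‖p‖ + τ * (inner ℝ p ζ / ‖p‖)
      + τ ^ 2 * (‖ζ‖ ^ 2 - (inner ℝ p ζ / ‖p‖) ^ 2) / ‖p‖ := by
  set a := inner ℝ p ζ / ‖p‖ with ha
  have hinner : inner ℝ p ζ = ‖p‖ * a := (mul_div_cancel₀ _ hp.ne').symm
  have hnormal : a ^ 2 ≤ ‖ζ‖ ^ 2 := by
    refine sq_le_sq' ?_ ?_
    · rw [ha, le_div_iff₀ hp]
      linarith [(abs_le.1 (abs_real_inner_le_norm p ζ)).1]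
    · rw [ha, div_le_iff₀ hp, mul_comm]
      exact real_inner_le_norm p ζ
  have hlim : Tendsto (fun τ : ℝ => τ * a) (𝓝 0) (𝓝 0) := by
    simpa using (continuous_mul_const a).tendsto 0
  filter_upwards [hlim.eventually_const_lt (show -(‖p‖ / 2) < 0 by linarith)] with τ hτ
  have hw : 0 ≤ τ ^ 2 * (‖ζ‖ ^ 2 - a ^ 2) / ‖p‖ := by
    have := sub_nonneg.2 hnormal
    positivity
  have hwp : τ ^ 2 * (‖ζ‖ ^ 2 - a ^ 2) = τ ^ 2 * (‖ζ‖ ^ 2 - a ^ 2) / ‖p‖ * ‖p‖ :=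
    (div_mul_cancel₀ _ hp.ne').symm
  refine (abs_le_of_sq_le_sq' ?_ (by linarith)).2
  rw [norm_add_smul_sq, hinner]
  nlinarith

end InnerProductSpace

variable {d : ℕ} {g : Euc d → ℝ} {x y x₁ : Euc d} {L M K ν Λ : ℝ}

/-- The penalty `L (|z₁ - z₂| - M |z₁ - z₂|² / 2) + K |z₁ - x₁|²` subtracted from a doubled
function: a concave modulus of continuity plus a localization near `x₁`. -/
def doublingPenalty (L M K : ℝ) (x₁ : Euc d) (z : Euc d × Euc d) : ℝ :=
  L * (‖z.1 - z.2‖ - M / 2 * ‖z.1 - z.2‖ ^ 2) + K * ‖z.1 - x₁‖ ^ 2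

theorem continuous_doublingPenalty : Continuous (doublingPenalty L M K x₁) := by
  unfold doublingPenalty
  fun_prop

theorem eventually_doublingPenalty_le (hL : 0 ≤ L) (hxy : 0 < ‖x - y‖) (ξ η : Euc d) :
    ∀ᶠ τ : ℝ in 𝓝 0, doublingPenalty L M K x₁ (x + τ • ξ, y + τ • η) ≤
      doublingPenalty L M K x₁ (x, y)
      + (L * (1 - M * ‖x - y‖) * (inner ℝ (x - y) (ξ - η) / ‖x - y‖)
        + 2 * K * inner ℝ (x - x₁) ξ) * τ
      + (2 * L / ‖x - y‖ * (‖ξ - η‖ ^ 2 - (inner ℝ (x - y) (ξ - η) / ‖x - y‖) ^ 2)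
        - L * M * ‖ξ - η‖ ^ 2 + 2 * K * ‖ξ‖ ^ 2) / 2 * τ ^ 2 := by
  filter_upwards [eventually_norm_add_smul_le hxy (ξ - η)] with τ hτ
  have hdiff : x + τ • ξ - (y + τ • η) = x - y + τ • (ξ - η) := by rw [smul_sub]; abel
  have hloc : x + τ • ξ - x₁ = x - x₁ + τ • ξ := by abel
  have hinner : inner ℝ (x - y) (ξ - η) = ‖x - y‖ * (inner ℝ (x - y) (ξ - η) / ‖x - y‖) :=
    (mul_div_cancel₀ _ hxy.ne').symm
  simp only [doublingPenalty, hdiff, hloc, norm_add_smul_sq (x - y), norm_add_smul_sq (x - x₁)]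
  nth_rw 1 [hinner]
  linear_combination L * hτ

theorem first_second_order_of_isLocalMax_doubled (hg : ContDiff ℝ 2 g) (hL : 0 ≤ L)
    (hxy : 0 < ‖x - y‖)
    (hmax : IsLocalMax (fun z : Euc d × Euc d => g z.1 - g z.2 - doublingPenalty L M K x₁ z)
      (x, y)) (ξ η : Euc d) :
    (∑ i, ξ i * grad g x i) - (∑ i, η i * grad g y i) =
        L * (1 - M * ‖x - y‖) * (inner ℝ (x - y) (ξ - η) / ‖x - y‖)
          + 2 * K * inner ℝ (x - x₁) ξ ∧
      (∑ i, ∑ j, ξ i * ξ j * hess d g x i j) - (∑ i, ∑ j, η i * η j * hess d g y i j) ≤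
        2 * L / ‖x - y‖ * (‖ξ - η‖ ^ 2 - (inner ℝ (x - y) (ξ - η) / ‖x - y‖) ^ 2)
          - L * M * ‖ξ - η‖ ^ 2 + 2 * K * ‖ξ‖ ^ 2 := by
  have hdiff := hg.differentiable two_ne_zero
  have hline : Tendsto (fun τ : ℝ => (x + τ • ξ, y + τ • η)) (𝓝 0) (𝓝 (x, y)) := by
    have hcont : Continuous fun τ : ℝ => (x + τ • ξ, y + τ • η) := by fun_prop
    simpa using hcont.tendsto 0
  have hcombine : ∀ {A B P P' u v : ℝ}, A - P' ≤ B - P → P' ≤ P + u + v → A ≤ B + u + v :=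
    fun _ _ => by linarith
  have htest := deriv_eq_and_second_deriv_le_of_eventually_le
    (f := fun τ : ℝ => g (x + τ • ξ) - g (y + τ • η))
    (fun τ => (hasDerivAt_comp_line hdiff x ξ τ).sub (hasDerivAt_comp_line hdiff y η τ))
    ((hasDerivAt_grad_comp_line hg x ξ 0).sub (hasDerivAt_grad_comp_line hg y η 0)) (by
      filter_upwards [hline hmax, eventually_doublingPenalty_le (M := M) (K := K) (x₁ := x₁) hL hxy
        ξ η] with τ hτ hpen
      simp only [zero_smul, add_zero]
      exact hcombine hτ hpen)
  simpa using htest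

/-- Bounds on the coefficients of an elliptic operator over a set of points, as needed to compare
its values at two points: uniform ellipticity, size, and Lipschitz continuity of the diffusion. -/
structure CoeffBoundsOn (ν Λ : ℝ) (X : Set (Euc d)) (q : Euc d → Fin d → Fin d → ℝ)
    (β : Euc d → Fin d → ℝ) : Prop where
  symm : ∀ x ∈ X, ∀ i j, q x i j = q x j i
  elliptic : ∀ x ∈ X, ∀ ξ, ν * (ξ ⬝ᵥ ξ) ≤ coeffForm (q x) ξ ξ
  trace_le : ∀ x ∈ X, ∑ i, q x i i ≤ Λ
  drift_le : ∀ x ∈ X, ‖(WithLp.toLp 2 (β x) : Euc d)‖ ≤ Λ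
  lipschitz : ∀ x ∈ X, ∀ y ∈ X, ∀ i j, |q x i j - q y i j| ≤ Λ * ‖x - y‖

/-- Compatibility of the slope `L`, the concavity `M`, the localization strength `K` and the
largest separation `ρ₀` of a doubling argument with the ellipticity constant `ν` and the bound `Λ`
on the coefficients: the gain `L M ν` from concavity beats every error term. -/
structure DoublingParams (d : ℕ) (ν Λ L M K ρ₀ : ℝ) : Prop where
  ellipticity_pos : 0 < ν
  slope_pos : 0 < L
  concavity_nonneg : 0 ≤ M
  localization_nonneg : 0 ≤ K
  separation_pos : 0 < ρ₀
  gain : 4 * L * d + 2 * L * Λ + 4 * K * Λ < L * M * ν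
  concavity_mul_le : M * ρ₀ ≤ 1
  separation_le : ρ₀ ≤ ν / 2
  separation_mul_le : ρ₀ * Λ ^ 2 * d ^ 2 ≤ ν

theorem dotProduct_unit_eq_inner (x y ξ : Euc d) :
    (fun i => (x i - y i) / ‖x - y‖) ⬝ᵥ ξ = inner ℝ (x - y) ξ / ‖x - y‖ := by
  simp only [PiLp.inner_apply, dotProduct, Finset.sum_div, PiLp.sub_apply, RCLike.inner_apply,
    conj_trivial]
  exact Finset.sum_congr rfl fun i _ => by ring

theorem drift_sub_le_of_isLocalMax_doubled (hg : ContDiff ℝ 2 g) (hL : 0 ≤ L) (hM : 0 ≤ M)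
    (hK : 0 ≤ K) (hxy : 0 < ‖x - y‖) (hMxy : M * ‖x - y‖ ≤ 1) (hx₁ : ‖x - x₁‖ ≤ 1)
    (hmax : IsLocalMax (fun z : Euc d × Euc d => g z.1 - g z.2 - doublingPenalty L M K x₁ z)
      (x, y)) {βx βy : Euc d} (hβx : ‖βx‖ ≤ Λ) (hβy : ‖βy‖ ≤ Λ) :
    (∑ i, βx i * grad g x i) - ∑ i, βy i * grad g y i ≤ 2 * L * Λ + 2 * K * Λ := by
  rw [(first_second_order_of_isLocalMax_doubled hg hL hxy hmax βx βy).1]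
  have hΛ : 0 ≤ Λ := (norm_nonneg _).trans hβx
  have hslope : L * (1 - M * ‖x - y‖) ≤ L := mul_le_of_le_one_right hL (by nlinarith)
  have hradial : inner ℝ (x - y) (βx - βy) / ‖x - y‖ ≤ 2 * Λ := by
    rw [div_le_iff₀ hxy, mul_comm]
    exact (real_inner_le_norm _ _).trans
      (mul_le_mul_of_nonneg_left ((norm_sub_le _ _).trans (by linarith)) hxy.le)
  have hlocal : inner ℝ (x - x₁) βx ≤ Λ := by
    simpa using (real_inner_le_norm _ _).trans (mul_le_mul hx₁ hβx (norm_nonneg _) zero_le_one)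
  calc _ ≤ L * (1 - M * ‖x - y‖) * (2 * Λ) + 2 * K * Λ := add_le_add
        (mul_le_mul_of_nonneg_left hradial (mul_nonneg hL (by linarith)))
        (mul_le_mul_of_nonneg_left hlocal (by positivity))
    _ ≤ L * (2 * Λ) + 2 * K * Λ := by gcongr
    _ = 2 * L * Λ + 2 * K * Λ := by ring

theorem diffusion_sub_le_of_isLocalMax_doubled (hg : ContDiff ℝ 2 g) {ρ₀ : ℝ}
    (hpar : DoublingParams d ν Λ L M K ρ₀) (hxy : 0 < ‖x - y‖) (hρ : ‖x - y‖ ≤ ρ₀)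
    (hmax : IsLocalMax (fun z : Euc d × Euc d => g z.1 - g z.2 - doublingPenalty L M K x₁ z)
      (x, y)) {X : Set (Euc d)} {q : Euc d → Fin d → Fin d → ℝ} {β : Euc d → Fin d → ℝ}
    (hq : CoeffBoundsOn ν Λ X q β) (hx : x ∈ X) (hy : y ∈ X) :
    (∑ i, ∑ j, q x i j * hess d g x i j) - ∑ i, ∑ j, q y i j * hess d g y i j ≤
      4 * L * d + 2 * K * Λ - L * M * ν := by
  obtain ⟨hν, hL, hM, hK, -, -, -, hρν, hρΛ⟩ := hpar
  set n : Fin d → ℝ := fun i => (x i - y i) / ‖x - y‖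
  have hn : n ⬝ᵥ n = 1 := by
    have hunit : n = (‖x - y‖⁻¹ • (x - y) : Euc d) := by
      ext i
      simp [n, div_eq_inv_mul]
    nth_rw 2 [hunit]
    rw [dotProduct_unit_eq_inner, real_inner_smul_right, real_inner_self_eq_norm_sq]
    field_simp
  have hP := posSemidef_coupling hν.le hxy.le hn (hq.symm x hx) (hq.symm y hy) (hq.elliptic x hx)
    (hq.elliptic y hy) (hq.lipschitz x hx y hy) (hρ.trans hρν)
    ((by gcongr : ‖x - y‖ * Λ ^ 2 * d ^ 2 ≤ ρ₀ * Λ ^ 2 * d ^ 2).trans hρΛ)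
  have hcompare := sum_mul_sub_sum_mul_le_of_fromBlocks (κ := 2 * K) (Hx := hess d g x)
    (Hy := hess d g y) (T := radialHess (2 * L / ‖x - y‖) (L * M) n) hP fun ξ η => by
      have hsecond := (first_second_order_of_isLocalMax_doubled hg hL.le hxy hmax
        (WithLp.toLp 2 ξ) (WithLp.toLp 2 η)).2
      rw [← dotProduct_unit_eq_inner, EuclideanSpace.real_norm_sq_eq,
        EuclideanSpace.real_norm_sq_eq] at hsecond
      simp only [coeffForm_radialHess]
      simp only [coeffForm_apply]
      simp only [dotProduct, ← sq, mul_assoc, mul_comm (hess d g _ _ _)] at hsecond ⊢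
      exact hsecond
  rw [sum_coupling_mul_radialHess hn] at hcompare
  have hcancel : 2 * ‖x - y‖ * (2 * L / ‖x - y‖ * (d - 1) - L * M * d) - ν * (L * M) =
      4 * L * d - L * M * ν - (4 * L + 2 * (L * M * d * ‖x - y‖)) := by field_simp; ring
  have htrace := mul_le_mul_of_nonneg_left (hq.trace_le x hx) (mul_nonneg zero_le_two hK)
  have hdrop : 0 ≤ L * M * d * ‖x - y‖ := by positivity
  linarith

theorem operator_sub_neg_of_isLocalMax_doubled (hg : ContDiff ℝ 2 g) {ρ₀ : ℝ}
    (hpar : DoublingParams d ν Λ L M K ρ₀) (hxy : 0 < ‖x - y‖) (hρ : ‖x - y‖ ≤ ρ₀)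
    (hx₁ : ‖x - x₁‖ ≤ 1)
    (hmax : IsLocalMax (fun z : Euc d × Euc d => g z.1 - g z.2 - doublingPenalty L M K x₁ z)
      (x, y)) {X : Set (Euc d)} {q : Euc d → Fin d → Fin d → ℝ} {β : Euc d → Fin d → ℝ}
    (hq : CoeffBoundsOn ν Λ X q β) (hx : x ∈ X) (hy : y ∈ X) :
    ((∑ i, ∑ j, q x i j * hess d g x i j) + ∑ i, β x i * grad g x i)
      - ((∑ i, ∑ j, q y i j * hess d g y i j) + ∑ i, β y i * grad g y i) < 0 := by
  have hdiffusion := diffusion_sub_le_of_isLocalMax_doubled hg hpar hxy hρ hmax hq hx hy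
  have hdrift := drift_sub_le_of_isLocalMax_doubled hg hpar.slope_pos.le hpar.concavity_nonneg
    hpar.localization_nonneg hxy
    ((mul_le_mul_of_nonneg_left hρ hpar.concavity_nonneg).trans hpar.concavity_mul_le) hx₁ hmax
    (hq.drift_le x hx) (hq.drift_le y hy)
  simp only at hdrift
  linarith [hpar.gain]

end DoubledMax

/-! ### The gradient near the initial time -/

section InitialGradient

variable {d : ℕ} {s T : ℝ} {Q : ℝ → Euc d → Fin d → Fin d → ℝ} {b : ℝ → Euc d → Fin d → ℝ}

theorem eventually_forall_mem_of_isCompact {Y Z : Type*} [TopologicalSpace Y] {S : Set Y}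
    (hS : IsCompact S) {l : Filter Z} {P : Z → Y → Prop}
    (h : ∀ y ∈ S, ∀ᶠ p : Z × Y in l ×ˢ 𝓝 y, P p.1 p.2) : ∀ᶠ t in l, ∀ y ∈ S, P t y := by
  have hprod : ∀ᶠ p in l ×ˢ 𝓝ˢ S, P p.1 p.2 := hS.mem_prod_nhdsSet_of_forall h
  filter_upwards [hprod.curry] with t ht
  exact fun y hy => (eventually_nhdsSet_iff_forall.1 ht y hy).self_of_nhds

theorem tendsto_nhdsGE_prod_of_continuousOn {F : ℝ × Euc d → ℝ}
    (hF : ContinuousOn F (Ici s ×ˢ univ)) (x : Euc d) :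
    Tendsto F (𝓝[≥] s ×ˢ 𝓝 x) (𝓝 (F (s, x))) := by
  have h := hF (s, x) ⟨self_mem_Ici, trivial⟩
  rwa [ContinuousWithinAt, nhdsWithin_prod_eq, nhdsWithin_univ] at h

theorem continuousOn_norm_fderiv {J : Set ℝ} {g : ℝ → Euc d → ℝ}
    (hg : ContinuousOn (fun p : ℝ × Euc d => grad (g p.1) p.2) (J ×ˢ univ)) :
    ContinuousOn (fun p : ℝ × Euc d => ‖fderiv ℝ (g p.1) p.2‖) (J ×ˢ univ) := by
  have hnorm : ∀ p : ℝ × Euc d,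
      ‖fderiv ℝ (g p.1) p.2‖ = √(∑ k, grad (g p.1) p.2 k ^ 2) := fun p => by
    rw [← sq_norm_fderiv_eq_sum_grad, Real.sqrt_sq (norm_nonneg _)]
  simp only [hnorm]
  exact (continuousOn_finsetSum _ fun k _ => (continuousOn_pi.1 hg k).pow 2).sqrt

theorem SmoothEllipticCoeffs.exists_coeffBoundsOn (hc : SmoothEllipticCoeffs (Icc s T) Q b) {ν : ℝ}
    (hell : ∀ t ∈ Icc s T, ∀ x ξ, ν * (ξ ⬝ᵥ ξ) ≤ coeffForm (Q t x) ξ ξ) {X : Set (Euc d)}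
    (hX : IsCompact X) (hXconv : Convex ℝ X) :
    ∃ Λ, 0 ≤ Λ ∧ ∀ t ∈ Icc s T, CoeffBoundsOn ν Λ X (Q t) (b t) := by
  have htrace : ContinuousOn (fun p : ℝ × Euc d => ∑ i, Q p.1 p.2 i i) (Icc s T ×ˢ univ) :=
    continuousOn_finsetSum _ fun i _ => hc.diffusion_apply_cont i i
  have hdrift : ContinuousOn (fun p : ℝ × Euc d => (WithLp.toLp 2 (b p.1 p.2) : Euc d))
      (Icc s T ×ˢ univ) := (PiLp.continuous_toLp 2 _).comp_continuousOn hc.cont_drift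
  have hderiv : ContinuousOn (fun (p : ℝ × Euc d) i j => ‖fderiv ℝ (fun y => Q p.1 y i j) p.2‖)
      (Icc s T ×ˢ univ) := continuousOn_pi.2 fun i => continuousOn_pi.2 fun j =>
    continuousOn_norm_fderiv (g := fun t y => Q t y i j) (hc.grad_diffusion_cont i j)
  obtain ⟨Λ, hΛ⟩ := (isCompact_Icc.prod hX).exists_bound_of_continuousOn
    ((htrace.prodMk (hdrift.prodMk hderiv)).mono (prod_mono_right (subset_univ X)))
  replace hΛ : ∀ t ∈ Icc s T, ∀ x ∈ X, _ ≤ |Λ| :=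
    fun t ht x hx => (hΛ (t, x) ⟨ht, hx⟩).trans (le_abs_self Λ)
  refine ⟨|Λ|, abs_nonneg Λ, fun t ht => ⟨fun x _ => hc.symm ht x, fun x _ => hell t ht x,
    fun x hx => (le_abs_self _).trans ((norm_fst_le _).trans (hΛ t ht x hx)),
    fun x hx => (norm_fst_le _).trans ((norm_snd_le _).trans (hΛ t ht x hx)),
    fun x hx y hy i j => hXconv.norm_image_sub_le_of_norm_fderiv_le (𝕜 := ℝ)
      (fun z _ => hc.diff_diffusion t ht i j z) (fun z hz => ?_) hy hx⟩⟩
  have hentry := (norm_le_pi_norm (fun j => ‖fderiv ℝ (fun y => Q t y i j) z‖) j).trans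
    (norm_le_pi_norm (fun i j => ‖fderiv ℝ (fun y => Q t y i j) z‖) i)
  rw [norm_norm] at hentry
  exact hentry.trans ((norm_snd_le _).trans ((norm_snd_le _).trans (hΛ t ht z hz)))

theorem CoeffBoundsOn.mono {ν Λ : ℝ} {X Y : Set (Euc d)} {q : Euc d → Fin d → Fin d → ℝ}
    {β : Euc d → Fin d → ℝ} (h : CoeffBoundsOn ν Λ X q β) (hXY : Y ⊆ X) :
    CoeffBoundsOn ν Λ Y q β where
  symm x hx := h.symm x (hXY hx)
  elliptic x hx := h.elliptic x (hXY hx)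
  trace_le x hx := h.trace_le x (hXY hx)
  drift_le x hx := h.drift_le x (hXY hx)
  lipschitz x hx y hy := h.lipschitz x (hXY hx) y (hXY hy)

/-- Pairs of points at distance at most `ρ₀`, the first within `r` of `x₁`: the domain of a
doubling argument localized near `x₁`. -/
def doublingRegion (x₁ : Euc d) (r ρ₀ : ℝ) : Set (Euc d × Euc d) :=
  {z | ‖z.1 - x₁‖ ≤ r ∧ ‖z.1 - z.2‖ ≤ ρ₀}

variable {x₁ : Euc d} {L M K ν Λ ρ₀ r : ℝ}

theorem mem_closedBall_of_mem_doublingRegion {z : Euc d × Euc d} (hρ : 0 ≤ ρ₀)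
    (hz : z ∈ doublingRegion x₁ r ρ₀) :
    z.1 ∈ Metric.closedBall x₁ (r + ρ₀) ∧ z.2 ∈ Metric.closedBall x₁ (r + ρ₀) := by
  rw [doublingRegion, Set.mem_ofPred_eq, ← dist_eq_norm, ← dist_eq_norm] at hz
  rw [Metric.mem_closedBall, Metric.mem_closedBall]
  exact ⟨by linarith, by linarith [dist_triangle_left z.2 x₁ z.1]⟩

theorem isCompact_doublingRegion (hρ : 0 ≤ ρ₀) : IsCompact (doublingRegion x₁ r ρ₀) := by
  have hclosed : IsClosed (doublingRegion x₁ r ρ₀) :=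
    (isClosed_le (by fun_prop : Continuous fun z : Euc d × Euc d => ‖z.1 - x₁‖)
      continuous_const).inter
      (isClosed_le (by fun_prop : Continuous fun z : Euc d × Euc d => ‖z.1 - z.2‖)
        continuous_const)
  have hcompact := (isCompact_closedBall x₁ (r + ρ₀)).prod (isCompact_closedBall x₁ (r + ρ₀))
  exact hcompact.of_isClosed_subset hclosed fun z hz => mem_closedBall_of_mem_doublingRegion hρ hz

theorem doublingRegion_mem_nhds {z : Euc d × Euc d} (hr : ‖z.1 - x₁‖ < r)
    (hρ : ‖z.1 - z.2‖ < ρ₀) : doublingRegion x₁ r ρ₀ ∈ 𝓝 z := by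
  have hfst : Continuous fun z : Euc d × Euc d => ‖z.1 - x₁‖ := by fun_prop
  have hsub : Continuous fun z : Euc d × Euc d => ‖z.1 - z.2‖ := by fun_prop
  exact inter_mem (hfst.continuousAt.eventually_le_const hr)
    (hsub.continuousAt.eventually_le_const hρ)

variable {u : ℝ → Euc d → ℝ} {f : Euc d → ℝ}

theorem IsClassicalSolution.sub_le_doublingPenalty_of_isLocalMax
    (hu : IsClassicalSolution d Q b (fun _ _ => 0) s f u) (hpar : DoublingParams d ν Λ L M K ρ₀)
    {t : ℝ} (ht : s < t) {X : Set (Euc d)} (hq : CoeffBoundsOn ν Λ X (Q t) (b t)) {x y : Euc d}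
    (hx : x ∈ X) (hy : y ∈ X) (hx₁ : ‖x - x₁‖ ≤ 1) (hρ : ‖x - y‖ ≤ ρ₀)
    (hspace : IsLocalMax (fun z : Euc d × Euc d =>
      u t z.1 - u t z.2 - doublingPenalty L M K x₁ z) (x, y))
    (htime : ∀ᶠ τ in 𝓝[<] t, u τ x - u τ y ≤ u t x - u t y) :
    u t x - u t y ≤ doublingPenalty L M K x₁ (x, y) := by
  rcases (norm_nonneg (x - y)).eq_or_lt with h | hxy
  · obtain rfl : x = y := sub_eq_zero.1 (norm_eq_zero.1 h.symm)
    simpa [doublingPenalty] using mul_nonneg hpar.localization_nonneg (sq_nonneg ‖x - x₁‖)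
  · have hderiv : 0 ≤ deriv (fun τ => u τ x - u τ y) t :=
      deriv_nonneg_of_eventually_le_left ((hu.tdiff t ht x).sub (hu.tdiff t ht y)) htime
    rw [deriv_fun_sub (hu.tdiff t ht x) (hu.tdiff t ht y), hu.pde t ht, hu.pde t ht,
      Aop_zero_eq, Aop_zero_eq] at hderiv
    exact absurd hderiv (operator_sub_neg_of_isLocalMax_doubled (hu.xdiff t ht) hpar hxy hρ hx₁
      hspace hq hx hy).not_ge

theorem IsClassicalSolution.sub_le_doublingPenalty_of_parabolic_boundary
    (hu : IsClassicalSolution d Q b (fun _ _ => 0) s f u)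
    (hpar : DoublingParams d ν Λ L M K ρ₀) (hr : r ≤ 1)
    (hq : ∀ t ∈ Icc s T, CoeffBoundsOn ν Λ (Metric.closedBall x₁ (r + ρ₀)) (Q t) (b t))
    (hinit : ∀ z ∈ doublingRegion x₁ r ρ₀, u s z.1 - u s z.2 ≤ doublingPenalty L M K x₁ z)
    (hlateral : ∀ t ∈ Icc s T, ∀ z ∈ doublingRegion x₁ r ρ₀,
      ‖z.1 - x₁‖ = r ∨ ‖z.1 - z.2‖ = ρ₀ → u t z.1 - u t z.2 ≤ doublingPenalty L M K x₁ z) :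
    ∀ t ∈ Icc s T, ∀ z ∈ doublingRegion x₁ r ρ₀,
      u t z.1 - u t z.2 ≤ doublingPenalty L M K x₁ z := by
  have hcont : ContinuousOn (fun p : ℝ × Euc d × Euc d =>
      u p.1 p.2.1 - u p.1 p.2.2 - doublingPenalty L M K x₁ p.2)
      (Icc s T ×ˢ doublingRegion x₁ r ρ₀) :=
    ((hu.cont.comp (f := fun p : ℝ × Euc d × Euc d => (p.1, p.2.1)) (by fun_prop)
      fun p hp => ⟨hp.1.1, trivial⟩).sub
      (hu.cont.comp (f := fun p : ℝ × Euc d × Euc d => (p.1, p.2.2)) (by fun_prop)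
        fun p hp => ⟨hp.1.1, trivial⟩)).sub
      (continuous_doublingPenalty.comp continuous_snd).continuousOn
  intro t₂ ht₂ z₂ hz₂
  obtain ⟨⟨t, x, y⟩, ⟨ht, hz⟩, hmax⟩ := (isCompact_Icc.prod
    (isCompact_doublingRegion hpar.separation_pos.le)).exists_isMaxOn ⟨(t₂, z₂), ht₂, hz₂⟩ hcont
  have hmax' : ∀ τ ∈ Icc s T, ∀ z ∈ doublingRegion x₁ r ρ₀,
      u τ z.1 - u τ z.2 - doublingPenalty L M K x₁ z ≤
        u t x - u t y - doublingPenalty L M K x₁ (x, y) := fun τ hτ z hz =>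
    isMaxOn_iff.1 hmax (τ, z) ⟨hτ, hz⟩
  suffices u t x - u t y ≤ doublingPenalty L M K x₁ (x, y) by linarith [hmax' t₂ ht₂ z₂ hz₂]
  rcases ht.1.eq_or_lt with rfl | hst
  · exact hinit _ hz
  by_cases hbdry : ‖x - x₁‖ = r ∨ ‖x - y‖ = ρ₀
  · exact hlateral t ht _ hz hbdry
  rw [not_or] at hbdry
  have hball := mem_closedBall_of_mem_doublingRegion hpar.separation_pos.le hz
  refine hu.sub_le_doublingPenalty_of_isLocalMax hpar hst (hq t ht) hball.1 hball.2
    (hz.1.trans hr) hz.2 ?_ ?_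
  · filter_upwards [doublingRegion_mem_nhds (hz.1.lt_of_ne hbdry.1) (hz.2.lt_of_ne hbdry.2)]
      with z hz' using hmax' t ht z hz'
  · filter_upwards [Ioo_mem_nhdsLT hst] with τ hτ
    linarith [hmax' τ ⟨hτ.1.le, hτ.2.le.trans ht.2⟩ _ hz]

theorem le_doublingPenalty {ε a : ℝ} (hL : L = a + 2 * ε) (hLM : L * M * ρ₀ ≤ 2 * ε)
    {z : Euc d × Euc d} (hz : ‖z.1 - z.2‖ ≤ ρ₀) (hnonneg : 0 ≤ L * M) :
    (a + ε) * ‖z.1 - z.2‖ + K * ‖z.1 - x₁‖ ^ 2 ≤ doublingPenalty L M K x₁ z := by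
  have hsmall : L * M * ‖z.1 - z.2‖ * ‖z.1 - z.2‖ ≤ 2 * ε * ‖z.1 - z.2‖ :=
    mul_le_mul_of_nonneg_right ((mul_le_mul_of_nonneg_left hz hnonneg).trans hLM) (norm_nonneg _)
  rw [doublingPenalty]
  subst hL
  linarith

theorem IsClassicalSolution.sub_le_mul_norm_sub
    (hu : IsClassicalSolution d Q b (fun _ _ => 0) s f u)
    (hpar : DoublingParams d ν Λ L M K ρ₀) (hr₀ : 0 ≤ r) (hr : r ≤ 1)
    (hq : ∀ t ∈ Icc s T, CoeffBoundsOn ν Λ (Metric.closedBall x₁ (r + ρ₀)) (Q t) (b t))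
    {ε a N : ℝ} (ha : 0 ≤ a) (hε : 0 ≤ ε) (hL : L = a + 2 * ε) (hLM : L * M * ρ₀ ≤ 2 * ε)
    (hK : 2 * N ≤ K * r ^ 2)
    (hf : ∀ x ∈ Metric.closedBall x₁ (r + ρ₀), ∀ y ∈ Metric.closedBall x₁ (r + ρ₀),
      f x - f y ≤ a * ‖x - y‖)
    (hbdd : ∀ t ∈ Icc s T, ∀ x, |u t x| ≤ N)
    (hclose : ∀ t ∈ Icc s T, ∀ x ∈ Metric.closedBall x₁ (r + ρ₀), |u t x - f x| ≤ ε * ρ₀ / 2)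
    {t : ℝ} (ht : t ∈ Icc s T) {y : Euc d} (hy : ‖x₁ - y‖ ≤ ρ₀) :
    u t x₁ - u t y ≤ L * ‖x₁ - y‖ := by
  have hLM₀ : 0 ≤ L * M := mul_nonneg hpar.slope_pos.le hpar.concavity_nonneg
  have hpen : ∀ z ∈ doublingRegion x₁ r ρ₀, a * ‖z.1 - z.2‖ + ε * ‖z.1 - z.2‖
      + K * ‖z.1 - x₁‖ ^ 2 ≤ doublingPenalty L M K x₁ z := fun z hz => by
    simpa only [add_mul] using le_doublingPenalty (K := K) (x₁ := x₁) hL hLM hz.2 hLM₀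
  have hlocal : ∀ z : Euc d × Euc d, 0 ≤ K * ‖z.1 - x₁‖ ^ 2 := fun z =>
    mul_nonneg hpar.localization_nonneg (sq_nonneg _)
  have hslope : ∀ z : Euc d × Euc d, 0 ≤ a * ‖z.1 - z.2‖ ∧ 0 ≤ ε * ‖z.1 - z.2‖ :=
    fun z => ⟨mul_nonneg ha (norm_nonneg _), mul_nonneg hε (norm_nonneg _)⟩
  have hball := fun z => mem_closedBall_of_mem_doublingRegion (x₁ := x₁) (r := r) (z := z)
    hpar.separation_pos.le
  have hle := hu.sub_le_doublingPenalty_of_parabolic_boundary hpar hr hq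
    (fun z hz => by
      rw [hu.init, hu.init]
      linarith [hpen z hz, hlocal z, hslope z, hf z.1 (hball z hz).1 z.2 (hball z hz).2])
    (fun t ht z hz => by
      rintro (h | h)
      · have hpz := hpen z hz
        rw [h] at hpz
        linarith [hslope z, (abs_le.1 (hbdd t ht z.1)).2, (abs_le.1 (hbdd t ht z.2)).1]
      · have hfz := hf z.1 (hball z hz).1 z.2 (hball z hz).2
        have hpz := hpen z hz
        rw [h] at hpz hfz
        linarith [hlocal z, (abs_le.1 (hclose t ht z.1 (hball z hz).1)).2,
          (abs_le.1 (hclose t ht z.2 (hball z hz).2)).1]) t ht (x₁, y) ⟨by simpa using hr₀, hy⟩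
  have hconcave : 0 ≤ L * M * ‖x₁ - y‖ ^ 2 := mul_nonneg hLM₀ (sq_nonneg _)
  simp only [doublingPenalty, sub_self, norm_zero] at hle
  linarith

theorem exists_doublingParams {ε : ℝ} (hν : 0 < ν) (hΛ : 0 ≤ Λ) (hL : 0 < L) (hK : 0 ≤ K)
    (hε : 0 < ε) (hr : 0 < r) :
    ∃ M ρ₀, DoublingParams d ν Λ L M K ρ₀ ∧ ρ₀ ≤ r ∧ L * M * ρ₀ ≤ 2 * ε := by
  set M := (4 * L * d + 2 * L * Λ + 4 * K * Λ + 1) / (L * ν) with hM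
  have hgain : L * M * ν = 4 * L * d + 2 * L * Λ + 4 * K * Λ + 1 := by
    rw [hM]
    field_simp
  have hsmall : ∀ c : ℝ, ∀ e > 0, ∀ᶠ ρ in 𝓝[>] (0 : ℝ), ρ * c ≤ e := fun c e he => by
    have hcont : ContinuousAt (fun ρ : ℝ => ρ * c) 0 := by fun_prop
    exact nhdsWithin_le_nhds (hcont.eventually_le_const (by simpa using he))
  obtain ⟨ρ₀, hρ₀, hρr, hρε, hρM, hρν, hρΛ⟩ := (eventually_mem_nhdsWithin.and
    ((hsmall 1 r hr).and ((hsmall (L * M) (2 * ε) (by positivity)).and ((hsmall M 1 one_pos).and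
      ((hsmall 1 (ν / 2) (by positivity)).and (hsmall (Λ ^ 2 * d ^ 2) ν hν)))))).exists
  rw [mul_one] at hρr hρν
  exact ⟨M, ρ₀, ⟨hν, hL, by positivity, hK, hρ₀, by linarith, by rwa [mul_comm], hρν,
    by rwa [mul_assoc]⟩, hρr, by rwa [mul_comm]⟩

theorem IsClassicalSolution.eventually_abs_sub_le
    (hu : IsClassicalSolution d Q b (fun _ _ => 0) s f u) {S : Set (Euc d)} (hS : IsCompact S)
    {e : ℝ} (he : 0 < e) : ∀ᶠ t in 𝓝[≥] s, ∀ x ∈ S, |u t x - f x| ≤ e := by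
  have hf : Continuous f := by
    rw [← continuousOn_univ]
    refine (hu.cont.comp (f := fun x : Euc d => (s, x)) (by fun_prop)
      fun x _ => ⟨self_mem_Ici, trivial⟩).congr fun x _ => (hu.init x).symm
  refine eventually_forall_mem_of_isCompact hS fun x _ => ?_
  have hlim := (tendsto_nhdsGE_prod_of_continuousOn hu.cont x).sub
    ((hf.tendsto x).comp tendsto_snd)
  simp only [hu.init, sub_self] at hlim
  have habs := hlim.abs
  rw [abs_zero] at habs
  exact habs.eventually_le_const he

theorem exists_ball_sub_le_mul_norm_sub (hf : ContDiff ℝ 1 f) {x₀ : Euc d} {a : ℝ}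
    (ha : ‖fderiv ℝ f x₀‖ < a) : ∃ r, 0 < r ∧ r ≤ 1 ∧
      ∀ x ∈ Metric.ball x₀ (3 * r), ∀ y ∈ Metric.ball x₀ (3 * r), f x - f y ≤ a * ‖x - y‖ := by
  have hcont : Continuous fun x => ‖fderiv ℝ f x‖ := (hf.continuous_fderiv one_ne_zero).norm
  obtain ⟨r, hr, hball⟩ := Metric.eventually_nhds_iff_ball.1
    (hcont.continuousAt.eventually_le_const ha)
  refine ⟨min (r / 3) 1, by positivity, min_le_right _ _, fun x hx y hy => ?_⟩
  have hsub : Metric.ball x₀ (3 * min (r / 3) 1) ⊆ Metric.ball x₀ r :=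
    Metric.ball_subset_ball (by linarith [min_le_left (r / 3) 1])
  exact (le_abs_self _).trans ((convex_ball x₀ r).norm_image_sub_le_of_norm_fderiv_le (𝕜 := ℝ)
    (fun z _ => hf.differentiable one_ne_zero z) hball (hsub hy) (hsub hx))

theorem IsClassicalSolution.eventually_forall_sub_le_mul_norm_sub
    (hc : SmoothEllipticCoeffs (Ici s) Q b) (hν : 0 < ν)
    (hell : ∀ t ∈ Ici s, ∀ x ξ, ν * (ξ ⬝ᵥ ξ) ≤ coeffForm (Q t x) ξ ξ)
    (hu : IsClassicalSolution d Q b (fun _ _ => 0) s f u) (hbdd : BoundedOnStrips d s u)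
    (hf : ContDiff ℝ 1 f) {x₀ : Euc d} (hL : ‖fderiv ℝ f x₀‖ < L) :
    ∃ ρ > 0, ∀ᶠ t in 𝓝[≥] s, ∀ x ∈ Metric.ball x₀ ρ, ∀ y, ‖x - y‖ ≤ ρ →
      u t x - u t y ≤ L * ‖x - y‖ := by
  obtain ⟨a, ha, haL⟩ := exists_between hL
  obtain ⟨r, hr, hr1, hlip⟩ := exists_ball_sub_le_mul_norm_sub hf ha
  have ha₀ : 0 ≤ a := (norm_nonneg _).trans ha.le
  obtain ⟨N, hN⟩ := hbdd (s + 1) (lt_add_one s)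
  have hN₀ : 0 ≤ N := (abs_nonneg _).trans (hN s ⟨le_rfl, (lt_add_one s).le⟩ x₀)
  obtain ⟨Λ, hΛ, hq⟩ := (hc.mono Icc_subset_Ici_self).exists_coeffBoundsOn (T := s + 1)
    (fun t ht => hell t ht.1) (isCompact_closedBall x₀ 3) (convex_closedBall x₀ 3)
  have hε : 0 < (L - a) / 2 := by linarith
  obtain ⟨M, ρ₀, hpar, hρr, hLM⟩ := exists_doublingParams (d := d) hν hΛ (ha₀.trans_lt haL)
    (show 0 ≤ 2 * N / r ^ 2 by positivity) hε hr
  have hρ₀ := hpar.separation_pos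
  obtain ⟨T, hsT, hclose⟩ := mem_nhdsGE_iff_exists_Icc_subset.1
    ((hu.eventually_abs_sub_le (isCompact_closedBall x₀ 3)
      (show 0 < (L - a) / 2 * ρ₀ / 2 by positivity)).and (Icc_mem_nhdsGE (lt_add_one s)))
  refine ⟨ρ₀, hρ₀, ?_⟩
  filter_upwards [Icc_mem_nhdsGE hsT] with t ht x hx y hxy
  have hx₀ : dist x x₀ < r := (Metric.mem_ball.1 hx).trans_le hρr
  have hball : Metric.closedBall x (r + ρ₀) ⊆ Metric.ball x₀ (3 * r) := fun z hz => by
    rw [Metric.mem_closedBall] at hz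
    rw [Metric.mem_ball]
    linarith [dist_triangle z x x₀]
  have hball' : Metric.closedBall x (r + ρ₀) ⊆ Metric.closedBall x₀ 3 := hball.trans
    (Metric.ball_subset_closedBall.trans (Metric.closedBall_subset_closedBall (by linarith)))
  exact hu.sub_le_mul_norm_sub hpar hr.le hr1 (fun τ hτ => (hq τ (hclose hτ).2).mono hball') ha₀
    hε.le (by ring) hLM (div_mul_cancel₀ _ (by positivity)).ge
    (fun z hz z' hz' => hlip z (hball hz) z' (hball hz')) (fun τ hτ => hN τ (hclose hτ).2)
    (fun τ hτ z hz => (hclose hτ).1 z (hball' hz)) ht hxy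

theorem IsClassicalSolution.eventually_norm_fderiv_le
    (hc : SmoothEllipticCoeffs (Ici s) Q b) (hν : 0 < ν)
    (hell : ∀ t ∈ Ici s, ∀ x ξ, ν * (ξ ⬝ᵥ ξ) ≤ coeffForm (Q t x) ξ ξ)
    (hu : IsClassicalSolution d Q b (fun _ _ => 0) s f u) (hbdd : BoundedOnStrips d s u)
    (hf : ContDiff ℝ 1 f) {x₀ : Euc d} (hL : ‖fderiv ℝ f x₀‖ < L) :
    ∀ᶠ p : ℝ × Euc d in 𝓝[>] s ×ˢ 𝓝 x₀, ‖fderiv ℝ (u p.1) p.2‖ ≤ L := by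
  obtain ⟨ρ, hρ, hsub⟩ := hu.eventually_forall_sub_le_mul_norm_sub hc hν hell hbdd hf hL
  have hsub' := hsub.filter_mono (nhdsWithin_mono s Ioi_subset_Ici_self)
  filter_upwards [prod_mem_prod (inter_mem hsub' self_mem_nhdsWithin) (Metric.ball_mem_nhds x₀ hρ)]
  rintro ⟨t, x⟩ ⟨⟨hle, ht⟩, hx⟩
  refine ((hu.xdiff t ht).differentiable two_ne_zero x).hasFDerivAt.le_of_lip'
    ((norm_nonneg _).trans hL.le) ?_
  filter_upwards [Metric.isOpen_ball.mem_nhds hx, Metric.ball_mem_nhds x hρ] with y hy hxy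
  rw [Metric.mem_ball, dist_eq_norm] at hxy
  have hyx := hle y hy x hxy.le
  have hxy' := hle x hx y (by rw [norm_sub_rev]; exact hxy.le)
  rw [norm_sub_rev] at hxy'
  exact abs_le.2 ⟨by linarith, hyx⟩

end InitialGradient

/-! ### Bernstein's gradient bound -/

section FrobeniusNorm

variable {d : ℕ} {A : Fin d → Fin d → ℝ}

/-- The Frobenius norm of a square array. -/
def frobNorm (H : Fin d → Fin d → ℝ) : ℝ :=
  √(∑ k, H k ⬝ᵥ H k)

theorem frobNorm_nonneg (H : Fin d → Fin d → ℝ) : 0 ≤ frobNorm H :=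
  Real.sqrt_nonneg _

theorem sq_frobNorm (H : Fin d → Fin d → ℝ) : frobNorm H ^ 2 = ∑ k, H k ⬝ᵥ H k :=
  Real.sq_sqrt (Finset.sum_nonneg fun _ _ => Finset.sum_nonneg fun _ _ => mul_self_nonneg _)

theorem mul_sq_frobNorm_le {ν : ℝ} (hell : ∀ ξ, ν * (ξ ⬝ᵥ ξ) ≤ coeffForm A ξ ξ)
    (H : Fin d → Fin d → ℝ) : ν * frobNorm H ^ 2 ≤ ∑ k, coeffForm A (H k) (H k) := by
  rw [sq_frobNorm, Finset.mul_sum]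
  exact Finset.sum_le_sum fun k _ => hell (H k)

theorem sum_abs_le_mul_frobNorm (H : Fin d → Fin d → ℝ) :
    ∑ i, ∑ j, |H i j| ≤ d * frobNorm H := by
  refine le_of_sq_le_sq ?_ (mul_nonneg d.cast_nonneg (frobNorm_nonneg H))
  calc (∑ i, ∑ j, |H i j|) ^ 2 ≤ d * ∑ i, (∑ j, |H i j|) ^ 2 := by
        simpa using sq_sum_le_card_mul_sum_sq (s := Finset.univ) (f := fun i => ∑ j, |H i j|)
    _ ≤ d * ∑ i, d * (H i ⬝ᵥ H i) := by
        gcongr with i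
        exact sq_sum_abs_le (H i)
    _ = (d * frobNorm H) ^ 2 := by rw [mul_pow, sq_frobNorm, ← Finset.mul_sum]; ring

theorem coeffForm_sum_smul_le (hA : (Matrix.of A).PosSemidef) (g : Fin d → ℝ)
    (H : Fin d → Fin d → ℝ) :
    coeffForm A (∑ k, g k • H k) (∑ k, g k • H k) ≤ (g ⬝ᵥ g) * ∑ k, coeffForm A (H k) (H k) := by
  obtain ⟨m, v, hv⟩ := Matrix.posSemidef_iff_eq_sum_vecMulVec.1 hA
  have hsq (ξ : Fin d → ℝ) : coeffForm A ξ ξ = ∑ l, (v l ⬝ᵥ ξ) ^ 2 := by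
    rw [coeffForm, hv, map_sum]
    simp only [LinearMap.sum_apply, Matrix.toBilin'_apply', Matrix.vecMulVec_mulVec, star_trivial,
      op_smul_eq_smul, dotProduct_comm ξ, smul_dotProduct, smul_eq_mul, sq]
  simp only [hsq]
  rw [Finset.sum_comm, Finset.mul_sum]
  refine Finset.sum_le_sum fun l _ => ?_
  simp only [dotProduct_sum, dotProduct_smul, smul_eq_mul]
  refine (Finset.sum_mul_sq_le_sq_mul_sq Finset.univ g fun k => v l ⬝ᵥ H k).trans_eq ?_
  simp only [dotProduct, sq]

theorem coeffForm_sum_smul_le_sqrt_mul (hA : ∀ i j, A i j = A j i) (y g : Fin d → ℝ)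
    (H : Fin d → Fin d → ℝ) :
    coeffForm A y (∑ k, g k • H k) ≤
      √(∑ i, (∑ j, A i j * y j) ^ 2) * (√(g ⬝ᵥ g) * frobNorm H) := by
  set w : Fin d → ℝ := fun i => ∑ j, A i j * y j with hw
  have hform : coeffForm A y (∑ k, g k • H k) = ∑ p : Fin d × Fin d, g p.1 * w p.2 * H p.1 p.2 := by
    rw [Fintype.sum_prod_type, map_sum]
    refine Finset.sum_congr rfl fun k _ => ?_
    rw [map_smul, coeffForm_comm hA, coeffForm_apply, smul_eq_mul, Finset.mul_sum]
    refine Finset.sum_congr rfl fun i _ => ?_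
    simp only [hw, Finset.mul_sum, Finset.sum_mul]
    exact Finset.sum_congr rfl fun j _ => by ring
  rw [hform]
  refine (Real.sum_mul_le_sqrt_mul_sqrt _ _ _).trans_eq ?_
  simp only [mul_pow, Fintype.sum_prod_type, ← Finset.mul_sum, ← Finset.sum_mul]
  rw [Real.sqrt_mul (Finset.sum_nonneg fun _ _ => sq_nonneg _), frobNorm]
  simp only [dotProduct, ← sq]
  ring

theorem grad_dotProduct_grad (g : Euc d → ℝ) (x : Euc d) :
    grad g x ⬝ᵥ grad g x = ‖fderiv ℝ g x‖ ^ 2 := by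
  simp only [sq_norm_fderiv_eq_sum_grad, dotProduct, ← sq]

theorem abs_grad_dotProduct_le (f g : Euc d → ℝ) (x : Euc d) :
    |grad f x ⬝ᵥ grad g x| ≤ ‖fderiv ℝ f x‖ * ‖fderiv ℝ g x‖ := by
  refine abs_le_of_sq_le_sq ?_ (by positivity)
  rw [mul_pow, sq_norm_fderiv_eq_sum_grad, sq_norm_fderiv_eq_sum_grad]
  exact Finset.sum_mul_sq_le_sq_mul_sq _ _ _

end FrobeniusNorm

section BernsteinBounds

variable {d : ℕ} {Q : ℝ → Euc d → Fin d → Fin d → ℝ} {b : ℝ → Euc d → Fin d → ℝ}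
  {u : ℝ → Euc d → ℝ} {t : ℝ} {x : Euc d}

theorem sum_grad_mul_gradSource_le {c r : ℝ} (hc₀ : 0 ≤ c)
    (hc : ∀ i j, ‖fderiv ℝ (fun y => Q t y i j) x‖ ≤ c)
    (hJac : ∀ ξ, coeffForm (fun i j => grad (fun y => b t y i) x j) ξ ξ ≤ r * (ξ ⬝ᵥ ξ)) :
    ∑ k, grad (u t) x k * gradSource Q b u t x k ≤
      d * c * ‖fderiv ℝ (u t) x‖ * frobNorm (hess d (u t) x) + r * ‖fderiv ℝ (u t) x‖ ^ 2 := by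
  have hsplit : ∑ k, grad (u t) x k * gradSource Q b u t x k =
      (∑ i, ∑ j, (grad (fun y => Q t y i j) x ⬝ᵥ grad (u t) x) * hess d (u t) x i j)
        + coeffForm (fun i j => grad (fun y => b t y i) x j) (grad (u t) x) (grad (u t) x) := by
    simp only [gradSource, mul_add, Finset.sum_add_distrib, coeffForm_apply, dotProduct,
      Finset.mul_sum, Finset.sum_mul]
    congr 1
    · rw [Finset.sum_comm]
      refine Finset.sum_congr rfl fun i _ => ?_
      rw [Finset.sum_comm]
      exact Finset.sum_congr rfl fun j _ => Finset.sum_congr rfl fun k _ => by ring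
    · rw [Finset.sum_comm]
      exact Finset.sum_congr rfl fun i _ => Finset.sum_congr rfl fun j _ => by ring
  have hdiffusion : ∑ i, ∑ j, (grad (fun y => Q t y i j) x ⬝ᵥ grad (u t) x) * hess d (u t) x i j ≤
      c * ‖fderiv ℝ (u t) x‖ * ∑ i, ∑ j, |hess d (u t) x i j| := by
    simp only [Finset.mul_sum]
    refine Finset.sum_le_sum fun i _ => Finset.sum_le_sum fun j _ => ?_
    refine (le_abs_self _).trans ((abs_mul _ _).trans_le ?_)
    gcongr
    exact (abs_grad_dotProduct_le _ _ x).trans (by gcongr; exact hc i j)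
  have hfrob := mul_le_mul_of_nonneg_left (sum_abs_le_mul_frobNorm (hess d (u t) x))
    (mul_nonneg hc₀ (norm_nonneg (fderiv ℝ (u t) x)))
  have hdrift := hJac (grad (u t) x)
  rw [grad_dotProduct_grad] at hdrift
  linarith

/-- The first-order Bernstein bounds over the time set `J`: the diffusion is elliptic with
constant `ν t x`, and up to the factor `K` the same `ν t x` controls the growth of the
coefficients, the gradient of the diffusion and, from above, the Jacobian of the drift. -/
structure BernsteinBounds (J : Set ℝ) (ν : ℝ → Euc d → ℝ) (Q : ℝ → Euc d → Fin d → Fin d → ℝ)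
    (b : ℝ → Euc d → Fin d → ℝ) (K : ℝ) : Prop where
  pos : ∀ t ∈ J, ∀ x, 0 < ν t x
  elliptic : ∀ t ∈ J, ∀ x ξ, ν t x * (ξ ⬝ᵥ ξ) ≤ coeffForm (Q t x) ξ ξ
  diffusion_le : ∀ t ∈ J, ∀ x : Euc d,
    √(∑ i, (∑ j, Q t x i j * x j) ^ 2) + ∑ i, Q t x i i ≤ K * (1 + ‖x‖ ^ 2) * ν t x
  drift_le : ∀ t ∈ J, ∀ x : Euc d, ∑ i, b t x i * x i ≤ K * (1 + ‖x‖ ^ 2) * ν t x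
  norm_fderiv_diffusion_le : ∀ t ∈ J, ∀ x i j, ‖fderiv ℝ (fun y => Q t y i j) x‖ ≤ K * ν t x
  jacobian_drift_le : ∀ t ∈ J, ∀ x ξ,
    coeffForm (fun i j => grad (fun y => b t y i) x j) ξ ξ ≤ K * ν t x * (ξ ⬝ᵥ ξ)

theorem BernsteinBounds.mono {J J' : Set ℝ} {ν : ℝ → Euc d → ℝ} {K : ℝ}
    (hB : BernsteinBounds J ν Q b K) (hJ : J' ⊆ J) : BernsteinBounds J' ν Q b K :=
  ⟨fun t ht => hB.pos t (hJ ht), fun t ht => hB.elliptic t (hJ ht),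
    fun t ht => hB.diffusion_le t (hJ ht), fun t ht => hB.drift_le t (hJ ht),
    fun t ht => hB.norm_fderiv_diffusion_le t (hJ ht), fun t ht => hB.jacobian_drift_le t (hJ ht)⟩

end BernsteinBounds

section Cutoff

variable {d : ℕ} {c R : ℝ} {x : Euc d}

/-- The quadratic cutoff `1 - c‖x‖²`, used on the ball where it is nonnegative. -/
def cutoff (c : ℝ) (x : Euc d) : ℝ :=
  1 - c * ‖x‖ ^ 2

theorem contDiff_cutoff (c : ℝ) : ContDiff ℝ 2 (cutoff (d := d) c) :=
  contDiff_const.sub (contDiff_const.mul (contDiff_norm_sq ℝ))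

theorem grad_cutoff (c : ℝ) (x : Euc d) : grad (cutoff c) x = (-2 * c) • x.ofLp := by
  funext i
  have hderiv : HasFDerivAt (cutoff (d := d) c) (-(c • 2 • innerSL ℝ x)) x :=
    ((hasStrictFDerivAt_norm_sq x).hasFDerivAt.const_mul c).const_sub 1
  rw [grad, hderiv.fderiv]
  simp [EuclideanSpace.inner_single_right, mul_assoc, mul_left_comm]

theorem hess_cutoff (c : ℝ) (x : Euc d) (i j : Fin d) :
    hess d (cutoff c) x i j = if i = j then -2 * c else 0 := by
  have hgrad : (fun y => grad (cutoff (d := d) c) y j) =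
      ((-2 * c) • EuclideanSpace.proj j : Euc d →L[ℝ] ℝ) := by
    funext y
    rw [grad_cutoff]
    rfl
  rw [hess_eq_grad_grad, hgrad, grad, ContinuousLinearMap.fderiv]
  split_ifs with hij <;> simp [hij, Ne.symm]

theorem Aop_cutoff (Q : ℝ → Euc d → Fin d → Fin d → ℝ) (b : ℝ → Euc d → Fin d → ℝ) (c t : ℝ)
    (x : Euc d) :
    Aop d Q b (fun _ _ => 0) t (cutoff c) x =
      -2 * c * (∑ i, Q t x i i + ∑ i, b t x i * x i) := by
  simp only [Aop_zero_eq, hess_cutoff, grad_cutoff, mul_ite, mul_zero, Finset.sum_ite_eq,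
    Finset.mem_univ, if_true, Pi.smul_apply, smul_eq_mul, mul_add, Finset.mul_sum]
  congr 1 <;> exact Finset.sum_congr rfl fun i _ => by ring

theorem cutoff_le_one (hc : 0 ≤ c) : cutoff c x ≤ 1 :=
  sub_le_self 1 (by positivity)

theorem cutoff_nonneg (hc : 0 ≤ c) (hcR : c * R ^ 2 = 1) (hx : ‖x‖ ≤ R) : 0 ≤ cutoff c x := by
  rw [cutoff, sub_nonneg, ← hcR]
  gcongr

theorem mul_one_add_sq_norm_le_two (hc₀ : 0 ≤ c) (hc₁ : c ≤ 1) (hcR : c * R ^ 2 = 1)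
    (hx : ‖x‖ ≤ R) : c * (1 + ‖x‖ ^ 2) ≤ 2 := by
  have : c * ‖x‖ ^ 2 ≤ c * R ^ 2 := by gcongr
  linarith

end Cutoff

section GradientBound

variable {d : ℕ} {s T : ℝ} {Q : ℝ → Euc d → Fin d → Fin d → ℝ} {b : ℝ → Euc d → Fin d → ℝ}
  {u : ℝ → Euc d → ℝ} {f : Euc d → ℝ} {t : ℝ} {x : Euc d} {J : Set ℝ} {ν : ℝ → Euc d → ℝ}
  {K c a : ℝ}

namespace BernsteinBounds

theorem sqrt_le (hB : BernsteinBounds J ν Q b K) (hc : EllipticCoeffs J Q b) (ht : t ∈ J)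
    (x : Euc d) : √(∑ i, (∑ j, Q t x i j * x j) ^ 2) ≤ K * (1 + ‖x‖ ^ 2) * ν t x := by
  have htrace : 0 ≤ ∑ i, Q t x i i :=
    Finset.sum_nonneg fun i _ => (hc.posSemidef t ht x).diag_nonneg
  linarith [hB.diffusion_le t ht x]

theorem parabolicOp_sq_cutoff_le (hB : BernsteinBounds J ν Q b K) (hc : EllipticCoeffs J Q b)
    (hK : 0 ≤ K) (ht : t ∈ J) (hc₀ : 0 ≤ c) (hcx : c * (1 + ‖x‖ ^ 2) ≤ 2)
    (hx : 0 ≤ cutoff c x) :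
    parabolicOp Q b (fun _ y => cutoff c y * cutoff c y) t x ≤ 16 * K * ν t x := by
  have hη := IsC12.ofSpace (s := t - 1) (contDiff_cutoff (d := d) c)
  rw [parabolicOp_mul hη hη (sub_one_lt t) x (hc.symm ht x), parabolicOp_ofSpace, Aop_cutoff]
  have hKν : 0 ≤ K * ν t x := mul_nonneg hK (hB.pos t ht x).le
  have hgrowth : c * (∑ i, Q t x i i + ∑ i, b t x i * x i) ≤ 4 * (K * ν t x) := by
    have hsum : ∑ i, Q t x i i + ∑ i, b t x i * x i ≤ 2 * (K * ν t x) * (1 + ‖x‖ ^ 2) := by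
      linarith [hB.diffusion_le t ht x, hB.drift_le t ht x,
        Real.sqrt_nonneg (∑ i, (∑ j, Q t x i j * x j) ^ 2)]
    nlinarith [mul_le_mul_of_nonneg_left hsum hc₀, mul_le_mul_of_nonneg_left hcx hKν]
  nlinarith [mul_le_mul_of_nonneg_left hgrowth hx, cutoff_le_one (x := x) hc₀,
    hc.coeffForm_nonneg ht x (grad (cutoff c) x)]

theorem neg_coeffForm_grad_sq_cutoff_le (hB : BernsteinBounds J ν Q b K)
    (hc : EllipticCoeffs J Q b) (hK : 0 ≤ K) (ht : t ∈ J) (hc₀ : 0 ≤ c)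
    (hcx : c * (1 + ‖x‖ ^ 2) ≤ 2) (hx : 0 ≤ cutoff c x) (g : Euc d → ℝ)
    (H : Fin d → Fin d → ℝ) :
    -(2 * coeffForm (Q t x) (grad (fun y => cutoff c y * cutoff c y) x)
        ((2 : ℝ) • ∑ k, grad g x k • H k)) ≤
      32 * K * ν t x * ‖fderiv ℝ g x‖ * (cutoff c x * frobNorm H) := by
  have hdiff : DifferentiableAt ℝ (cutoff c) x :=
    ((contDiff_cutoff c).differentiable two_ne_zero).differentiableAt
  have hgrad : grad (fun y => cutoff c y * cutoff c y) x = (-4 * c * cutoff c x) • x.ofLp := by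
    rw [grad_mul hdiff hdiff, grad_cutoff, smul_smul, ← add_smul]
    ring_nf
  have hform := coeffForm_sum_smul_le_sqrt_mul (hc.symm ht x) x.ofLp (grad g x) H
  rw [grad_dotProduct_grad, Real.sqrt_sq (norm_nonneg _)] at hform
  have hgrowth : c * √(∑ i, (∑ j, Q t x i j * x j) ^ 2) ≤ 2 * (K * ν t x) := by
    nlinarith [mul_le_mul_of_nonneg_left (hB.sqrt_le hc ht x) hc₀,
      mul_le_mul_of_nonneg_left hcx (mul_nonneg hK (hB.pos t ht x).le)]
  have hH := frobNorm_nonneg H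
  calc -(2 * coeffForm (Q t x) (grad (fun y => cutoff c y * cutoff c y) x)
        ((2 : ℝ) • ∑ k, grad g x k • H k))
      = 16 * c * cutoff c x * coeffForm (Q t x) x.ofLp (∑ k, grad g x k • H k) := by
        rw [hgrad, map_smul, map_smul, LinearMap.smul_apply, smul_eq_mul, smul_eq_mul]
        ring
    _ ≤ 16 * c * cutoff c x *
          (√(∑ i, (∑ j, Q t x i j * x j) ^ 2) * (‖fderiv ℝ g x‖ * frobNorm H)) := by gcongr
    _ = 16 * cutoff c x * (‖fderiv ℝ g x‖ * frobNorm H) *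
          (c * √(∑ i, (∑ j, Q t x i j * x j) ^ 2)) := by ring
    _ ≤ 16 * cutoff c x * (‖fderiv ℝ g x‖ * frobNorm H) * (2 * (K * ν t x)) := by gcongr
    _ = _ := by ring

theorem sq_mul_bernstein_le (hB : BernsteinBounds J ν Q b K) (hK : 0 ≤ K) (ht : t ∈ J) {ψ : ℝ}
    (hψ₀ : 0 ≤ ψ) (hψ₁ : ψ ≤ 1) (u : ℝ → Euc d → ℝ) (x : Euc d) :
    ψ * ψ * (2 * ∑ k, grad (u t) x k * gradSource Q b u t x k
        - 2 * ∑ k, coeffForm (Q t x) (hess d (u t) x k) (hess d (u t) x k)) ≤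
      2 * d * K * ν t x * ‖fderiv ℝ (u t) x‖ * (ψ * frobNorm (hess d (u t) x))
        + 2 * K * ν t x * ‖fderiv ℝ (u t) x‖ ^ 2
        - 2 * ν t x * (ψ * frobNorm (hess d (u t) x)) ^ 2 := by
  have hKν : 0 ≤ K * ν t x := mul_nonneg hK (hB.pos t ht x).le
  have hsource := sum_grad_mul_gradSource_le (u := u) hKν
    (hB.norm_fderiv_diffusion_le t ht x) (hB.jacobian_drift_le t ht x)
  have hhess := mul_sq_frobNorm_le (hB.elliptic t ht x) (hess d (u t) x)
  have hH := frobNorm_nonneg (hess d (u t) x)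
  have hψψ : ψ * ψ ≤ ψ := mul_le_of_le_one_left hψ₀ hψ₁
  have hlin := mul_le_mul_of_nonneg_left (add_le_add hsource (neg_le_neg hhess))
    (mul_nonneg hψ₀ hψ₀)
  have hcross := mul_le_mul_of_nonneg_right hψψ
    (show 0 ≤ d * (K * ν t x) * ‖fderiv ℝ (u t) x‖ * frobNorm (hess d (u t) x) by positivity)
  have hjac := mul_le_mul_of_nonneg_right (hψψ.trans hψ₁)
    (show 0 ≤ K * ν t x * ‖fderiv ℝ (u t) x‖ ^ 2 by positivity)
  linarith

theorem parabolicOp_mul_sq_add_const_le (hB : BernsteinBounds J ν Q b K)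
    (hc : EllipticCoeffs J Q b) (ht : t ∈ J) (hst : s < t) (ha : 0 ≤ a)
    (hu : IsClassicalSolution d Q b (fun _ _ => 0) s f u) (N : ℝ) (x : Euc d) :
    parabolicOp Q b (fun t y => a * (u t y * u t y) + N) t x ≤
      -(2 * a * ν t x * ‖fderiv ℝ (u t) x‖ ^ 2) := by
  have hu₂ := hu.isC12.mul hu.isC12
  have hsymm := hc.symm ht x
  rw [parabolicOp_add ((IsC12.const a).mul hu₂) (IsC12.const N) hst,
    parabolicOp_mul (IsC12.const a) hu₂ hst x hsymm, parabolicOp_const, parabolicOp_const,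
    parabolicOp_mul hu.isC12 hu.isC12 hst x hsymm, hu.parabolicOp_eq_zero hst, grad_const]
  have hell := mul_le_mul_of_nonneg_left (hB.elliptic t ht x (grad (u t) x)) ha
  rw [grad_dotProduct_grad] at hell
  simp only [map_zero, LinearMap.zero_apply, mul_zero, add_zero]
  linarith

theorem bernstein_op_neg (hB : BernsteinBounds J ν Q b K) (hc : EllipticCoeffs J Q b)
    (hK : 0 ≤ K) (ht : t ∈ J) (hst : s < t) (hc₀ : 0 ≤ c) (hcx : c * (1 + ‖x‖ ^ 2) ≤ 2)
    (hx : 0 ≤ cutoff c x) (hu : IsClassicalSolution d Q b (fun _ _ => 0) s f u)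
    (hgrad : 0 < ‖fderiv ℝ (u t) x‖) (ha : a = 18 * K + (2 * d * K + 32 * K) ^ 2 + 1) (N : ℝ) :
    cutoff c x * cutoff c x * (2 * ∑ k, grad (u t) x k * gradSource Q b u t x k
        - 2 * ∑ k, coeffForm (Q t x) (hess d (u t) x k) (hess d (u t) x k))
      + ‖fderiv ℝ (u t) x‖ ^ 2 * parabolicOp Q b (fun _ y => cutoff c y * cutoff c y) t x
      - 2 * coeffForm (Q t x) (grad (fun y => cutoff c y * cutoff c y) x)
          ((2 : ℝ) • ∑ k, grad (u t) x k • hess d (u t) x k)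
      + parabolicOp Q b (fun t y => a * (u t y * u t y) + N) t x < 0 := by
  have hhess := hB.sq_mul_bernstein_le hK ht hx (cutoff_le_one hc₀) u x
  have hcut := mul_le_mul_of_nonneg_left
    (hB.parabolicOp_sq_cutoff_le hc hK ht hc₀ hcx hx) (sq_nonneg ‖fderiv ℝ (u t) x‖)
  have hcross := hB.neg_coeffForm_grad_sq_cutoff_le hc hK ht hc₀ hcx hx (u t) (hess d (u t) x)
  have hsq := hB.parabolicOp_mul_sq_add_const_le hc ht hst (a := a) (by rw [ha]; positivity)
    hu N x
  set G := ‖fderiv ℝ (u t) x‖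
  set h := cutoff c x * frobNorm (hess d (u t) x)
  set k := 2 * d * K + 32 * K
  have hneg : ν t x * ((18 * K - 2 * a) * G ^ 2 + k * G * h - 2 * h ^ 2) < 0 := by
    refine mul_neg_of_pos_of_neg (hB.pos t ht x) ?_
    rw [ha]
    nlinarith [sq_nonneg (k * G - h), sq_nonneg h, pow_pos hgrad 2,
      mul_nonneg hK (sq_nonneg G), sq_nonneg (k * G)]
  linarith

end BernsteinBounds

namespace IsClassicalSolution

variable {ν₀ Mu Mf R N : ℝ}

theorem eventually_forall_norm_fderiv_le (hc : SmoothEllipticCoeffs (Ici s) Q b) (hν₀ : 0 < ν₀)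
    (hell : ∀ t ∈ Ici s, ∀ x ξ, ν₀ * (ξ ⬝ᵥ ξ) ≤ coeffForm (Q t x) ξ ξ)
    (hu : IsClassicalSolution d Q b (fun _ _ => 0) s f u) (hbdd : BoundedOnStrips d s u)
    (hf : ContDiff ℝ 1 f) (hMf : ∀ x, ‖fderiv ℝ f x‖ ≤ Mf) (R : ℝ) :
    ∀ᶠ t in 𝓝[>] s, ∀ x ∈ Metric.closedBall 0 R, ‖fderiv ℝ (u t) x‖ ≤ Mf + 1 :=
  eventually_forall_mem_of_isCompact (isCompact_closedBall 0 R) fun x _ =>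
    hu.eventually_norm_fderiv_le hc hν₀ hell hbdd hf ((hMf x).trans_lt (lt_add_one Mf))

theorem sq_cutoff_mul_sq_norm_fderiv_le (hc : SmoothEllipticCoeffs (Ici s) Q b) (hν₀ : 0 < ν₀)
    (hell : ∀ t ∈ Ici s, ∀ x ξ, ν₀ * (ξ ⬝ᵥ ξ) ≤ coeffForm (Q t x) ξ ξ)
    (hK : 0 ≤ K) (hB : BernsteinBounds (Ioc s T) ν Q b K)
    (hu : IsClassicalSolution d Q b (fun _ _ => 0) s f u) (hbdd : BoundedOnStrips d s u)
    (hMu : ∀ t ∈ Icc s T, ∀ x, |u t x| ≤ Mu) (hf : ContDiff ℝ 1 f)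
    (hMf : ∀ x, ‖fderiv ℝ f x‖ ≤ Mf) (ha : a = 18 * K + (2 * d * K + 32 * K) ^ 2 + 1)
    (hN : N = a * Mu ^ 2 + (Mf + 1) ^ 2) (hc₀ : 0 ≤ c) (hc₁ : c ≤ 1) (hcR : c * R ^ 2 = 1)
    (ht : t ∈ Ioc s T) (hx : ‖x‖ ≤ R) :
    cutoff c x * cutoff c x * ‖fderiv ℝ (u t) x‖ ^ 2 + (a * (u t x * u t x) + -N) ≤ 0 := by
  obtain ⟨t₀, hgrad₀, hst₀, ht₀⟩ :=
    ((hu.eventually_forall_norm_fderiv_le hc hν₀ hell hbdd hf hMf R).and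
      (Ioo_mem_nhdsGT ht.1)).exists
  have ha₀ : 0 ≤ a := by rw [ha]; positivity
  have hu_sq {τ : ℝ} (hsτ : s < τ) (hτ : τ ≤ t) (y : Euc d) :
      a * (u τ y * u τ y) ≤ a * Mu ^ 2 := by
    rw [← sq, ← sq_abs]
    gcongr
    exact hMu τ ⟨hsτ.le, hτ.trans ht.2⟩ y
  have hcE := hc.mono Ioi_subset_Ici_self
  have happrox := ((C12Approx.of_isC12 hcE.toEllipticCoeffs (IsC12.ofSpace
    ((contDiff_cutoff c).mul (contDiff_cutoff c)))).mul hcE.toEllipticCoeffs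
      (C12Approx.sq_norm_fderiv hcE hu)).add (C12Approx.of_isC12 hcE.toEllipticCoeffs
        (((IsC12.const a).mul (hu.isC12.mul hu.isC12)).add (IsC12.const (-N))))
  refine happrox.nonpos_of_parabolic_boundary hcE.toEllipticCoeffs hst₀ ?_ ?_ ?_ t
    ⟨ht₀.le, le_rfl⟩ x hx
  · intro y hy
    have hψ₀ := cutoff_nonneg hc₀ hcR hy
    have hψ₁ := cutoff_le_one (x := y) hc₀
    have hgrad : ‖fderiv ℝ (u t₀) y‖ ^ 2 ≤ (Mf + 1) ^ 2 := by
      gcongr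
      exact hgrad₀ y (mem_closedBall_zero_iff.2 hy)
    have hprod : cutoff c y * cutoff c y * ‖fderiv ℝ (u t₀) y‖ ^ 2 ≤ 1 * (Mf + 1) ^ 2 :=
      mul_le_mul (mul_le_one₀ hψ₁ hψ₀ hψ₁) hgrad (sq_nonneg _) zero_le_one
    linarith [hu_sq hst₀ ht₀.le y]
  · intro τ hτ y hy
    have hψ : cutoff c y = 0 := by rw [cutoff, hy, hcR, sub_self]
    rw [hψ]
    linarith [hu_sq (hst₀.trans_le hτ.1) hτ.2 y, sq_nonneg (Mf + 1)]
  · intro τ hτ y hy hpos _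
    have hsτ : s < τ := hst₀.trans hτ.1
    have hgrad : 0 < ‖fderiv ℝ (u τ) y‖ := by
      refine (norm_nonneg _).lt_of_ne' fun h => hpos.not_ge ?_
      rw [h]
      linarith [hu_sq hsτ hτ.2 y, sq_nonneg (Mf + 1)]
    exact hB.bernstein_op_neg (hcE.toEllipticCoeffs.mono Ioc_subset_Ioi_self) hK
      ⟨hsτ, hτ.2.trans ht.2⟩ hsτ hc₀ (mul_one_add_sq_norm_le_two hc₀ hc₁ hcR hy.le)
      (cutoff_nonneg hc₀ hcR hy.le) hu hgrad ha (-N)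

theorem exists_norm_fderiv_le (hc : SmoothEllipticCoeffs (Ici s) Q b) (hν₀ : 0 < ν₀)
    (hell : ∀ t ∈ Ici s, ∀ x ξ, ν₀ * (ξ ⬝ᵥ ξ) ≤ coeffForm (Q t x) ξ ξ)
    (hK : 0 ≤ K) (hB : BernsteinBounds (Ioc s T) ν Q b K) (hsT : s < T)
    (hu : IsClassicalSolution d Q b (fun _ _ => 0) s f u) (hbdd : BoundedOnStrips d s u)
    (hf : ContDiff ℝ 1 f) (hMf : ∀ x, ‖fderiv ℝ f x‖ ≤ Mf) :
    ∃ L, ∀ t ∈ Ioc s T, ∀ x, ‖fderiv ℝ (u t) x‖ ≤ L := by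
  obtain ⟨Mu, hMu⟩ := hbdd T hsT
  set a := 18 * K + (2 * d * K + 32 * K) ^ 2 + 1 with ha
  set N := a * Mu ^ 2 + (Mf + 1) ^ 2 with hN
  refine ⟨√(4 * N), fun t ht x => Real.le_sqrt_of_sq_le ?_⟩
  have hR : 1 ≤ (1 + 2 * ‖x‖) ^ 2 := one_le_pow₀ (by linarith [norm_nonneg x])
  set c := ((1 + 2 * ‖x‖) ^ 2)⁻¹
  have hcR : c * (1 + 2 * ‖x‖) ^ 2 = 1 := inv_mul_cancel₀ (by positivity)
  have hc₀ : 0 ≤ c := by positivity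
  have hkey := hu.sq_cutoff_mul_sq_norm_fderiv_le hc hν₀ hell hK hB hbdd hMu hf hMf ha hN hc₀
    (inv_le_one_of_one_le₀ hR) hcR ht (by linarith [norm_nonneg x])
  have hψ : 1 / 2 ≤ cutoff c x := by
    have : c * (2 * ‖x‖ ^ 2) ≤ c * (1 + 2 * ‖x‖) ^ 2 := by
      gcongr
      nlinarith [norm_nonneg x]
    rw [cutoff]
    linarith
  have hψ_sq : 1 / 4 ≤ cutoff c x * cutoff c x := by nlinarith
  have hu_sq : 0 ≤ a * (u t x * u t x) :=
    mul_nonneg (by rw [ha]; positivity) (mul_self_nonneg _)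
  linarith [mul_le_mul_of_nonneg_right hψ_sq (sq_nonneg ‖fderiv ℝ (u t) x‖)]

end IsClassicalSolution

end GradientBound

/-! ### Comparison with the solution issuing from `|∇f|^p` -/

section Lyapunov

variable {d : ℕ} {s T lam ε : ℝ} {Q : ℝ → Euc d → Fin d → Fin d → ℝ}
  {b : ℝ → Euc d → Fin d → ℝ} {φ f : Euc d → ℝ} {v : ℝ → Euc d → ℝ} {J : Set ℝ} {t : ℝ}

/-- A Lyapunov function over the time set `J`: positive, of class `C²`, blowing up at infinity,
and such that `e^{lam t} φ` is a strict supersolution. -/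
structure IsLyapunov (J : Set ℝ) (Q : ℝ → Euc d → Fin d → Fin d → ℝ)
    (b : ℝ → Euc d → Fin d → ℝ) (lam : ℝ) (φ : Euc d → ℝ) : Prop where
  contDiff : ContDiff ℝ 2 φ
  pos : ∀ x, 0 < φ x
  exists_forall_le : ∀ M : ℝ, ∃ R : ℝ, ∀ x : Euc d, R ≤ ‖x‖ → M ≤ φ x
  rate_nonneg : 0 ≤ lam
  Aop_lt : ∀ t ∈ J, ∀ x, Aop d Q b (fun _ _ => 0) t φ x < lam * φ x

/-- The perturbation of `v` by a small multiple of the supersolution built from a Lyapunov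
function; it makes a solution `v` a strict supersolution that is large outside a ball. -/
def lyapunovPerturbation (s lam ε : ℝ) (φ : Euc d → ℝ) (v : ℝ → Euc d → ℝ) (t : ℝ)
    (x : Euc d) : ℝ :=
  v t x + ε * Real.exp (lam * (t - s)) * φ x

namespace IsLyapunov

theorem mono {J' : Set ℝ} (hφ : IsLyapunov J Q b lam φ) (hJ : J' ⊆ J) :
    IsLyapunov J' Q b lam φ :=
  { hφ with Aop_lt := fun t ht => hφ.Aop_lt t (hJ ht) }

theorem isC12_lyapunovPerturbation (hφ : IsLyapunov J Q b lam φ) (hv : IsC12 s v) :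
    IsC12 s (lyapunovPerturbation s lam ε φ v) :=
  hv.add ((IsC12.ofTime (g := fun t => ε * Real.exp (lam * (t - s))) (by fun_prop)).mul
    (IsC12.ofSpace hφ.contDiff))

theorem add_le_lyapunovPerturbation (hφ : IsLyapunov J Q b lam φ) (hε : 0 ≤ ε) (ht : s ≤ t)
    (x : Euc d) : v t x + ε * φ x ≤ lyapunovPerturbation s lam ε φ v t x := by
  have hexp : 1 ≤ Real.exp (lam * (t - s)) :=
    Real.one_le_exp (mul_nonneg hφ.rate_nonneg (sub_nonneg.2 ht))
  have := (hφ.pos x).le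
  rw [lyapunovPerturbation]
  gcongr
  exact le_mul_of_one_le_right hε hexp

theorem lyapunovPerturbation_pos (hφ : IsLyapunov J Q b lam φ) (hε : 0 < ε) (ht : s ≤ t)
    {x : Euc d} (hv : 0 ≤ v t x) : 0 < lyapunovPerturbation s lam ε φ v t x :=
  (add_pos_of_nonneg_of_pos hv (mul_pos hε (hφ.pos x))).trans_le
    (hφ.add_le_lyapunovPerturbation hε.le ht x)

theorem parabolicOp_lyapunovPerturbation_pos (hφ : IsLyapunov J Q b lam φ)
    (hc : EllipticCoeffs (Ioi s) Q b) (hv : IsClassicalSolution d Q b (fun _ _ => 0) s f v)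
    (hε : 0 < ε) (ht : t ∈ J) (hst : s < t) (x : Euc d) :
    0 < parabolicOp Q b (lyapunovPerturbation s lam ε φ v) t x := by
  have hexp : IsC12 (d := d) s fun t _ => ε * Real.exp (lam * (t - s)) :=
    IsC12.ofTime (by fun_prop)
  have hderiv : deriv (fun t => ε * Real.exp (lam * (t - s))) t =
      lam * (ε * Real.exp (lam * (t - s))) := by
    have := ((((hasDerivAt_id t).sub_const s).const_mul lam).exp.const_mul ε).deriv
    simp only [id, mul_one] at this
    rw [this]
    ring
  have hop : parabolicOp Q b (lyapunovPerturbation s lam ε φ v) t x =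
      ε * Real.exp (lam * (t - s)) * (lam * φ x - Aop d Q b (fun _ _ => 0) t φ x) := by
    unfold lyapunovPerturbation
    rw [parabolicOp_add hv.isC12 (hexp.mul (IsC12.ofSpace hφ.contDiff)) hst,
      hv.parabolicOp_eq_zero hst, parabolicOp_mul hexp (IsC12.ofSpace hφ.contDiff) hst x
      (hc.symm hst x), parabolicOp_ofTime, parabolicOp_ofSpace, hderiv, grad_const,
      map_zero, LinearMap.zero_apply]
    ring
  rw [hop]
  exact mul_pos (mul_pos hε (Real.exp_pos _)) (sub_pos.2 (hφ.Aop_lt t ht x))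

end IsLyapunov

theorem le_of_forall_le_lyapunovPerturbation {a w : ℝ} {x : Euc d} (hw : 0 < w) (hφ : 0 < φ x)
    (h : ∀ ε > 0, a ≤ w * lyapunovPerturbation s lam ε φ v t x) : a ≤ w * v t x := by
  refine le_of_forall_pos_le_add fun κ hκ => ?_
  have hpos : 0 < w * (Real.exp (lam * (t - s)) * φ x) := by positivity
  refine (h _ (div_pos hκ hpos)).trans_eq ?_
  rw [lyapunovPerturbation]
  field_simp

theorem IsClassicalSolution.eventually_lt_exp_mul_lyapunovPerturbation
    (hv : IsClassicalSolution d Q b (fun _ _ => 0) s f v) (hφ : Continuous φ) (ω : ℝ) {m : ℝ}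
    {x : Euc d} (hm : m < f x + ε * φ x) :
    ∀ᶠ p in 𝓝[>] s ×ˢ 𝓝 x,
      m < Real.exp (ω * (p.1 - s)) * lyapunovPerturbation s lam ε φ v p.1 p.2 := by
  have hcont : ContinuousOn (fun p : ℝ × Euc d =>
      Real.exp (ω * (p.1 - s)) * lyapunovPerturbation s lam ε φ v p.1 p.2) (Ici s ×ˢ univ) :=
    ContinuousOn.mul (by fun_prop) (hv.cont.add (by fun_prop))
  refine ((tendsto_nhdsGE_prod_of_continuousOn hcont x).mono_left
    (prod_mono_left _ (nhdsWithin_mono s Ioi_subset_Ici_self))).eventually_const_lt ?_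
  simpa [lyapunovPerturbation, hv.init] using hm

theorem IsLyapunov.nonneg_of_isClassicalSolution (hφ : IsLyapunov (Ioc s T) Q b lam φ)
    (hc : EllipticCoeffs (Ioi s) Q b) (hv : IsClassicalSolution d Q b (fun _ _ => 0) s f v)
    (hbdd : BoundedOnStrips d s v) (hf : ∀ x, 0 ≤ f x) (ht : t ∈ Ioc s T) (x : Euc d) :
    0 ≤ v t x := by
  obtain ⟨M, hM⟩ := hbdd T (ht.1.trans_le ht.2)
  suffices h : ∀ ε > 0, 0 ≤ 1 * lyapunovPerturbation s lam ε φ v t x by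
    simpa only [one_mul] using le_of_forall_le_lyapunovPerturbation one_pos (hφ.pos x) h
  intro ε hε
  obtain ⟨R₀, hR₀⟩ := hφ.exists_forall_le (M / ε)
  have hpos_near : ∀ᶠ τ in 𝓝[>] s, ∀ y ∈ Metric.closedBall 0 (max R₀ ‖x‖),
      0 < lyapunovPerturbation s lam ε φ v τ y :=
    eventually_forall_mem_of_isCompact (isCompact_closedBall _ _) fun y _ => by
      simpa only [zero_mul, Real.exp_zero, one_mul] using
        hv.eventually_lt_exp_mul_lyapunovPerturbation hφ.contDiff.continuous 0
          (add_pos_of_nonneg_of_pos (hf y) (mul_pos hε (hφ.pos y)))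
  obtain ⟨t₀, hinit, hst₀, ht₀⟩ := (hpos_near.and (Ioo_mem_nhdsGT ht.1)).exists
  have hZ : IsC12 s (lyapunovPerturbation s lam ε φ v) := hφ.isC12_lyapunovPerturbation hv.isC12
  have hneg := (C12Approx.of_isC12 hc ((IsC12.const (-1)).mul hZ)).nonpos_of_parabolic_boundary
    hc hst₀ (R := max R₀ ‖x‖) (T := t) ?_ ?_ ?_ t ⟨ht₀.le, le_rfl⟩ x (le_max_right _ _)
  · linarith
  · intro y hy
    linarith [hinit y (mem_closedBall_zero_iff.2 hy)]
  · intro τ hτ y hy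
    have hMφ := (div_le_iff₀ hε).1 (hR₀ y ((le_max_left _ _).trans_eq hy.symm))
    have hsτ : s ≤ τ := hst₀.le.trans hτ.1
    have := hφ.add_le_lyapunovPerturbation (v := v) hε.le hsτ y
    linarith [(abs_le.1 (hM τ ⟨hsτ, hτ.2.trans ht.2⟩ y)).1]
  · intro τ hτ y _ _ _
    have hsτ : s < τ := hst₀.trans hτ.1
    rw [parabolicOp_mul (IsC12.const (-1)) hZ hsτ y (hc.symm hsτ y), parabolicOp_const, grad_const,
      map_zero, LinearMap.zero_apply]
    linarith [hφ.parabolicOp_lyapunovPerturbation_pos hc hv hε ⟨hsτ, hτ.2.trans ht.2⟩ hsτ y]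

end Lyapunov

section ComparisonWeight

variable {d : ℕ} {s q ω : ℝ} {Q : ℝ → Euc d → Fin d → Fin d → ℝ} {b : ℝ → Euc d → Fin d → ℝ}
  {Z u : ℝ → Euc d → ℝ} {t : ℝ} {x : Euc d}

/-- The weight `η = e^{-qω(t-s)} Z^{-q}` multiplying `|∇u|²` in the comparison with a
supersolution `Z`; at `q = 2 / p`, `η |∇u|² ≤ 1` means `|∇u|^p ≤ e^{ω(t-s)} Z`. -/
def comparisonWeight (s q ω : ℝ) (Z : ℝ → Euc d → ℝ) (t : ℝ) (x : Euc d) : ℝ :=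
  Real.exp (-(q * ω) * (t - s)) * Z t x ^ (-q)

theorem comparisonWeight_pos (hZ : 0 < Z t x) : 0 < comparisonWeight s q ω Z t x :=
  mul_pos (Real.exp_pos _) (Real.rpow_pos_of_pos hZ _)

theorem isC12_comparisonWeight (hZ : IsC12 s Z) (hpos : ∀ t, s < t → ∀ x, 0 < Z t x) :
    IsC12 s (comparisonWeight s q ω Z) :=
  (IsC12.ofTime (by fun_prop)).mul (hZ.rpow hpos (-q))

theorem comparisonWeight_mul_sq_le_one_iff {p G : ℝ} (hp : 0 < p) (hG : 0 ≤ G)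
    (hZ : 0 < Z t x) : comparisonWeight s (2 / p) ω Z t x * G ^ 2 ≤ 1 ↔
      G ^ p ≤ Real.exp (ω * (t - s)) * Z t x := by
  have hsq : G ^ 2 = (G ^ p) ^ (2 / p) := by
    rw [← Real.rpow_mul hG, mul_div_cancel₀ _ hp.ne', Real.rpow_two]
  have hweight : comparisonWeight s (2 / p) ω Z t x =
      ((Real.exp (ω * (t - s)) * Z t x) ^ (2 / p))⁻¹ := by
    rw [comparisonWeight, Real.mul_rpow (Real.exp_pos _).le hZ.le, Real.rpow_neg hZ.le, mul_inv,
      ← Real.exp_mul, ← Real.exp_neg]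
    congr 2
    ring
  have hbound : 0 < Real.exp (ω * (t - s)) * Z t x := mul_pos (Real.exp_pos _) hZ
  rw [hsq, hweight, inv_mul_le_iff₀ (Real.rpow_pos_of_pos hbound _), mul_one,
    Real.rpow_le_rpow_iff (Real.rpow_nonneg hG p) hbound.le (by positivity)]

theorem grad_comparisonWeight (hZ : IsC12 s Z) (hpos : ∀ t, s < t → ∀ x, 0 < Z t x)
    (ht : s < t) : grad (comparisonWeight s q ω Z t) x =
      (-(q * comparisonWeight s q ω Z t x / Z t x)) • grad (Z t) x := by
  have hmul := grad_mul (f := fun _ => Real.exp (-(q * ω) * (t - s)))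
    (differentiableAt_const _) ((hZ.rpow hpos (-q)).differentiable ht x)
  unfold comparisonWeight
  rw [hmul, grad_const, smul_zero, add_zero, grad_rpow (hZ.differentiable ht x) (hpos t ht x),
    smul_smul, Real.rpow_sub_one (hpos t ht x).ne']
  congr 1
  ring

theorem parabolicOp_comparisonWeight_lt (hZ : IsC12 s Z) (hpos : ∀ t, s < t → ∀ x, 0 < Z t x)
    (hQ : ∀ i j, Q t x i j = Q t x j i) (ht : s < t) (hop : 0 < parabolicOp Q b Z t x)
    (hq : 0 < q) :
    parabolicOp Q b (comparisonWeight s q ω Z) t x <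
      -(q * ω) * comparisonWeight s q ω Z t x
        - (q + 1) / q / comparisonWeight s q ω Z t x * coeffForm (Q t x)
          (grad (comparisonWeight s q ω Z t) x) (grad (comparisonWeight s q ω Z t) x) := by
  have hz := hpos t ht x
  have hexp : IsC12 (d := d) s fun t _ => Real.exp (-(q * ω) * (t - s)) :=
    IsC12.ofTime (by fun_prop)
  have hderiv : deriv (fun t => Real.exp (-(q * ω) * (t - s))) t =
      -(q * ω) * Real.exp (-(q * ω) * (t - s)) := by
    have := (((hasDerivAt_id t).sub_const s).const_mul (-(q * ω))).exp.deriv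
    simp only [id, mul_one] at this
    rw [this, mul_comm]
  set e := comparisonWeight s q ω Z t x with he
  have hη : 0 < e := comparisonWeight_pos hz
  set X := coeffForm (Q t x) (grad (Z t) x) (grad (Z t) x)
  have hop_eq : parabolicOp Q b (comparisonWeight s q ω Z) t x =
      -(q * ω) * e - q * e / Z t x * parabolicOp Q b Z t x - q * (q + 1) * e / Z t x ^ 2 * X := by
    unfold comparisonWeight
    rw [parabolicOp_mul hexp (hZ.rpow hpos (-q)) ht x hQ, parabolicOp_ofTime, hderiv,
      parabolicOp_rpow hZ hpos (-q) ht, grad_const, map_zero, LinearMap.zero_apply,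
      Real.rpow_sub_one hz.ne', Real.rpow_sub hz, Real.rpow_two, he, comparisonWeight]
    ring
  have hform : (q + 1) / q / e * coeffForm (Q t x)
      (grad (comparisonWeight s q ω Z t) x) (grad (comparisonWeight s q ω Z t) x) =
        q * (q + 1) * e / Z t x ^ 2 * X := by
    simp only [grad_comparisonWeight hZ hpos ht, map_smul, LinearMap.smul_apply, smul_eq_mul,
      ← he]
    field_simp
    rfl
  rw [hop_eq, hform]
  linarith [mul_pos (div_pos (mul_pos hq hη) hz) hop]

/-- Pointwise bounds over the time set `J` under which the gradient estimate with exponent `p`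
holds at the rate `ω`: ellipticity with constant `ν`, a bound `c` on the gradient of the
diffusion, an upper bound `r` on the Jacobian of the drift, and the balance between them. -/
structure GradientRateBounds (J : Set ℝ) (ν c r : ℝ → Euc d → ℝ)
    (Q : ℝ → Euc d → Fin d → Fin d → ℝ) (b : ℝ → Euc d → Fin d → ℝ) (p ω : ℝ) : Prop where
  pos : ∀ t ∈ J, ∀ x, 0 < ν t x
  elliptic : ∀ t ∈ J, ∀ x ξ, ν t x * (ξ ⬝ᵥ ξ) ≤ coeffForm (Q t x) ξ ξ
  nonneg : ∀ t ∈ J, ∀ x, 0 ≤ c t x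
  norm_fderiv_diffusion_le : ∀ t ∈ J, ∀ x i j, ‖fderiv ℝ (fun y => Q t y i j) x‖ ≤ c t x
  jacobian_drift_le : ∀ t ∈ J, ∀ x ξ,
    coeffForm (fun i j => grad (fun y => b t y i) x j) ξ ξ ≤ r t x * (ξ ⬝ᵥ ξ)
  rate_le : ∀ t ∈ J, ∀ x,
    r t x + (d : ℝ) ^ 2 * c t x ^ 2 / (4 * min (p - 1) 1 * ν t x) ≤ ω / p

theorem GradientRateBounds.mono {J J' : Set ℝ} {ν c r : ℝ → Euc d → ℝ}
    {Q : ℝ → Euc d → Fin d → Fin d → ℝ} {b : ℝ → Euc d → Fin d → ℝ} {p ω : ℝ}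
    (hB : GradientRateBounds J ν c r Q b p ω) (hJ : J' ⊆ J) :
    GradientRateBounds J' ν c r Q b p ω :=
  ⟨fun t ht => hB.pos t (hJ ht), fun t ht => hB.elliptic t (hJ ht), fun t ht => hB.nonneg t (hJ ht),
    fun t ht => hB.norm_fderiv_diffusion_le t (hJ ht), fun t ht => hB.jacobian_drift_le t (hJ ht),
    fun t ht => hB.rate_le t (hJ ht)⟩

/-- `G`, `h`, `F`, `M`, `S` stand for `|∇u|`, the Frobenius norm of the Hessian `H`, `∑ₖ Q(Hₖ, Hₖ)`,
`Q(H∇u, H∇u)` and the first-order source tested against `∇u`. -/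
theorem bernstein_rpow_balance_nonpos {p ω ν c r m G h F M S : ℝ} (hp : 1 < p) (hν : 0 < ν)
    (hG : 0 < G) (hF : ν * h ^ 2 ≤ F) (hM₀ : 0 ≤ M) (hM : M ≤ G ^ 2 * F)
    (hS : S ≤ m * c * G * h + r * G ^ 2)
    (hrate : r + m ^ 2 * c ^ 2 / (4 * min (p - 1) 1 * ν) ≤ ω / p) :
    -(2 / p * ω) * G ^ 2 + 2 * (2 - p) * (M / G ^ 2) + 2 * S - 2 * F ≤ 0 := by
  set κ := min (p - 1) 1
  have hκ : 0 < κ := lt_min (sub_pos.2 hp) one_pos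
  have hMF : M / G ^ 2 ≤ F := (div_le_iff₀' (by positivity)).2 hM
  have hMG : 0 ≤ M / G ^ 2 := by positivity
  have : 0 ≤ F := hMG.trans hMF
  have hhess : 2 * (2 - p) * (M / G ^ 2) - 2 * F ≤ -(2 * κ * F) := by
    rcases le_total p 2 with h | h
    · have : κ ≤ p - 1 := min_le_left _ _
      nlinarith
    · have : κ ≤ 1 := min_le_right _ _
      nlinarith
  have hyoung : 2 * (m * c * G * h) ≤
      2 * κ * (ν * h ^ 2) + 2 * (m ^ 2 * c ^ 2 / (4 * κ * ν)) * G ^ 2 := by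
    have hsq : 2 * κ * (ν * h ^ 2) + 2 * (m ^ 2 * c ^ 2 / (4 * κ * ν)) * G ^ 2
        - 2 * (m * c * G * h) = (2 * κ * ν * h - m * c * G) ^ 2 / (2 * κ * ν) := by
      field_simp
      ring
    have : 0 ≤ (2 * κ * ν * h - m * c * G) ^ 2 / (2 * κ * ν) := by positivity
    linarith
  have hrateG := mul_le_mul_of_nonneg_right hrate (sq_nonneg G)
  have hFκ := mul_le_mul_of_nonneg_left hF (mul_nonneg zero_le_two hκ.le)
  rw [show 2 / p * ω = 2 * (ω / p) by ring]
  linarith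

theorem bernstein_rpow_neg {p ω η G F M S P : ℝ} (hp : 0 < p) (hη : 0 < η) (hG : 0 < G)
    (hP : P < -(2 / p * ω) * η
      - (2 / p + 1) / (2 / p) / η * (-(2 * η / G ^ 2) * (-(2 * η / G ^ 2) * M)))
    (hbalance : -(2 / p * ω) * G ^ 2 + 2 * (2 - p) * (M / G ^ 2) + 2 * S - 2 * F ≤ 0) :
    η * (2 * S - 2 * F) + G ^ 2 * P - 2 * (2 * (-(2 * η / G ^ 2) * M)) < 0 := by
  have hPG := mul_lt_mul_of_pos_left hP (pow_pos hG 2)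
  calc η * (2 * S - 2 * F) + G ^ 2 * P - 2 * (2 * (-(2 * η / G ^ 2) * M))
      < η * (2 * S - 2 * F) + G ^ 2 * (-(2 / p * ω) * η - (2 / p + 1) / (2 / p) / η
          * (-(2 * η / G ^ 2) * (-(2 * η / G ^ 2) * M)))
        - 2 * (2 * (-(2 * η / G ^ 2) * M)) := by linarith
    _ = η * (-(2 / p * ω) * G ^ 2 + 2 * (2 - p) * (M / G ^ 2) + 2 * S - 2 * F) := by
      field_simp
      ring
    _ ≤ 0 := mul_nonpos_of_nonneg_of_nonpos hη.le hbalance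

theorem GradientRateBounds.comparison_op_neg {J : Set ℝ} {ν c r : ℝ → Euc d → ℝ} {p : ℝ}
    (hB : GradientRateBounds J ν c r Q b p ω) (hp : 1 < p) (hc : EllipticCoeffs J Q b)
    (hZ : IsC12 s Z) (hpos : ∀ t, s < t → ∀ x, 0 < Z t x) (ht : t ∈ J) (hst : s < t)
    (hop : 0 < parabolicOp Q b Z t x) (hgrad : 0 < ‖fderiv ℝ (u t) x‖)
    (hD : comparisonWeight s (2 / p) ω Z t x • ((2 : ℝ) • ∑ k, grad (u t) x k • hess d (u t) x k)
      + ‖fderiv ℝ (u t) x‖ ^ 2 • grad (comparisonWeight s (2 / p) ω Z t) x = 0) :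
    comparisonWeight s (2 / p) ω Z t x * (2 * ∑ k, grad (u t) x k * gradSource Q b u t x k
        - 2 * ∑ k, coeffForm (Q t x) (hess d (u t) x k) (hess d (u t) x k))
      + ‖fderiv ℝ (u t) x‖ ^ 2 * parabolicOp Q b (comparisonWeight s (2 / p) ω Z) t x
      - 2 * coeffForm (Q t x) (grad (comparisonWeight s (2 / p) ω Z t) x)
          ((2 : ℝ) • ∑ k, grad (u t) x k • hess d (u t) x k) < 0 := by
  have hp₀ : 0 < p := one_pos.trans hp
  have hη : 0 < comparisonWeight s (2 / p) ω Z t x := comparisonWeight_pos (hpos t hst x)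
  have hweight := parabolicOp_comparisonWeight_lt (ω := ω) hZ hpos (hc.symm ht x) hst hop
    (q := 2 / p) (by positivity)
  have hcross : coeffForm (Q t x) (∑ k, grad (u t) x k • hess d (u t) x k)
      (∑ k, grad (u t) x k • hess d (u t) x k) ≤ ‖fderiv ℝ (u t) x‖ ^ 2
        * ∑ k, coeffForm (Q t x) (hess d (u t) x k) (hess d (u t) x k) := by
    rw [← grad_dotProduct_grad]
    exact coeffForm_sum_smul_le (hc.posSemidef t ht x) _ _
  have hbalance := bernstein_rpow_balance_nonpos hp (hB.pos t ht x) hgrad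
    (mul_sq_frobNorm_le (hB.elliptic t ht x) _) (hc.coeffForm_nonneg ht x _) hcross
    (sum_grad_mul_gradSource_le (u := u) (hB.nonneg t ht x) (hB.norm_fderiv_diffusion_le t ht x)
      (hB.jacobian_drift_le t ht x)) (hB.rate_le t ht x)
  set η := comparisonWeight s (2 / p) ω Z t x
  set G := ‖fderiv ℝ (u t) x‖
  set y := grad (comparisonWeight s (2 / p) ω Z t) x
  set m := ∑ k, grad (u t) x k • hess d (u t) x k
  have hy : y = (-(2 * η / G ^ 2)) • m := by
    have : G ^ 2 • y = G ^ 2 • ((-(2 * η / G ^ 2)) • m) := by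
      rw [eq_neg_of_add_eq_zero_right hD, smul_smul, smul_smul, ← neg_smul]
      congr 1
      field_simp
    exact smul_right_injective _ (pow_pos hgrad 2).ne' this
  rw [hy] at hweight ⊢
  simp only [map_smul, LinearMap.smul_apply, smul_eq_mul] at hweight ⊢
  exact bernstein_rpow_neg hp₀ hη hgrad hweight hbalance

theorem rpow_le_exp_mul_of_le {p G L m T : ℝ} (hp : 0 ≤ p) (hG : 0 ≤ G) (hGL : G ≤ L)
    (hst : s ≤ t) (htT : t ≤ T) (hm : L ^ p * Real.exp (|ω| * (T - s)) ≤ m) :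
    G ^ p ≤ Real.exp (ω * (t - s)) * m := by
  have hLp : 0 ≤ L ^ p := Real.rpow_nonneg (hG.trans hGL) p
  have hexp : 1 ≤ Real.exp (ω * (t - s)) * Real.exp (|ω| * (T - s)) := by
    rw [← Real.exp_add]
    refine Real.one_le_exp ?_
    have hω : -|ω| * (t - s) ≤ ω * (t - s) :=
      mul_le_mul_of_nonneg_right (neg_abs_le ω) (sub_nonneg.2 hst)
    have hT : |ω| * (t - s) ≤ |ω| * (T - s) := by gcongr
    linarith
  calc G ^ p ≤ L ^ p := Real.rpow_le_rpow hG hGL hp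
    _ ≤ L ^ p * (Real.exp (ω * (t - s)) * Real.exp (|ω| * (T - s))) :=
      le_mul_of_one_le_right hLp hexp
    _ = Real.exp (ω * (t - s)) * (L ^ p * Real.exp (|ω| * (T - s))) := by ring
    _ ≤ Real.exp (ω * (t - s)) * m := by gcongr

end ComparisonWeight

namespace IsClassicalSolution

variable {d : ℕ} {s T p ω ν₀ lam ε L : ℝ} {Q : ℝ → Euc d → Fin d → Fin d → ℝ}
  {b : ℝ → Euc d → Fin d → ℝ} {u v : ℝ → Euc d → ℝ} {f φ : Euc d → ℝ} {x : Euc d}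
  {ν c r : ℝ → Euc d → ℝ}

theorem eventually_norm_fderiv_rpow_le (hc : SmoothEllipticCoeffs (Ici s) Q b) (hν₀ : 0 < ν₀)
    (hell : ∀ t ∈ Ici s, ∀ x ξ, ν₀ * (ξ ⬝ᵥ ξ) ≤ coeffForm (Q t x) ξ ξ)
    (hu : IsClassicalSolution d Q b (fun _ _ => 0) s f u) (hbdd : BoundedOnStrips d s u)
    (hf : ContDiff ℝ 1 f) (hp : 0 ≤ p) {m : ℝ} (hm : ‖fderiv ℝ f x‖ ^ p < m) :
    ∀ᶠ q in 𝓝[>] s ×ˢ 𝓝 x, ‖fderiv ℝ (u q.1) q.2‖ ^ p ≤ m := by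
  have hrpow : ∀ᶠ L in 𝓝[>] ‖fderiv ℝ f x‖, L ^ p < m :=
    ((Real.continuousAt_rpow_const _ p (Or.inr hp)).eventually_lt_const hm).filter_mono
      nhdsWithin_le_nhds
  obtain ⟨L, hLm, hL⟩ := (hrpow.and self_mem_nhdsWithin).exists
  filter_upwards [hu.eventually_norm_fderiv_le hc hν₀ hell hbdd hf hL] with q hq
  exact (Real.rpow_le_rpow (norm_nonneg _) hq hp).trans hLm.le

theorem eventually_norm_fderiv_rpow_le_lyapunovPerturbation
    (hc : SmoothEllipticCoeffs (Ici s) Q b) (hν₀ : 0 < ν₀)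
    (hell : ∀ t ∈ Ici s, ∀ x ξ, ν₀ * (ξ ⬝ᵥ ξ) ≤ coeffForm (Q t x) ξ ξ)
    (hu : IsClassicalSolution d Q b (fun _ _ => 0) s f u) (hbdd : BoundedOnStrips d s u)
    (hf : ContDiff ℝ 1 f)
    (hv : IsClassicalSolution d Q b (fun _ _ => 0) s (fun x => ‖fderiv ℝ f x‖ ^ p) v)
    (hp : 0 ≤ p) (hφ : Continuous φ) (hφ₀ : ∀ x, 0 < φ x) (hε : 0 < ε) (R : ℝ) :
    ∀ᶠ t in 𝓝[>] s, ∀ x ∈ Metric.closedBall 0 R, ‖fderiv ℝ (u t) x‖ ^ p ≤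
      Real.exp (ω * (t - s)) * lyapunovPerturbation s lam ε φ v t x := by
  refine eventually_forall_mem_of_isCompact (isCompact_closedBall 0 R) fun x _ => ?_
  obtain ⟨m, hfm, hmφ⟩ := exists_between (lt_add_of_pos_right (‖fderiv ℝ f x‖ ^ p)
    (mul_pos hε (hφ₀ x)))
  filter_upwards [hu.eventually_norm_fderiv_rpow_le hc hν₀ hell hbdd hf hp hfm,
    hv.eventually_lt_exp_mul_lyapunovPerturbation hφ ω hmφ] with q hgrad hpert
  exact hgrad.trans hpert.le

theorem norm_fderiv_rpow_le_lyapunovPerturbation (hc : SmoothEllipticCoeffs (Ici s) Q b)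
    (hν₀ : 0 < ν₀) (hell : ∀ t ∈ Ici s, ∀ x ξ, ν₀ * (ξ ⬝ᵥ ξ) ≤ coeffForm (Q t x) ξ ξ)
    (hu : IsClassicalSolution d Q b (fun _ _ => 0) s f u) (hbdd : BoundedOnStrips d s u)
    (hf : ContDiff ℝ 1 f)
    (hv : IsClassicalSolution d Q b (fun _ _ => 0) s (fun x => ‖fderiv ℝ f x‖ ^ p) v)
    (hv₀ : ∀ t, s < t → ∀ x, 0 ≤ v t x) (hφ : IsLyapunov (Ioc s T) Q b lam φ)
    (hL : ∀ t ∈ Ioc s T, ∀ x, ‖fderiv ℝ (u t) x‖ ≤ L)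
    (hB : GradientRateBounds (Ioc s T) ν c r Q b p ω) (hp : 1 < p) (hsT : s < T) (hε : 0 < ε)
    (x : Euc d) : ‖fderiv ℝ (u T) x‖ ^ p ≤
      Real.exp (ω * (T - s)) * lyapunovPerturbation s lam ε φ v T x := by
  have hp₀ : 0 < p := one_pos.trans hp
  have hcE := hc.mono Ioi_subset_Ici_self
  set Z := lyapunovPerturbation s lam ε φ v
  have hZ : IsC12 s Z := hφ.isC12_lyapunovPerturbation hv.isC12
  have hZpos : ∀ t, s < t → ∀ x, 0 < Z t x := fun t ht x =>
    hφ.lyapunovPerturbation_pos hε ht.le (hv₀ t ht x)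
  have hiff {t : ℝ} (ht : s < t) (x : Euc d) :
      comparisonWeight s (2 / p) ω Z t x * ‖fderiv ℝ (u t) x‖ ^ 2 + -1 ≤ 0 ↔
        ‖fderiv ℝ (u t) x‖ ^ p ≤ Real.exp (ω * (t - s)) * Z t x := by
    rw [← comparisonWeight_mul_sq_le_one_iff hp₀ (norm_nonneg _) (hZpos t ht x), ← sub_eq_add_neg,
      sub_nonpos]
  obtain ⟨R₀, hR₀⟩ := hφ.exists_forall_le (L ^ p * Real.exp (|ω| * (T - s)) / ε)
  obtain ⟨t₀, hinit, hst₀, ht₀⟩ := ((hu.eventually_norm_fderiv_rpow_le_lyapunovPerturbation hc hν₀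
    hell hbdd hf hv hp₀.le hφ.contDiff.continuous hφ.pos hε (max R₀ ‖x‖)).and
      (Ioo_mem_nhdsGT hsT)).exists
  have happrox := ((C12Approx.of_isC12 hcE.toEllipticCoeffs (isC12_comparisonWeight
    (q := 2 / p) (ω := ω) hZ hZpos)).mul hcE.toEllipticCoeffs (C12Approx.sq_norm_fderiv hcE
      hu)).add (C12Approx.of_isC12 hcE.toEllipticCoeffs (IsC12.const (-1)))
  refine (hiff hsT x).1 (happrox.nonpos_of_parabolic_boundary hcE.toEllipticCoeffs hst₀ ?_ ?_ ?_ T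
    ⟨ht₀.le, le_rfl⟩ x (le_max_right R₀ _))
  · exact fun y hy => (hiff hst₀ y).2 (hinit y (mem_closedBall_zero_iff.2 hy))
  · intro t ht y hy
    have hst := hst₀.trans_le ht.1
    have hLφ := (div_le_iff₀' hε).1 (hR₀ y ((le_max_left _ _).trans_eq hy.symm))
    refine (hiff hst y).2 (rpow_le_exp_mul_of_le hp₀.le (norm_nonneg _) (hL t ⟨hst, ht.2⟩ y)
      hst.le ht.2 (hLφ.trans ?_))
    exact (le_add_of_nonneg_left (hv₀ t hst y)).trans
      (hφ.add_le_lyapunovPerturbation hε.le hst.le y)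
  · intro t ht y _ hpos hD
    have hst : s < t := hst₀.trans ht.1
    have hgrad : 0 < ‖fderiv ℝ (u t) y‖ := by
      refine (norm_nonneg _).lt_of_ne' fun h => hpos.not_ge ?_
      rw [h]
      norm_num
    rw [grad_const, add_zero] at hD
    rw [parabolicOp_const, add_zero]
    exact hB.comparison_op_neg hp (hcE.toEllipticCoeffs.mono Ioc_subset_Ioi_self) hZ hZpos
      ⟨hst, ht.2⟩ hst
      (hφ.parabolicOp_lyapunovPerturbation_pos hcE.toEllipticCoeffs hv hε ⟨hst, ht.2⟩ hst y)
      hgrad hD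

end IsClassicalSolution

/-! ### From the structural hypotheses to the gradient estimate -/

section Hypotheses

variable {d : ℕ} {I : Set ℝ} {Q : ℝ → Euc d → Fin d → Fin d → ℝ} {b : ℝ → Euc d → Fin d → ℝ}

theorem sq_norm_toLp_eq_dotProduct (ξ : Fin d → ℝ) :
    ‖(WithLp.toLp 2 ξ : Euc d)‖ ^ 2 = ξ ⬝ᵥ ξ := by
  rw [EuclideanSpace.real_norm_sq_eq]
  exact Finset.sum_congr rfl fun i _ => sq (ξ i)

theorem minEig_mul_dotProduct_le {A : Fin d → Fin d → ℝ} (hA : 0 < minEig d A)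
    (ξ : Fin d → ℝ) : minEig d A * (ξ ⬝ᵥ ξ) ≤ coeffForm A ξ ξ := by
  have hbdd : BddBelow {r : ℝ | ∃ ξ : Euc d, ‖ξ‖ = 1 ∧ ∑ i, ∑ j, A i j * ξ i * ξ j = r} := by
    by_contra h
    exact hA.ne' (Real.sInf_of_not_bddBelow h)
  rcases eq_or_ne ξ 0 with rfl | hξ
  · simp
  set x : Euc d := WithLp.toLp 2 ξ with hx
  have hnorm : 0 < ‖x‖ := norm_pos_iff.2 fun h => hξ ((WithLp.toLp_eq_zero 2).1 h)
  have hunit : minEig d A ≤ coeffForm A (‖x‖⁻¹ • ξ) (‖x‖⁻¹ • ξ) :=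
    csInf_le hbdd ⟨‖x‖⁻¹ • x, by rw [norm_smul, norm_inv, norm_norm, inv_mul_cancel₀ hnorm.ne'],
      (coeffForm_apply A _ _).symm⟩
  rw [LinearMap.BilinForm.smul_left, LinearMap.BilinForm.smul_right, ← mul_assoc, ← mul_inv, ← sq,
    inv_mul_eq_div, le_div_iff₀ (by positivity), hx, sq_norm_toLp_eq_dotProduct] at hunit
  exact hunit

theorem posSemidef_of_minEig_pos {A : Fin d → Fin d → ℝ} (hsymm : ∀ i j, A i j = A j i)
    (hA : 0 < minEig d A) : (Matrix.of A).PosSemidef := by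
  refine Matrix.PosSemidef.of_dotProduct_mulVec_nonneg (Matrix.IsHermitian.ext fun i j => ?_)
    fun ξ => ?_
  · simpa using hsymm j i
  · have hform : coeffForm A ξ ξ = star ξ ⬝ᵥ (Matrix.of A).mulVec ξ := by
      rw [coeffForm, Matrix.toBilin'_apply', star_trivial]
    rw [← hform]
    exact (mul_nonneg hA.le (dotProduct_self_star_nonneg ξ)).trans (minEig_mul_dotProduct_le hA ξ)

theorem coeffForm_le_of_forall_euc {A : Fin d → Fin d → ℝ} {r : ℝ}
    (h : ∀ ξ : Euc d, ∑ i, ∑ j, A i j * ξ i * ξ j ≤ r * ‖ξ‖ ^ 2) (ξ : Fin d → ℝ) :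
    coeffForm A ξ ξ ≤ r * (ξ ⬝ᵥ ξ) := by
  rw [coeffForm_apply, ← sq_norm_toLp_eq_dotProduct]
  exact h (WithLp.toLp 2 ξ)

theorem LocHolderParab.continuousOn {α : ℝ} (hα : 0 < α) {g : ℝ → Euc d → ℝ}
    (hg : LocHolderParab d α I g) :
    ContinuousOn (fun p : ℝ × Euc d => g p.1 p.2) (I ×ˢ univ) := by
  refine continuousOn_iff_continuous_domRestrict.2 (SeqContinuous.continuous fun u p hup => ?_)
  obtain ⟨C, -, hC⟩ := hg (Subtype.val '' insert p (range u))
    (hup.isCompact_insert_range.image continuous_subtype_val) (Subtype.coe_image_subset _ _)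
  have hdist : Continuous fun q : ↥(I ×ˢ (univ : Set (Euc d))) => C * pdist d q p ^ α := by
    unfold pdist
    exact (Continuous.rpow_const (by fun_prop) fun _ => Or.inr hα.le).const_mul C
  have hzero : C * pdist d p p ^ α = 0 := by simp [pdist, Real.zero_rpow hα.ne']
  refine tendsto_iff_dist_tendsto_zero.2 (squeeze_zero (fun _ => dist_nonneg) (fun n => ?_)
    (hzero ▸ (hdist.tendsto p).comp hup))
  exact hC _ ⟨u n, mem_insert_of_mem _ (mem_range_self n), rfl⟩ _ ⟨p, mem_insert _ _, rfl⟩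

theorem smoothEllipticCoeffs_of_locHolderParab {α : ℝ} (hα : 0 < α)
    (hQhold : ∀ i j, LocHolderParab d α I fun t x => Q t x i j)
    (hbhold : ∀ j, LocHolderParab d α I fun t x => b t x j)
    (hsymm : ∀ t ∈ I, ∀ x, ∀ i j, Q t x i j = Q t x j i)
    (hell : ∀ t ∈ I, ∀ x, 0 < minEig d (Q t x))
    (hQdiff : ∀ t ∈ I, ∀ x i j, DifferentiableAt ℝ (fun y => Q t y i j) x)
    (hbdiff : ∀ t ∈ I, ∀ x j, DifferentiableAt ℝ (fun y => b t y j) x)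
    (hgrad : ∃ α' ∈ Ioo (0 : ℝ) 1,
      (∀ i j k, LocHolderParab d α' I
        fun t x => fderiv ℝ (fun y => Q t y i j) x (EuclideanSpace.single k 1)) ∧
      ∀ j k, LocHolderParab d α' I
        fun t x => fderiv ℝ (fun y => b t y j) x (EuclideanSpace.single k 1)) :
    SmoothEllipticCoeffs I Q b where
  posSemidef t ht x := posSemidef_of_minEig_pos (hsymm t ht x) (hell t ht x)
  cont_diffusion := continuousOn_pi.2 fun i => continuousOn_pi.2 fun j =>
    (hQhold i j).continuousOn hα
  cont_drift := continuousOn_pi.2 fun j => (hbhold j).continuousOn hα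
  diff_diffusion t ht i j x := hQdiff t ht x i j
  diff_drift t ht j x := hbdiff t ht x j
  grad_diffusion_cont i j := by
    obtain ⟨α', hα', hgradQ, -⟩ := hgrad
    exact continuousOn_pi.2 fun k => (hgradQ i j k).continuousOn hα'.1
  grad_drift_cont j := by
    obtain ⟨α', hα', -, hgradb⟩ := hgrad
    exact continuousOn_pi.2 fun k => (hgradb j k).continuousOn hα'.1

theorem rpow_eq_rpow_sub_one_mul {y : ℝ} (hy : 0 < y) (γ : ℝ) : y ^ γ = y ^ (γ - 1) * y := by
  rw [← Real.rpow_add_one hy.ne', sub_add_cancel]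

theorem rpow_le_rpow_sub_one_mul {y₀ y γ : ℝ} (hy₀ : 0 < y₀) (hy : y₀ ≤ y) (hγ : γ ≤ 1) :
    y ^ γ ≤ y₀ ^ (γ - 1) * y := by
  have hy' : 0 < y := hy₀.trans_le hy
  rw [rpow_eq_rpow_sub_one_mul hy']
  exact mul_le_mul_of_nonneg_right (Real.rpow_le_rpow_of_nonpos hy₀ hy (by linarith)) hy'.le

theorem exists_bernsteinBounds {ν r : ℝ → Euc d → ℝ} {ν₀ C γ : ℝ} {C₁ C₂ : ℝ → ℝ}
    (hν₀ : 0 < ν₀) (hν : ∀ t ∈ I, ∀ x, ν₀ ≤ ν t x)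
    (hell : ∀ t ∈ I, ∀ x ξ, ν t x * (ξ ⬝ᵥ ξ) ≤ coeffForm (Q t x) ξ ξ)
    (hC₁ : LocBddOn I C₁) (hC₂ : LocBddOn I C₂)
    (hgrowthQ : ∀ t ∈ I, ∀ x : Euc d,
      √(∑ i, (∑ j, Q t x i j * x j) ^ 2) + ∑ i, Q t x i i ≤ C₁ t * (1 + ‖x‖ ^ 2) * ν t x)
    (hgrowthb : ∀ t ∈ I, ∀ x : Euc d, ∑ i, b t x i * x i ≤ C₂ t * (1 + ‖x‖ ^ 2) * ν t x)
    (hr : ∃ R, ∀ t ∈ I, ∀ x, r t x ≤ R)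
    (hJac : ∀ t ∈ I, ∀ x ξ,
      coeffForm (fun i j => grad (fun y => b t y i) x j) ξ ξ ≤ r t x * (ξ ⬝ᵥ ξ))
    (hC : 0 ≤ C) (hγ : γ ≤ 1)
    (hQgrad : ∀ t ∈ I, ∀ x i j, ‖fderiv ℝ (fun y => Q t y i j) x‖ ≤ C * ν t x ^ γ)
    {s T : ℝ} (hJ : Icc s T ⊆ I) : ∃ K, 0 ≤ K ∧ BernsteinBounds (Icc s T) ν Q b K := by
  obtain ⟨M₁, hM₁⟩ := hC₁ s T hJ
  obtain ⟨M₂, hM₂⟩ := hC₂ s T hJ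
  obtain ⟨R, hR⟩ := hr
  have hpos : ∀ t ∈ I, ∀ x, 0 < ν t x := fun t ht x => hν₀.trans_le (hν t ht x)
  have hCγ : 0 ≤ C * ν₀ ^ (γ - 1) := by positivity
  have hRν : 0 ≤ |R| / ν₀ := by positivity
  set K := |M₁| + |M₂| + C * ν₀ ^ (γ - 1) + |R| / ν₀
  have hM₁K : |M₁| ≤ K := by linarith [abs_nonneg M₂]
  have hM₂K : |M₂| ≤ K := by linarith [abs_nonneg M₁]
  have hCK : C * ν₀ ^ (γ - 1) ≤ K := by linarith [abs_nonneg M₁, abs_nonneg M₂]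
  have hRK : |R| / ν₀ ≤ K := by linarith [abs_nonneg M₁, abs_nonneg M₂]
  refine ⟨K, (abs_nonneg _).trans hM₁K, fun t ht => hpos t (hJ ht), fun t ht => hell t (hJ ht),
    fun t ht x => (hgrowthQ t (hJ ht) x).trans ?_, fun t ht x => (hgrowthb t (hJ ht) x).trans ?_,
    fun t ht x i j => (hQgrad t (hJ ht) x i j).trans ?_,
    fun t ht x ξ => (hJac t (hJ ht) x ξ).trans ?_⟩
  · have := hpos t (hJ ht) x
    gcongr
    exact ((le_abs_self _).trans (hM₁ t ht)).trans ((le_abs_self _).trans hM₁K)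
  · have := hpos t (hJ ht) x
    gcongr
    exact ((le_abs_self _).trans (hM₂ t ht)).trans ((le_abs_self _).trans hM₂K)
  · calc C * ν t x ^ γ ≤ C * (ν₀ ^ (γ - 1) * ν t x) :=
          mul_le_mul_of_nonneg_left (rpow_le_rpow_sub_one_mul hν₀ (hν t (hJ ht) x) hγ) hC
      _ = C * ν₀ ^ (γ - 1) * ν t x := (mul_assoc _ _ _).symm
      _ ≤ K * ν t x := mul_le_mul_of_nonneg_right hCK (hpos t (hJ ht) x).le
  · refine mul_le_mul_of_nonneg_right ?_ (dotProduct_self_star_nonneg ξ)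
    calc r t x ≤ |R| / ν₀ * ν₀ := by
          rw [div_mul_cancel₀ _ hν₀.ne']
          exact (hR t (hJ ht) x).trans (le_abs_self R)
      _ ≤ K * ν t x := mul_le_mul hRK (hν t (hJ ht) x) hν₀.le (hRν.trans hRK)

theorem exists_isLyapunov {J : Set ℝ} {φ : Euc d → ℝ} (hφ : ContDiff ℝ 2 φ) (hpos : ∀ x, 0 < φ x)
    (hlim : ∀ M : ℝ, ∃ R : ℝ, ∀ x : Euc d, R ≤ ‖x‖ → M ≤ φ x)
    (hA : ∃ lam > 0, ∀ t ∈ J, ∀ x, Aop d Q b (fun _ _ => 0) t φ x ≤ lam * φ x) :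
    ∃ lam, IsLyapunov J Q b lam φ := by
  obtain ⟨lam, hlam, hle⟩ := hA
  exact ⟨lam + 1, hφ, hpos, hlim, by linarith, fun t ht x =>
    (hle t ht x).trans_lt (mul_lt_mul_of_pos_right (lt_add_one lam) (hpos x))⟩

theorem gradEstWith_of_gradientRateBounds {ν c r : ℝ → Euc d → ℝ} {φ : Euc d → ℝ} {ν₀ p ω : ℝ}
    (hI : ∀ ⦃t t' : ℝ⦄, t ∈ I → t ≤ t' → t' ∈ I) (hc : SmoothEllipticCoeffs I Q b)
    (hν₀ : 0 < ν₀) (hν : ∀ t ∈ I, ∀ x, ν₀ ≤ ν t x)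
    (hφ : ∀ {s T}, Icc s T ⊆ I → ∃ lam, IsLyapunov (Icc s T) Q b lam φ)
    (hK : ∀ {s T}, Icc s T ⊆ I → ∃ K, 0 ≤ K ∧ BernsteinBounds (Icc s T) ν Q b K)
    (hB : GradientRateBounds I ν c r Q b p ω) (hp : 1 < p) : GradEstWith d I Q b p ω := by
  intro s hs f hf _ ⟨Mf, hMf⟩ u v hu hbu hv hbv T hT x
  have hIci : Ici s ⊆ I := fun t => hI hs
  have hIcc (T : ℝ) : Icc s T ⊆ I := Icc_subset_Ici_self.trans hIci
  have hcs := hc.mono hIci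
  have hell : ∀ t ∈ Ici s, ∀ y ξ, ν₀ * (ξ ⬝ᵥ ξ) ≤ coeffForm (Q t y) ξ ξ := fun t ht y ξ =>
    (mul_le_mul_of_nonneg_right (hν t (hIci ht) y) (dotProduct_self_star_nonneg ξ)).trans
      (hB.elliptic t (hIci ht) y ξ)
  have hv₀ : ∀ t, s < t → ∀ y, 0 ≤ v t y := fun t ht y => by
    obtain ⟨lam, hlam⟩ := hφ (hIcc t)
    exact (hlam.mono Ioc_subset_Icc_self).nonneg_of_isClassicalSolution
      (hcs.toEllipticCoeffs.mono Ioi_subset_Ici_self) hv hbv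
      (fun _ => Real.rpow_nonneg (norm_nonneg _) p) ⟨ht, le_rfl⟩ y
  obtain ⟨lam, hlam⟩ := hφ (hIcc T)
  obtain ⟨K, hK₀, hKB⟩ := hK (hIcc T)
  obtain ⟨L, hL⟩ := hu.exists_norm_fderiv_le hcs hν₀ hell hK₀ (hKB.mono Ioc_subset_Icc_self) hT hbu
    hf hMf
  exact le_of_forall_le_lyapunovPerturbation (Real.exp_pos _) (hlam.pos x) fun ε hε =>
    hu.norm_fderiv_rpow_le_lyapunovPerturbation hcs hν₀ hell hbu hf hv hv₀
      (hlam.mono Ioc_subset_Icc_self) hL (hB.mono (Ioc_subset_Icc_self.trans (hIcc T))) hp hT hε x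

end Hypotheses

section Rate

variable {d : ℕ} {I : Set ℝ} {Q : ℝ → Euc d → Fin d → Fin d → ℝ} {r : ℝ → Euc d → ℝ}
  {ν₀ C γ : ℝ}

theorem sq_mul_sq_rpow_div_le {ν θ : ℝ} (hν₀ : 0 < ν₀) (hν : ν₀ ≤ ν) (hγ : γ ≤ 1) (hθ : 0 < θ) :
    (d : ℝ) ^ 2 * (C * ν ^ γ) ^ 2 / (4 * θ * ν) ≤
      C ^ 2 * (d : ℝ) ^ 3 * ν₀ ^ (γ - 1) / (4 * θ) * ν ^ γ := by
  have hpos : 0 < ν := hν₀.trans_le hν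
  have hd : (d : ℝ) ^ 2 ≤ (d : ℝ) ^ 3 := by
    rcases d.eq_zero_or_pos with rfl | hd
    · norm_num
    · exact pow_le_pow_right₀ (mod_cast hd) (by norm_num)
  calc (d : ℝ) ^ 2 * (C * ν ^ γ) ^ 2 / (4 * θ * ν)
      = C ^ 2 * (d : ℝ) ^ 2 * (ν ^ γ) / (4 * θ * ν) * ν ^ γ := by ring
    _ ≤ C ^ 2 * (d : ℝ) ^ 3 * (ν₀ ^ (γ - 1) * ν) / (4 * θ * ν) * ν ^ γ := by
        gcongr
        exact rpow_le_rpow_sub_one_mul hν₀ hν hγ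
    _ = C ^ 2 * (d : ℝ) ^ 3 * ν₀ ^ (γ - 1) / (4 * θ) * ν ^ γ := by field_simp

theorem exists_forall_mul_sq_rpow_div_le (hν₀ : 0 < ν₀) (hγ : γ < 1) (D : ℝ) {κ : ℝ}
    (hκ : 0 < κ) : ∃ W, ∀ ν ≥ ν₀, D * (ν ^ γ) ^ 2 / ν ≤ W + κ * ν ^ γ := by
  have hfactor : ∀ ν, 0 < ν → D * (ν ^ γ) ^ 2 / ν = D * ν ^ (-(1 - γ)) * ν ^ γ := fun ν hν => by
    rw [neg_sub, Real.rpow_sub_one hν.ne']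
    ring
  have hlim : Tendsto (fun ν : ℝ => D * ν ^ (-(1 - γ))) atTop (𝓝 0) := by
    simpa using (tendsto_rpow_neg_atTop (sub_pos.2 hγ)).const_mul D
  obtain ⟨N, hN⟩ := eventually_atTop.1 (hlim.eventually_le_const hκ)
  have hcont : ContinuousOn (fun ν : ℝ => D * (ν ^ γ) ^ 2 / ν) (Icc ν₀ N) := by
    have hne : ∀ ν ∈ Icc ν₀ N, ν ≠ 0 := fun ν hν => (hν₀.trans_le hν.1).ne'
    have hrpow := continuousOn_id.rpow_const (p := γ) fun ν hν => Or.inl (hne ν hν)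
    exact (continuousOn_const.mul (hrpow.pow 2)).div continuousOn_id hne
  obtain ⟨W, hW⟩ := isCompact_Icc.exists_bound_of_continuousOn hcont
  refine ⟨|W|, fun ν hν => ?_⟩
  have hpos : 0 < ν := hν₀.trans_le hν
  rcases le_total ν N with h | h
  · have hle := (le_abs_self _).trans ((hW ν ⟨hν, h⟩).trans (le_abs_self W))
    have : 0 ≤ κ * ν ^ γ := by positivity
    linarith
  · rw [hfactor ν hpos]
    have := mul_le_mul_of_nonneg_right (hN ν h) (Real.rpow_nonneg hpos.le γ)
    linarith [abs_nonneg W]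

theorem rate_le_SGradSup {p₀ p B : ℝ} (hν₀ : 0 < ν₀) (hν : ∀ t ∈ I, ∀ x, ν₀ ≤ minEig d (Q t x))
    (hγ : γ ≤ 1) (hp₀ : 1 < p₀) (hp : p₀ ≤ p) (hp2 : p ≤ 2)
    (hB : ∀ t ∈ I, ∀ x, r t x + C ^ 2 * (d : ℝ) ^ 3 * ν₀ ^ (γ - 1) / (4 * (p₀ - 1))
      * minEig d (Q t x) ^ γ ≤ B) {t : ℝ} (ht : t ∈ I) (x : Euc d) :
    r t x + (d : ℝ) ^ 2 * (C * minEig d (Q t x) ^ γ) ^ 2 /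
      (4 * min (p - 1) 1 * minEig d (Q t x)) ≤ SGradSup d I Q r ν₀ C γ p := by
  have : 0 < p₀ - 1 := sub_pos.2 hp₀
  have hbdd : BddAbove {y : ℝ | ∃ t ∈ I, ∃ x : Euc d, y = r t x +
      C ^ 2 * (d : ℝ) ^ 3 * ν₀ ^ (γ - 1) / (4 * (p - 1)) * minEig d (Q t x) ^ γ} := by
    refine ⟨B, ?_⟩
    rintro _ ⟨t, ht, x, rfl⟩
    have := hν₀.trans_le (hν t ht x)
    refine le_trans ?_ (hB t ht x)
    gcongr
  rw [min_eq_left (by linarith)]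
  have hθ : 0 < p - 1 := by linarith
  exact (add_le_add_right (sq_mul_sq_rpow_div_le hν₀ (hν t ht x) hγ hθ) _).trans
    (le_csSup hbdd ⟨t, ht, x, rfl⟩)

theorem exists_forall_rate_le {κ p B : ℝ} (hν₀ : 0 < ν₀)
    (hν : ∀ t ∈ I, ∀ x, ν₀ ≤ minEig d (Q t x)) (hγ : γ < 1) (hκ : 0 < κ)
    (hB : ∀ t ∈ I, ∀ x, r t x + κ * minEig d (Q t x) ^ γ ≤ B) :
    ∃ M, ∀ t ∈ I, ∀ x, r t x + (d : ℝ) ^ 2 * (C * minEig d (Q t x) ^ γ) ^ 2 /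
      (4 * min (p - 1) 1 * minEig d (Q t x)) ≤ M := by
  obtain ⟨W, hW⟩ := exists_forall_mul_sq_rpow_div_le hν₀ hγ
    ((d : ℝ) ^ 2 * C ^ 2 / (4 * min (p - 1) 1)) hκ
  refine ⟨B + W, fun t ht x => ?_⟩
  have hrw : (d : ℝ) ^ 2 * (C * minEig d (Q t x) ^ γ) ^ 2 /
      (4 * min (p - 1) 1 * minEig d (Q t x)) = (d : ℝ) ^ 2 * C ^ 2 / (4 * min (p - 1) 1) *
      (minEig d (Q t x) ^ γ) ^ 2 / minEig d (Q t x) := by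
    rw [mul_pow, ← mul_assoc, ← div_div, div_mul_eq_mul_div]
  linarith [hB t ht x, hW _ (hν t ht x)]

end Rate

theorem gradient_estimate_without_zero_order_term_general
    (d : ℕ) (hd : 1 ≤ d) (I : Set ℝ) (hI : ∀ ⦃t t' : ℝ⦄, t ∈ I → t ≤ t' → t' ∈ I)
    (Q : ℝ → Euc d → Fin d → Fin d → ℝ) (b : ℝ → Euc d → Fin d → ℝ)
    (hc : SmoothEllipticCoeffs I Q b)
    (ν₀ : ℝ) (hν₀ : 0 < ν₀) (hell : ∀ t ∈ I, ∀ x : Euc d, ν₀ ≤ minEig d (Q t x))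
    (hLyap : ∃ φ : Euc d → ℝ, ContDiff ℝ 2 φ ∧ (∀ x, 0 < φ x) ∧
      (∀ M : ℝ, ∃ R : ℝ, ∀ x : Euc d, R ≤ ‖x‖ → M ≤ φ x) ∧
      (∀ a b' : ℝ, Icc a b' ⊆ I → ∃ lam > 0, ∀ t ∈ Icc a b', ∀ x : Euc d,
        Aop d Q b (fun _ _ => 0) t φ x ≤ lam * φ x))
    (C₁ C₂ : ℝ → ℝ) (hC₁ : LocBddOn I C₁) (hC₂ : LocBddOn I C₂)
    (hgrowthQ : ∀ t ∈ I, ∀ x : Euc d,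
      √(∑ i, (∑ j, Q t x i j * x j) ^ 2) + (∑ i, Q t x i i) ≤
        C₁ t * (1 + ‖x‖ ^ 2) * minEig d (Q t x))
    (hgrowthb : ∀ t ∈ I, ∀ x : Euc d,
      (∑ i, b t x i * x i) ≤ C₂ t * (1 + ‖x‖ ^ 2) * minEig d (Q t x))
    (r₀ : ℝ → Euc d → ℝ)
    (hJac : ∀ t ∈ I, ∀ x ξ : Euc d,
      (∑ i, ∑ j, fderiv ℝ (fun y => b t y i) x (EuclideanSpace.single j 1) * ξ i * ξ j) ≤
        r₀ t x * ‖ξ‖ ^ 2)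
    (C γ : ℝ) (hC : 0 < C) (hγ : γ < 1)
    (hQgrad : ∀ t ∈ I, ∀ (x : Euc d) (i j : Fin d),
      ‖fderiv ℝ (fun y => Q t y i j) x‖ ≤ C * minEig d (Q t x) ^ γ)
    (p₀ : ℝ) (hp₀ : 1 < p₀)
    (hbdd : ∃ B : ℝ, ∀ t ∈ I, ∀ x : Euc d,
      r₀ t x + (C ^ 2 * (d : ℝ) ^ 3 * ν₀ ^ (γ - 1) / (4 * (p₀ - 1)))
          * minEig d (Q t x) ^ γ ≤ B) :
    (∀ p : ℝ, 1 < p → ∃ ω : ℝ, GradEstWith d I Q b p ω) ∧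
      ∀ p : ℝ, p₀ ≤ p → p ≤ 2 → GradEstWith d I Q b p (p * SGradSup d I Q r₀ ν₀ C γ p) := by
  obtain ⟨B, hB⟩ := hbdd
  obtain ⟨φ, hφ, hφpos, hφlim, hφA⟩ := hLyap
  have hpos : ∀ t ∈ I, ∀ x, 0 < minEig d (Q t x) := fun t ht x => hν₀.trans_le (hell t ht x)
  have hform := fun t ht x => minEig_mul_dotProduct_le (hpos t ht x)
  have hJac' := fun t ht x => coeffForm_le_of_forall_euc (hJac t ht x)
  have hκ : 0 < C ^ 2 * (d : ℝ) ^ 3 * ν₀ ^ (γ - 1) / (4 * (p₀ - 1)) := by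
    have := sub_pos.2 hp₀
    positivity
  have hr : ∀ t ∈ I, ∀ x, r₀ t x ≤ B := fun t ht x => le_of_add_le_of_nonneg_left (hB t ht x)
    (mul_nonneg hκ.le (Real.rpow_nonneg (hpos t ht x).le γ))
  have hrate : ∀ p, 1 < p → ∀ M, (∀ t ∈ I, ∀ x, r₀ t x + (d : ℝ) ^ 2 *
      (C * minEig d (Q t x) ^ γ) ^ 2 / (4 * min (p - 1) 1 * minEig d (Q t x)) ≤ M) →
      GradEstWith d I Q b p (p * M) := fun p hp M hM =>
    gradEstWith_of_gradientRateBounds hI hc hν₀ hell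
      (fun hJ => exists_isLyapunov hφ hφpos hφlim (hφA _ _ hJ))
      (exists_bernsteinBounds hν₀ hell hform hC₁ hC₂ hgrowthQ hgrowthb ⟨B, hr⟩ hJac' hC.le hγ.le
        hQgrad)
      ⟨hpos, hform, fun t ht x => mul_nonneg hC.le (Real.rpow_nonneg (hpos t ht x).le γ), hQgrad,
        hJac', by simpa only [mul_div_cancel_left₀ M (one_pos.trans hp).ne'] using hM⟩ hp
  refine ⟨fun p hp => ?_, fun p hp hp2 => hrate p (hp₀.trans_le hp) _ fun t ht x =>
    rate_le_SGradSup hν₀ hell hγ.le hp₀ hp hp2 hB ht x⟩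
  obtain ⟨M, hM⟩ := exists_forall_rate_le hν₀ hell hγ hκ hB
  exact ⟨p * M, hrate p hp M hM⟩

/-- with `c ≡ 0` and `r₀ + (C²d³ν₀^{γ−1}/(4(p₀−1)))ν^γ` bounded above, for every
`p ≥ p₀` there is `ω_p` realizing the gradient estimate; for `p ∈ [p₀,2]` one may take
`ω_p = p·sup_{I×ℝ^d}(r₀ + (C²d³ν₀^{γ−1}/(4(p−1)))ν^γ)`. -/
theorem gradient_estimate_without_zero_order_term
    (d : ℕ) (hd : 1 ≤ d) (I : Set ℝ)
    (hI : ∀ ⦃t t' : ℝ⦄, t ∈ I → t ≤ t' → t' ∈ I)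
    (Q : ℝ → Euc d → Fin d → Fin d → ℝ) (b : ℝ → Euc d → Fin d → ℝ)
    (α : ℝ) (hα : α ∈ Ioo (0:ℝ) 1)
    (hQhold : ∀ i j, LocHolderParab d α I (fun t x => Q t x i j))
    (hbhold : ∀ j, LocHolderParab d α I (fun t x => b t x j))
    (hsymm : ∀ t ∈ I, ∀ x : Euc d, ∀ i j, Q t x i j = Q t x j i)
    (ν₀ : ℝ) (hν₀ : 0 < ν₀) (hell : ∀ t ∈ I, ∀ x : Euc d, ν₀ ≤ minEig d (Q t x))
    -- Lyapunov condition (with c ≡ 0)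
    (hLyap : ∃ φ : Euc d → ℝ, ContDiff ℝ 2 φ ∧ (∀ x, 0 < φ x) ∧
      (∀ M : ℝ, ∃ R : ℝ, ∀ x : Euc d, R ≤ ‖x‖ → M ≤ φ x) ∧
      (∀ a b' : ℝ, Icc a b' ⊆ I → ∃ lam > 0, ∀ t ∈ Icc a b', ∀ x : Euc d,
        Aop d Q b (fun _ _ => 0) t φ x ≤ lam * φ x))
    -- first-order Bernstein hypotheses (no zero-order term)
    (hQdiff : ∀ t ∈ I, ∀ (x : Euc d) (i j : Fin d),
      DifferentiableAt ℝ (fun y => Q t y i j) x)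
    (hbdiff : ∀ t ∈ I, ∀ (x : Euc d) (j : Fin d),
      DifferentiableAt ℝ (fun y => b t y j) x)
    (hgradHold : ∃ α' ∈ Ioo (0:ℝ) 1,
      (∀ i j k, LocHolderParab d α' I
        (fun t x => fderiv ℝ (fun y => Q t y i j) x (EuclideanSpace.single k 1))) ∧
      (∀ j k, LocHolderParab d α' I
        (fun t x => fderiv ℝ (fun y => b t y j) x (EuclideanSpace.single k 1))))
    (C₁ C₂ : ℝ → ℝ) (hC₁ : LocBddOn I C₁) (hC₂ : LocBddOn I C₂)
    (hgrowthQ : ∀ t ∈ I, ∀ x : Euc d,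
      Real.sqrt (∑ i, (∑ j, Q t x i j * x j) ^ 2) + (∑ i, Q t x i i) ≤
        C₁ t * (1 + ‖x‖ ^ 2) * minEig d (Q t x))
    (hgrowthb : ∀ t ∈ I, ∀ x : Euc d,
      (∑ i, b t x i * x i) ≤ C₂ t * (1 + ‖x‖ ^ 2) * minEig d (Q t x))
    (r₀ : ℝ → Euc d → ℝ)
    (hJac : ∀ t ∈ I, ∀ (x : Euc d) (ξ : Euc d),
      (∑ i, ∑ j, fderiv ℝ (fun y => b t y i) x (EuclideanSpace.single j 1) * ξ i * ξ j) ≤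
        r₀ t x * ‖ξ‖ ^ 2)
    (C γ : ℝ) (hC : 0 < C) (hγ : γ ∈ Ioo (0:ℝ) 1)
    (hQgrad : ∀ t ∈ I, ∀ (x : Euc d) (i j : Fin d),
      ‖fderiv ℝ (fun y => Q t y i j) x‖ ≤ C * minEig d (Q t x) ^ γ)
    -- the extra boundedness assumption at the exponent p₀
    (p₀ : ℝ) (hp₀ : 1 < p₀)
    (hbdd : ∃ B : ℝ, ∀ t ∈ I, ∀ x : Euc d,
      r₀ t x + (C ^ 2 * (d : ℝ) ^ 3 * ν₀ ^ (γ - 1) / (4 * (p₀ - 1)))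
          * minEig d (Q t x) ^ γ ≤ B) :
    ∀ p : ℝ, p₀ ≤ p →
      (∃ ω : ℝ, GradEstWith d I Q b p ω) ∧
      (p ≤ 2 → GradEstWith d I Q b p (p * SGradSup d I Q r₀ ν₀ C γ p)) := by
  have hest := gradient_estimate_without_zero_order_term_general d hd I hI Q b
    (smoothEllipticCoeffs_of_locHolderParab hα.1 hQhold hbhold hsymm
      (fun t ht x => hν₀.trans_le (hell t ht x)) hQdiff hbdiff hgradHold)
    ν₀ hν₀ hell hLyap C₁ C₂ hC₁ hC₂ hgrowthQ hgrowthb r₀ hJac C γ hC hγ.2 hQgrad p₀ hp₀ hbdd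
  exact fun p hp => ⟨hest.1 p (hp₀.trans_le hp), hest.2 p hp⟩
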